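/- arXiv:1403.1409 — 2 statements merged into one kernel-verified Lean document; each statement's English description precedes it below -/
import Mathlib

section
/- Let K be an algebraically closed field, Z ⊂ ℙ^r a finite reduced set of points whose h-vector has value k in degree n and k−1 in degree n+1, with n ≥ k ≥ 2, and is zero in all degrees ≥ n+2. Assume that the base locus of [J]_{n+1} (J the artinian reduction of I_Z) is a zero-dimensional scheme in ℙ^{r−1} of degree k−1. Then the saturation of the ideal generated by all components of I_Z of degree ≤ n+1 is the homogeneous ideal of a reduced curve V of degree k−1; moreover, if C denotes the unmixed one-dimensional part of V, Z_1 the subset of Z lying on C, and Z_2 = Z ∖ Z_1, then the ideal generated by [I_{Z_1}]_{≤ n+1} equals I_C, Δh_{Z_1}(t) = Δh_C(t) for t ≤ n+1 and Δh_{Z_1}(t) = Δh_Z(t) for t ≥ n+1. -/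
open MvPolynomial

/-- The Hilbert function of `S/I` in degree `t`: the dimension over `K` of the image of the
space of homogeneous polynomials of degree `t` in the quotient `S/I`. -/
noncomputable def hilb {K : Type*} [Field K] {σ : Type*} (I : Ideal (MvPolynomial σ K)) (t : ℕ) : ℕ :=
  Module.finrank K
    ((homogeneousSubmodule σ K t).map (Ideal.Quotient.mkₐ K I).toLinearMap)

/-- The ideal generated by the degree-`n` component of `I`, i.e. by all homogeneous elements of
`I` of degree `n`.  Its zero locus is the base locus of the linear system `[I]_n`. -/
noncomputable def compIdeal {K : Type*} [Field K] {σ : Type*} (I : Ideal (MvPolynomial σ K)) (n : ℕ) :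
    Ideal (MvPolynomial σ K) :=
  Ideal.span ((I : Set (MvPolynomial σ K)) ∩ (homogeneousSubmodule σ K n : Set (MvPolynomial σ K)))

/-- The ideal generated by all homogeneous elements of `I` of degree at most `n`,
i.e. `⟨[I]_{≤ n}⟩`. -/
noncomputable def lowIdeal {K : Type*} [Field K] {σ : Type*} (I : Ideal (MvPolynomial σ K)) (n : ℕ) :
    Ideal (MvPolynomial σ K) :=
  Ideal.span ((I : Set (MvPolynomial σ K)) ∩
    ⋃ t ≤ n, (homogeneousSubmodule σ K t : Set (MvPolynomial σ K)))

/-- The first difference of the Hilbert function of `R/I`; for the saturated ideal of a finite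
set of points this is the `h`-vector, i.e. the Hilbert function of an artinian reduction by a
general linear form. -/
noncomputable def hvec {K : Type*} [Field K] {σ : Type*} (I : Ideal (MvPolynomial σ K)) : ℕ → ℕ
  | 0 => hilb I 0
  | t + 1 => hilb I (t + 1) - hilb I t

/-- The saturated homogeneous ideal of a (finite) set of points of `ℙ^{m-1}`, the points being
given by (nonzero) representative vectors: a polynomial lies in this ideal iff it vanishes at
every scalar multiple of every representative, i.e. iff all of its homogeneous components vanish
at the corresponding projective points. -/
noncomputable def pointsIdeal {K : Type*} [Field K] {m : ℕ} (Z : Set (Fin m → K)) :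
    Ideal (MvPolynomial (Fin m) K) :=
  ⨅ v ∈ Z, ⨅ c : K, RingHom.ker (eval (c • v))

/-- The saturation of a homogeneous ideal with respect to the irrelevant maximal ideal. -/
noncomputable def saturate {K : Type*} [Field K] {σ : Type*} (I : Ideal (MvPolynomial σ K)) :
    Ideal (MvPolynomial σ K) :=
  ⨆ N : ℕ, Submodule.colon I (((Ideal.span (Set.range (X : σ → MvPolynomial σ K))) ^ N :
    Ideal (MvPolynomial σ K)) : Set (MvPolynomial σ K))

/-- The (reduced) one-dimensional part of the projective scheme defined by a homogeneous ideal
`V`: the intersection of those minimal primes of `V` whose quotient has Krull dimension `2`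
(affine cones over curves). -/
noncomputable def curvePart {K : Type*} [Field K] {σ : Type*} (V : Ideal (MvPolynomial σ K)) :
    Ideal (MvPolynomial σ K) :=
  sInf {P | P ∈ V.minimalPrimes ∧ ringKrullDim (MvPolynomial σ K ⧸ P) = 2}


namespace PB

variable {K : Type*} [Field K] {σ : Type*}

/-- Homogeneous ideal, elementary form. -/
def HomI (I : Ideal (MvPolynomial σ K)) : Prop :=
  ∀ f ∈ I, ∀ t, homogeneousComponent t f ∈ I

theorem homComp_mul {g : MvPolynomial σ K} {d : ℕ} (hg : g.IsHomogeneous d)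
    (f : MvPolynomial σ K) (t : ℕ) :
    homogeneousComponent (t + d) (g * f) = g * homogeneousComponent t f := by
  conv_lhs => rw [← sum_homogeneousComponent f, Finset.mul_sum, map_sum]
  have : ∀ i, homogeneousComponent (t + d) (g * homogeneousComponent i f)
      = if i = t then g * homogeneousComponent t f else 0 := by
    intro i
    have h : (g * homogeneousComponent i f).IsHomogeneous (d + i) :=
      hg.mul (homogeneousComponent_isHomogeneous i f)
    rw [homogeneousComponent_of_mem h]
    by_cases hi : i = t
    · subst hi; simp [add_comm]
    · rw [if_neg hi, if_neg]; omega
  simp only [this]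
  rw [Finset.sum_ite_eq']
  split_ifs with h
  · rfl
  · rw [homogeneousComponent_eq_zero, mul_zero]
    simpa using h

theorem homComp_mul_lt {g : MvPolynomial σ K} {d : ℕ} (hg : g.IsHomogeneous d)
    (f : MvPolynomial σ K) {t : ℕ} (ht : t < d) :
    homogeneousComponent t (g * f) = 0 := by
  conv_lhs => rw [← sum_homogeneousComponent f, Finset.mul_sum, map_sum]
  apply Finset.sum_eq_zero
  intro i _
  have h : (g * homogeneousComponent i f).IsHomogeneous (d + i) :=
    hg.mul (homogeneousComponent_isHomogeneous i f)
  rw [homogeneousComponent_of_mem h, if_neg]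
  omega

theorem mem_of_comps {I : Ideal (MvPolynomial σ K)} {f : MvPolynomial σ K}
    (h : ∀ t, homogeneousComponent t f ∈ I) : f ∈ I := by
  rw [← sum_homogeneousComponent f]
  exact I.sum_mem fun i _ => h i

theorem HomI.span {S : Set (MvPolynomial σ K)} (hS : ∀ f ∈ S, ∃ d, f.IsHomogeneous d) :
    HomI (Ideal.span S) := by
  intro f hf
  refine Submodule.span_induction (p := fun f _ => ∀ t, homogeneousComponent t f ∈ Ideal.span S)
    ?_ ?_ ?_ ?_ hf
  · intro x hx t
    obtain ⟨d, hd⟩ := hS x hx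
    rw [homogeneousComponent_of_mem hd]
    split_ifs
    · exact Ideal.subset_span hx
    · exact Ideal.zero_mem _
  · intro t; simp
  · intro x y _ _ hx hy t
    rw [map_add]; exact Ideal.add_mem _ (hx t) (hy t)
  · intro a x _ hx t
    rw [smul_eq_mul]
    rw [← sum_homogeneousComponent a, Finset.sum_mul, map_sum]
    refine Ideal.sum_mem _ fun i _ => ?_
    have hi := homogeneousComponent_isHomogeneous i a
    by_cases h : i ≤ t
    · obtain ⟨s, rfl⟩ := Nat.exists_eq_add_of_le' h
      rw [homComp_mul hi]
      exact Ideal.mul_mem_left _ _ (hx _)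
    · rw [homComp_mul_lt hi _ (by omega)]; exact Ideal.zero_mem _

theorem HomI.sup {I J : Ideal (MvPolynomial σ K)} (hI : HomI I) (hJ : HomI J) : HomI (I ⊔ J) := by
  intro f hf t
  obtain ⟨a, ha, b, hb, rfl⟩ := Submodule.mem_sup.1 hf
  rw [map_add]
  exact Ideal.add_mem _ (Ideal.mem_sup_left (hI a ha t)) (Ideal.mem_sup_right (hJ b hb t))

theorem HomI.span_singleton {L : MvPolynomial σ K} {d} (hL : L.IsHomogeneous d) :
    HomI (Ideal.span {L}) := HomI.span (by rintro f rfl; exact ⟨d, hL⟩)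

theorem HomI.low (I : Ideal (MvPolynomial σ K)) (n : ℕ) : HomI (lowIdeal I n) := by
  apply HomI.span
  rintro f ⟨_, hf⟩
  simp only [Set.mem_iUnion] at hf
  obtain ⟨t, _, h⟩ := hf
  exact ⟨t, h⟩

theorem HomI.compI (I : Ideal (MvPolynomial σ K)) (n : ℕ) : HomI (compIdeal I n) :=
  HomI.span (by rintro f ⟨_, hf⟩; exact ⟨n, hf⟩)

theorem low_le (I : Ideal (MvPolynomial σ K)) (n : ℕ) : lowIdeal I n ≤ I :=
  Ideal.span_le.2 fun _ h => h.1

theorem compI_le (I : Ideal (MvPolynomial σ K)) (n : ℕ) : compIdeal I n ≤ I :=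
  Ideal.span_le.2 fun _ h => h.1

theorem mem_low {I : Ideal (MvPolynomial σ K)} {n t : ℕ} {f : MvPolynomial σ K}
    (hf : f.IsHomogeneous t) (ht : t ≤ n) (h : f ∈ I) : f ∈ lowIdeal I n :=
  Ideal.subset_span ⟨h, by simp only [Set.mem_iUnion]; exact ⟨t, ht, hf⟩⟩

theorem compI_le_low (I : Ideal (MvPolynomial σ K)) (n : ℕ) : compIdeal I n ≤ lowIdeal I n :=
  Ideal.span_le.2 fun _ h => mem_low h.2 le_rfl h.1

/-- A homogeneous polynomial of degree `t + d` is a combination of monomials of degree `d`. -/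
theorem mem_span_mul {J : Ideal (MvPolynomial σ K)} {d t : ℕ} {a f : MvPolynomial σ K}
    (ha : a.IsHomogeneous (t + d))
    (h : ∀ g : MvPolynomial σ K, g.IsHomogeneous d → g * f ∈ J) : a * f ∈ J := by
  rw [a.as_sum, Finset.sum_mul]
  refine J.sum_mem fun e he => ?_
  have hdeg : e.degree = t + d := ha (mem_support_iff.1 he) |> fun h => by
    rw [Finsupp.degree_eq_weight_one]; exact h
  obtain ⟨e', hle, hdeg'⟩ : ∃ e' ≤ e, e'.degree = d := by
    clear h he ha
    induction t generalizing e with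
    | zero => exact ⟨e, le_rfl, by simpa using hdeg⟩
    | succ t ih =>
      have : e ≠ 0 := by rintro rfl; simp at hdeg; omega
      obtain ⟨i, hi⟩ := Finsupp.ne_iff.1 this
      have hle : Finsupp.single i 1 ≤ e := by
        rw [Finsupp.single_le_iff]; simp at hi; omega
      have h2 : (e - Finsupp.single i 1).degree + 1 = e.degree := by
        conv_rhs => rw [← tsub_add_cancel_of_le hle]
        simp [map_add, Finsupp.degree_single]
      obtain ⟨e', h3, h4⟩ := ih (e - Finsupp.single i 1) (by omega)
      exact ⟨e', h3.trans tsub_le_self, h4⟩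
  have : monomial e (coeff e a) = monomial (e - e') (coeff e a) * monomial e' (1 : K) := by
    rw [monomial_mul, tsub_add_cancel_of_le hle, mul_one]
  rw [this, mul_assoc]
  exact J.mul_mem_left _ (h _ (isHomogeneous_monomial _ hdeg'))

/-- In degrees `≥ n` the ideals `lowIdeal` and `compIdeal` agree. -/
theorem mem_compI_of_low {I : Ideal (MvPolynomial σ K)} {n t : ℕ} {f : MvPolynomial σ K}
    (hf : f.IsHomogeneous t) (ht : n ≤ t) (h : f ∈ lowIdeal I n) : f ∈ compIdeal I n := by
  have key : ∀ t, n ≤ t → homogeneousComponent t f ∈ compIdeal I n := by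
    refine Submodule.span_induction (p := fun f _ => ∀ t, n ≤ t →
      homogeneousComponent t f ∈ compIdeal I n) ?_ ?_ ?_ ?_ h
    · rintro x ⟨hx, hx'⟩ t ht
      simp only [Set.mem_iUnion] at hx'
      obtain ⟨s, hs, hxs⟩ := hx'
      rw [homogeneousComponent_of_mem hxs]
      split_ifs with h
      · exact Ideal.subset_span ⟨hx, by have : s = n := by omega
                                        rw [← this]; exact hxs⟩
      · exact Ideal.zero_mem _
    · intro t _; simp
    · intro x y _ _ hx hy t ht
      rw [map_add]; exact Ideal.add_mem _ (hx t ht) (hy t ht)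
    · intro a x hx0 hx t ht
      have hx' : x ∈ Ideal.span ((I : Set (MvPolynomial σ K)) ∩
        ⋃ t ≤ n, (homogeneousSubmodule σ K t : Set (MvPolynomial σ K))) := hx0
      have hI : x ∈ I := low_le I n hx'
      rw [smul_eq_mul]
      -- decompose both
      rw [← sum_homogeneousComponent a, Finset.sum_mul, map_sum]
      refine Ideal.sum_mem _ fun i _ => ?_
      have hi := homogeneousComponent_isHomogeneous i a
      by_cases h : i ≤ t
      · obtain ⟨s, rfl⟩ := Nat.exists_eq_add_of_le' h
        rw [homComp_mul hi]
        by_cases hs : n ≤ s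
        · exact Ideal.mul_mem_left _ _ (hx _ hs)
        · have hxs : homogeneousComponent s x ∈ I :=
            low_le I n (HomI.low I n x hx' s)
          obtain ⟨d, hd⟩ : ∃ d, n = d + s := ⟨n - s, by omega⟩
          obtain ⟨e, rfl⟩ : ∃ e, i = e + d := ⟨i - d, by omega⟩
          refine mem_span_mul hi ?_
          intro g hg
          refine Ideal.subset_span ⟨I.mul_mem_left _ hxs, ?_⟩
          rw [hd]
          exact hg.mul (homogeneousComponent_isHomogeneous _ _)
      · rw [homComp_mul_lt hi _ (by omega)]; exact Ideal.zero_mem _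
  have := key t ht
  rwa [homogeneousComponent_eq_self hf] at this

theorem mem_sup_lin {I : Ideal (MvPolynomial σ K)} (hI : HomI I) {L : MvPolynomial σ K}
    (hL : L.IsHomogeneous 1) {t : ℕ} {f : MvPolynomial σ K} (hf : f.IsHomogeneous (t + 1))
    (h : f ∈ I ⊔ Ideal.span {L}) : ∃ g : MvPolynomial σ K, g.IsHomogeneous t ∧ f - L * g ∈ I := by
  obtain ⟨a, ha, b, hb, hab⟩ := Submodule.mem_sup.1 h
  obtain ⟨c, rfl⟩ := Ideal.mem_span_singleton.1 hb
  refine ⟨homogeneousComponent t c, homogeneousComponent_isHomogeneous _ _, ?_⟩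
  have := congrArg (homogeneousComponent (t + 1)) hab
  rw [map_add, homComp_mul hL, homogeneousComponent_eq_self hf] at this
  rw [← this, add_sub_cancel_right]
  exact hI a ha _

theorem mem_sup_lin' {I : Ideal (MvPolynomial σ K)} {L f g : MvPolynomial σ K}
    (h : f - L * g ∈ I) : f ∈ I ⊔ Ideal.span {L} := by
  have : f = (f - L * g) + L * g := by ring
  rw [this]
  exact Ideal.add_mem _ (Ideal.mem_sup_left h)
    (Ideal.mem_sup_right (Ideal.mem_span_singleton.2 ⟨g, rfl⟩))

/-- degree `t` part of an ideal -/
noncomputable def cp (I : Ideal (MvPolynomial σ K)) (t : ℕ) : Submodule K (MvPolynomial σ K) :=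
  homogeneousSubmodule σ K t ⊓ I.restrictScalars K

theorem mem_cp {I : Ideal (MvPolynomial σ K)} {t : ℕ} {f : MvPolynomial σ K} :
    f ∈ cp I t ↔ f.IsHomogeneous t ∧ f ∈ I := by
  simp [cp]

section fin
variable [Finite σ]

instance finHom (t : ℕ) : FiniteDimensional K (homogeneousSubmodule σ K t) :=
  Module.Finite.iff_fg.2 (homogeneousSubmodule_fg σ K t)

instance finCp (I : Ideal (MvPolynomial σ K)) (t : ℕ) : FiniteDimensional K (cp I t) :=
  Submodule.finiteDimensional_of_le (S₂ := homogeneousSubmodule σ K t) inf_le_left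

theorem hilb_add (I : Ideal (MvPolynomial σ K)) (t : ℕ) :
    hilb I t + Module.finrank K (cp I t) = Module.finrank K (homogeneousSubmodule σ K t) := by
  let φ := (Ideal.Quotient.mkₐ K I).toLinearMap.domRestrict (homogeneousSubmodule σ K t)
  have h1 := LinearMap.finrank_range_add_finrank_ker φ
  have h2 : LinearMap.range φ = (homogeneousSubmodule σ K t).map
      (Ideal.Quotient.mkₐ K I).toLinearMap := by
    rw [LinearMap.range_domRestrict]
  have h3 : (LinearMap.ker φ).map (homogeneousSubmodule σ K t).subtype = cp I t := by
    ext f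
    simp only [Submodule.mem_map, LinearMap.mem_ker, Submodule.subtype_apply, Subtype.exists,
      mem_cp, φ, LinearMap.domRestrict_apply]
    constructor
    · rintro ⟨a, ha, h, rfl⟩
      exact ⟨ha, Ideal.Quotient.eq_zero_iff_mem.1 h⟩
    · rintro ⟨ha, h⟩
      exact ⟨f, ha, Ideal.Quotient.eq_zero_iff_mem.2 h, rfl⟩
  have h4 : Module.finrank K (LinearMap.ker φ) = Module.finrank K (cp I t) := by
    rw [← h3]
    exact (LinearEquiv.finrank_eq (Submodule.equivMapOfInjective _
      (Submodule.injective_subtype _) _))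
  rw [hilb, ← h2, ← h4, h1]

theorem hilb_mono {I J : Ideal (MvPolynomial σ K)} {t : ℕ}
    (h : ∀ f : MvPolynomial σ K, f.IsHomogeneous t → f ∈ I → f ∈ J) : hilb J t ≤ hilb I t := by
  have h1 := hilb_add I t
  have h2 := hilb_add J t
  have : Module.finrank K (cp I t) ≤ Module.finrank K (cp J t) :=
    Submodule.finrank_mono fun f hf => by
      rw [mem_cp] at *; exact ⟨hf.1, h f hf.1 hf.2⟩
  omega

theorem hilb_congr {I J : Ideal (MvPolynomial σ K)} {t : ℕ}
    (h : ∀ f : MvPolynomial σ K, f.IsHomogeneous t → (f ∈ I ↔ f ∈ J)) : hilb I t = hilb J t :=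
  le_antisymm (hilb_mono fun f hf => (h f hf).2) (hilb_mono fun f hf => (h f hf).1)

theorem mem_of_hilb_le {I J : Ideal (MvPolynomial σ K)} {t : ℕ}
    (h : ∀ f : MvPolynomial σ K, f.IsHomogeneous t → f ∈ I → f ∈ J) (hh : hilb I t ≤ hilb J t)
    {f : MvPolynomial σ K} (hf : f.IsHomogeneous t) (hfJ : f ∈ J) : f ∈ I := by
  have h1 := hilb_add I t
  have h2 := hilb_add J t
  have hle : cp I t ≤ cp J t := fun f hf => by
      rw [mem_cp] at *; exact ⟨hf.1, h f hf.1 hf.2⟩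
  have := Submodule.eq_of_le_of_finrank_le hle (by omega)
  have h3 : f ∈ cp J t := mem_cp.2 ⟨hf, hfJ⟩
  rw [← this] at h3
  exact (mem_cp.1 h3).2

theorem hilb_eq_zero {I : Ideal (MvPolynomial σ K)} {t : ℕ} :
    hilb I t = 0 ↔ ∀ f : MvPolynomial σ K, f.IsHomogeneous t → f ∈ I := by
  constructor
  · intro h f hf
    refine mem_of_hilb_le (I := I) (J := ⊤) (t := t) (fun _ _ _ => trivial) (by omega) hf trivial
  · intro h
    have : hilb I t = hilb (⊤ : Ideal (MvPolynomial σ K)) t :=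
      hilb_congr fun f hf => ⟨fun _ => trivial, fun _ => h f hf⟩
    rw [this, hilb]
    have : Subsingleton (MvPolynomial σ K ⧸ (⊤ : Ideal (MvPolynomial σ K))) :=
      Ideal.Quotient.subsingleton_iff.2 rfl
    exact Module.finrank_zero_of_subsingleton

theorem hilb_succ {I : Ideal (MvPolynomial σ K)} (hI : HomI I) {L : MvPolynomial σ K}
    (hL : L.IsHomogeneous 1) (hL0 : L ≠ 0) {t : ℕ}
    (hinj : ∀ f : MvPolynomial σ K, f.IsHomogeneous t → L * f ∈ I → f ∈ I) :
    hilb I (t + 1) = hilb I t + hilb (I ⊔ Ideal.span {L}) (t + 1) := by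
  let μ : MvPolynomial σ K →ₗ[K] MvPolynomial σ K := LinearMap.mulLeft K L
  have hμ : Function.Injective μ := fun a b h => mul_left_cancel₀ hL0 h
  have e1 : cp (I ⊔ Ideal.span {L}) (t + 1) = cp I (t + 1) ⊔ (homogeneousSubmodule σ K t).map μ := by
    ext f
    rw [mem_cp, Submodule.mem_sup (p := cp I (t + 1))]
    constructor
    · rintro ⟨hf, h⟩
      obtain ⟨g, hg, h'⟩ := mem_sup_lin hI hL hf h
      have hLg : (L * g).IsHomogeneous (t + 1) := by rw [add_comm]; exact hL.mul hg
      refine ⟨f - L * g, mem_cp.2 ⟨hf.sub hLg, h'⟩, L * g, ⟨g, hg, rfl⟩, by ring⟩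
    · rintro ⟨a, ha, _, ⟨g, hg, rfl⟩, rfl⟩
      rw [mem_cp] at ha
      have hLg : (L * g).IsHomogeneous (t + 1) := by rw [add_comm]; exact hL.mul hg
      exact ⟨ha.1.add hLg, mem_sup_lin' (g := g) (by
        change a + L * g - L * g ∈ I
        simpa using ha.2)⟩
  have e2 : cp I (t + 1) ⊓ (homogeneousSubmodule σ K t).map μ = (cp I t).map μ := by
    ext f
    constructor
    · rintro ⟨ha, g, hg, rfl⟩
      exact ⟨g, mem_cp.2 ⟨hg, hinj g hg (mem_cp.1 ha).2⟩, rfl⟩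
    · rintro ⟨g, hg, rfl⟩
      rw [SetLike.mem_coe, mem_cp] at hg
      have hLg : (L * g).IsHomogeneous (t + 1) := by rw [add_comm]; exact hL.mul hg.1
      exact ⟨mem_cp.2 ⟨hLg, I.mul_mem_left _ hg.2⟩, g, hg.1, rfl⟩
  have f1 := Submodule.finrank_sup_add_finrank_inf_eq (cp I (t + 1))
    ((homogeneousSubmodule σ K t).map μ)
  rw [← e1, e2] at f1
  have f2 : Module.finrank K ((homogeneousSubmodule σ K t).map μ)
      = Module.finrank K (homogeneousSubmodule σ K t) :=
    (LinearEquiv.finrank_eq (Submodule.equivMapOfInjective _ hμ _)).symm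
  have f3 : Module.finrank K ((cp I t).map μ) = Module.finrank K (cp I t) :=
    (LinearEquiv.finrank_eq (Submodule.equivMapOfInjective _ hμ _)).symm
  have h1 := hilb_add I t
  have h2 := hilb_add I (t + 1)
  have h3 := hilb_add (I ⊔ Ideal.span {L}) (t + 1)
  omega

end fin

end PB

namespace PB

variable {K : Type*} [Field K] {σ : Type*}

theorem exists_linear [Infinite K] {s : Set (Submodule K (MvPolynomial σ K))} (hs : s.Finite)
    (h : ∀ p ∈ s, ∃ i, X i ∉ p) :
    ∃ L : MvPolynomial σ K, L.IsHomogeneous 1 ∧ ∀ p ∈ s, L ∉ p := by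
  classical
  let H := homogeneousSubmodule σ K 1
  let s' : Finset (Submodule K H) := hs.toFinset.image (fun p => p.comap H.subtype)
  have htop : ⊤ ∉ s' := by
    intro hm
    rw [Finset.mem_image] at hm
    obtain ⟨p, hp, he⟩ := hm
    obtain ⟨i, hi⟩ := h p (by simpa using hp)
    have : (⟨X i, isHomogeneous_X K i⟩ : H) ∈ p.comap H.subtype := by rw [he]; trivial
    exact hi this
  have hne := Subspace.biUnion_ne_univ_of_top_notMem (k := K) htop
  rw [Set.ne_univ_iff_exists_notMem] at hne
  obtain ⟨L, hL⟩ := hne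
  refine ⟨L.1, L.2, fun p hp hLp => hL ?_⟩
  simp only [Set.mem_iUnion]
  exact ⟨p.comap H.subtype, Finset.mem_image_of_mem _ (by simpa using hp), hLp⟩

theorem eval_smul_hom {f : MvPolynomial σ K} {t : ℕ} (hf : f.IsHomogeneous t) (c : K) (v : σ → K) :
    eval (c • v) f = c ^ t * eval v f := by
  rw [eval_eq, eval_eq, Finset.mul_sum]
  refine Finset.sum_congr rfl fun e he => ?_
  have hdeg : e.degree = t := by
    rw [Finsupp.degree_eq_weight_one]; exact hf (mem_support_iff.1 he)
  simp only [Pi.smul_apply, smul_eq_mul, mul_pow, Finset.prod_mul_distrib]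
  rw [Finset.prod_pow_eq_pow_sum, show ∑ i ∈ e.support, e i = t from hdeg]
  ring

section pts
variable {m : ℕ} {Z : Set (Fin m → K)}

theorem mem_pI {f : MvPolynomial (Fin m) K} :
    f ∈ pointsIdeal Z ↔ ∀ v ∈ Z, ∀ c : K, eval (c • v) f = 0 := by
  simp [pointsIdeal, Submodule.mem_iInf, RingHom.mem_ker]

theorem mem_pI_hom {f : MvPolynomial (Fin m) K} {t : ℕ} (hf : f.IsHomogeneous t) :
    f ∈ pointsIdeal Z ↔ ∀ v ∈ Z, eval v f = 0 := by
  rw [mem_pI]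
  constructor
  · intro h v hv; simpa using h v hv 1
  · intro h v hv c; rw [eval_smul_hom hf, h v hv, mul_zero]

theorem pI_eval {f : MvPolynomial (Fin m) K} (hf : f ∈ pointsIdeal Z) {v} (hv : v ∈ Z) :
    eval v f = 0 := by simpa using mem_pI.1 hf v hv 1

theorem HomI.pI [Infinite K] : HomI (pointsIdeal Z) := by
  intro f hf t
  rw [mem_pI_hom (homogeneousComponent_isHomogeneous t f)]
  intro v hv
  let q : Polynomial K := ∑ i ∈ Finset.range (f.totalDegree + 1),
    Polynomial.monomial i (eval v (homogeneousComponent i f))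
  have hq : q = 0 := by
    apply Polynomial.funext
    intro c
    have h1 := mem_pI.1 hf v hv c
    rw [← sum_homogeneousComponent f, map_sum] at h1
    simp only [q, Polynomial.eval_finsetSum, Polynomial.eval_monomial, Polynomial.eval_zero]
    rw [← h1]
    refine Finset.sum_congr rfl fun i _ => ?_
    rw [eval_smul_hom (homogeneousComponent_isHomogeneous i f), mul_comm]
  by_cases ht : t < f.totalDegree + 1
  · have := congrArg (fun q => Polynomial.coeff q t) hq
    simp only [q, Polynomial.finsetSum_coeff, Polynomial.coeff_monomial, Polynomial.coeff_zero] at this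
    rw [Finset.sum_ite_eq' (Finset.range (f.totalDegree + 1)) t, if_pos (by simpa using ht)] at this
    exact this
  · rw [homogeneousComponent_eq_zero _ _ (by omega), map_zero]

theorem pI_nzd {L : MvPolynomial (Fin m) K} {t d : ℕ} (hL : L.IsHomogeneous d)
    (hLZ : ∀ v ∈ Z, eval v L ≠ 0) {f : MvPolynomial (Fin m) K} (hf : f.IsHomogeneous t)
    (h : L * f ∈ pointsIdeal Z) : f ∈ pointsIdeal Z := by
  rw [mem_pI_hom (hL.mul hf)] at h
  rw [mem_pI_hom hf]
  intro v hv
  have := h v hv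
  rw [map_mul] at this
  exact (mul_eq_zero.1 this).resolve_left (hLZ v hv)

theorem pI_pow {f : MvPolynomial (Fin m) K} {e : ℕ} (h : f ^ e ∈ pointsIdeal Z) :
    f ∈ pointsIdeal Z := by
  rw [mem_pI] at *
  intro v hv c
  have := h v hv c
  rw [map_pow] at this
  exact eq_zero_of_pow_eq_zero this

end pts

end PB

namespace PB

variable {K : Type*} [Field K] {σ : Type*}

theorem hom_decomp [Fintype σ] {g : MvPolynomial σ K} {t : ℕ} (hg : g.IsHomogeneous (t + 1)) :
    ∃ h : σ → MvPolynomial σ K, (∀ i, (h i).IsHomogeneous t) ∧ g = ∑ i, X i * h i := by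
  classical
  rw [g.as_sum]
  refine Finset.sum_induction _ (fun g => ∃ h : σ → MvPolynomial σ K,
    (∀ i, (h i).IsHomogeneous t) ∧ g = ∑ i, X i * h i) ?_ ?_ ?_
  · rintro a b ⟨h, hh, rfl⟩ ⟨h', hh', rfl⟩
    refine ⟨fun i => h i + h' i, fun i => (hh i).add (hh' i), ?_⟩
    simp only [mul_add, Finset.sum_add_distrib]
  · exact ⟨fun _ => 0, fun i => isHomogeneous_zero _ _ _, by simp⟩
  · intro e he
    have hdeg : e.degree = t + 1 := by
      rw [Finsupp.degree_eq_weight_one]; exact hg (mem_support_iff.1 he)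
    have : e ≠ 0 := by rintro rfl; simp at hdeg
    obtain ⟨i, hi⟩ := Finsupp.ne_iff.1 this
    have hle : Finsupp.single i 1 ≤ e := by
      rw [Finsupp.single_le_iff]; simp at hi; omega
    have h2 : (e - Finsupp.single i 1).degree + 1 = e.degree := by
      conv_rhs => rw [← tsub_add_cancel_of_le hle]
      simp [map_add, Finsupp.degree_single]
    refine ⟨fun j => if j = i then monomial (e - Finsupp.single i 1) (coeff e g) else 0, ?_, ?_⟩
    · intro j
      dsimp only
      split_ifs
      · exact isHomogeneous_monomial _ (by omega)
      · exact isHomogeneous_zero _ _ _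
    · simp only [mul_ite, mul_zero, Finset.sum_ite_eq', Finset.mem_univ, if_true]
      rw [X, monomial_mul, one_mul, add_tsub_cancel_of_le hle]

theorem mul_mem_uniform {J : Ideal (MvPolynomial σ K)} {f : MvPolynomial σ K} {N N' : ℕ}
    (hN : N ≤ N') (h : ∀ g : MvPolynomial σ K, g.IsHomogeneous N → g * f ∈ J) :
    ∀ g : MvPolynomial σ K, g.IsHomogeneous N' → g * f ∈ J := by
  intro g hg
  obtain ⟨s, rfl⟩ := Nat.exists_eq_add_of_le' hN
  exact mem_span_mul hg h

/-- saturation, elementwise -/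
def satI (J : Ideal (MvPolynomial σ K)) : Ideal (MvPolynomial σ K) where
  carrier := {f | ∃ N : ℕ, ∀ g : MvPolynomial σ K, g.IsHomogeneous N → g * f ∈ J}
  add_mem' := by
    rintro a b ⟨N, hN⟩ ⟨N', hN'⟩
    refine ⟨max N N', fun g hg => ?_⟩
    rw [mul_add]
    exact J.add_mem (mul_mem_uniform (le_max_left _ _) hN g hg)
      (mul_mem_uniform (le_max_right _ _) hN' g hg)
  zero_mem' := ⟨0, fun g _ => by simp⟩
  smul_mem' := by
    rintro c f ⟨N, hN⟩
    refine ⟨N, fun g hg => ?_⟩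
    rw [smul_eq_mul, mul_left_comm]
    exact J.mul_mem_left _ (hN g hg)

theorem mem_satI {J : Ideal (MvPolynomial σ K)} {f : MvPolynomial σ K} :
    f ∈ satI J ↔ ∃ N : ℕ, ∀ g : MvPolynomial σ K, g.IsHomogeneous N → g * f ∈ J := Iff.rfl

theorem le_satI (J : Ideal (MvPolynomial σ K)) : J ≤ satI J :=
  fun _ hf => ⟨0, fun _ _ => J.mul_mem_left _ hf⟩

theorem HomI.satI {J : Ideal (MvPolynomial σ K)} (hJ : HomI J) : HomI (satI J) := by
  rintro f ⟨N, hN⟩ t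
  refine ⟨N, fun g hg => ?_⟩
  rw [← homComp_mul hg]
  exact hJ _ (hN g hg) _

theorem satI_of_X [Fintype σ] {J : Ideal (MvPolynomial σ K)} {f : MvPolynomial σ K}
    (h : ∀ i, X i * f ∈ satI J) : f ∈ satI J := by
  choose N hN using h
  refine ⟨(Finset.univ.sup N) + 1, fun g hg => ?_⟩
  obtain ⟨h, hh, rfl⟩ := hom_decomp hg
  rw [Finset.sum_mul]
  refine J.sum_mem fun i _ => ?_
  rw [mul_comm (X i), mul_assoc]
  exact mul_mem_uniform (Finset.le_sup (Finset.mem_univ i)) (hN i) _ (hh i)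

theorem homComp_mul_mem {J : Ideal (MvPolynomial σ K)} (hJ : HomI J) {f : MvPolynomial σ K}
    (hf : f ∈ satI J) : ∃ N0, ∀ t, N0 ≤ t → ∀ a, homogeneousComponent t (a * f) ∈ J := by
  obtain ⟨N, hN⟩ := hf
  refine ⟨N + f.totalDegree, fun t ht a => ?_⟩
  have : a * f = ∑ i ∈ Finset.range (f.totalDegree + 1), homogeneousComponent i f * a := by
    rw [← Finset.sum_mul, sum_homogeneousComponent, mul_comm]
  rw [this, map_sum]
  refine J.sum_mem fun i hi => ?_
  rw [Finset.mem_range] at hi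
  obtain ⟨s, rfl⟩ : ∃ s, t = s + i := ⟨t - i, by omega⟩
  rw [homComp_mul (homogeneousComponent_isHomogeneous i f), mul_comm]
  refine mul_mem_uniform (N := N) (by omega) ?_ _ (homogeneousComponent_isHomogeneous s a)
  intro g hg
  rw [← homComp_mul hg]
  exact hJ _ (hN g hg) _

theorem satI_eventually [Finite σ] {J : Ideal (MvPolynomial σ K)} (hJ : HomI J) :
    ∃ N0, ∀ t, N0 ≤ t → ∀ f : MvPolynomial σ K, f.IsHomogeneous t → f ∈ satI J → f ∈ J := by
  obtain ⟨s, hs⟩ := (isNoetherianRing_iff_ideal_fg (MvPolynomial σ K)).1 inferInstance (satI J)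
  have hmem : ∀ x ∈ s, x ∈ satI J := fun x hx => by
    rw [← hs]; exact Ideal.subset_span hx
  choose! N hN using fun x (hx : x ∈ s) => homComp_mul_mem hJ (hmem x hx)
  refine ⟨s.sup N, fun t ht f hf hfm => ?_⟩
  rw [← hs] at hfm
  obtain ⟨c, hc⟩ := Submodule.mem_span_finset.1 hfm
  rw [← homogeneousComponent_eq_self hf, ← hc.2, map_sum]
  refine J.sum_mem fun x hx => ?_
  exact hN x hx t ((Finset.le_sup hx).trans ht) _

theorem hilb_zero_succ [Fintype σ] {J : Ideal (MvPolynomial σ K)} {t : ℕ} (h : hilb J t = 0) :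
    hilb J (t + 1) = 0 := by
  rw [hilb_eq_zero] at *
  intro f hf
  obtain ⟨g, hg, rfl⟩ := hom_decomp hf
  exact J.sum_mem fun i _ => J.mul_mem_left _ (h _ (hg i))

theorem step3 [Fintype σ] {B : Ideal (MvPolynomial σ K)} (hB : HomI B) {n d N : ℕ}
    (hN : ∀ t, N ≤ t → hilb B t = d) (hn : hilb B (n + 1) = d) (hdn : d ≤ n) :
    ∃ s : Set (Submodule K (MvPolynomial σ K)), s.Finite ∧ (∀ p ∈ s, ∃ i, X i ∉ p) ∧
      ∀ l : MvPolynomial σ K, l.IsHomogeneous 1 → l ≠ 0 → (∀ p ∈ s, l ∉ p) →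
        (∀ t, n + 1 ≤ t → hilb B t = d) ∧
        (∀ t, n + 1 ≤ t → ∀ f : MvPolynomial σ K, f.IsHomogeneous t → l * f ∈ B → f ∈ B) ∧
        (∀ t, n ≤ t → ∀ f : MvPolynomial σ K, f.IsHomogeneous (t + 1) →
          ∃ g : MvPolynomial σ K, g.IsHomogeneous t ∧ f - l * g ∈ B) := by
  set S := satI B with hS
  have hSh : HomI S := HomI.satI hB
  let A := associatedPrimes (MvPolynomial σ K) (MvPolynomial σ K ⧸ S)
  have hAf : A.Finite := associatedPrimes.finite _ _
  refine ⟨(fun p : Ideal (MvPolynomial σ K) => p.restrictScalars K) '' A, hAf.image _, ?_, ?_⟩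
  · rintro _ ⟨p, hp, rfl⟩
    by_contra! hcon
    obtain ⟨hprime, x, hx⟩ := isAssociatedPrime_iff.1 (AssociatedPrimes.mem_iff.1 hp)
    obtain ⟨f, rfl⟩ := Ideal.Quotient.mk_surjective x
    have hfS : f ∈ S := by
      apply satI_of_X
      intro i
      have := hcon i
      rw [Submodule.restrictScalars_mem, hx, Submodule.mem_colon_singleton, Submodule.mem_bot] at this
      exact Ideal.Quotient.eq_zero_iff_mem.1 this
    apply hprime.ne_top
    rw [hx, Ideal.Quotient.eq_zero_iff_mem.2 hfS]
    simp
  intro l hl hl0 hlA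
  have nzd : ∀ f, l * f ∈ S → f ∈ S := by
    intro f hf
    by_contra hfS
    have : l ∈ ⋃ p ∈ A, (p : Set (MvPolynomial σ K)) := by
      rw [biUnion_associatedPrimes_eq_zero_divisors]
      refine ⟨Ideal.Quotient.mk S f, fun h => hfS (Ideal.Quotient.eq_zero_iff_mem.1 h), ?_⟩
      exact Ideal.Quotient.eq_zero_iff_mem.2 hf
    simp only [Set.mem_iUnion] at this
    obtain ⟨p, hp, hlp⟩ := this
    exact hlA _ ⟨p, hp, rfl⟩ hlp
  obtain ⟨N1, hN1⟩ := satI_eventually hB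
  have hbig : ∀ t, max N N1 ≤ t → hilb S t = d := by
    intro t ht
    rw [← hN t ((le_max_left _ _).trans ht)]
    exact hilb_congr fun f hf => ⟨fun h => hN1 t ((le_max_right _ _).trans ht) f hf h,
      fun h => le_satI B h⟩
  have hsucc : ∀ t, hilb S (t + 1) = hilb S t + hilb (S ⊔ Ideal.span {l}) (t + 1) :=
    fun t => hilb_succ hSh hl hl0 fun f _ => nzd f
  have hmono : ∀ s t, s ≤ t → hilb S s ≤ hilb S t := fun s t hst =>
    monotone_nat_of_le_succ (fun t => by rw [hsucc]; omega) hst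
  have hle : ∀ t, hilb S t ≤ d := by
    intro t
    rw [← hbig (max t (max N N1)) (le_max_right _ _)]
    exact hmono _ _ (le_max_left _ _)
  have hgrow : ∀ t, hilb (S ⊔ Ideal.span {l}) t ≠ 0 → t + 1 ≤ hilb S t := by
    intro t
    induction t with
    | zero =>
      intro h
      have := hilb_mono (I := S) (J := S ⊔ Ideal.span {l}) (t := 0)
        (fun f _ hf => Ideal.mem_sup_left hf)
      omega
    | succ t ih =>
      intro h
      have h1 := ih (fun h0 => h (hilb_zero_succ h0))
      rw [hsucc]; omega
  have hz : ∀ t, d ≤ t → hilb (S ⊔ Ideal.span {l}) t = 0 := by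
    intro t ht
    by_contra h
    have := hgrow t h
    have := hle t
    omega
  have hconst : ∀ t, d ≤ t → hilb S t = d := by
    intro t ht
    have : ∀ j, hilb S (t + j) = hilb S t := by
      intro j
      induction j with
      | zero => rfl
      | succ j ih => rw [← add_assoc, hsucc, ih, hz _ (by omega), add_zero]
    rw [← this (max N N1)]
    exact hbig _ (by omega)
  have hdec : ∀ t, n ≤ t → ∀ f : MvPolynomial σ K, f.IsHomogeneous (t + 1) →
      ∃ g : MvPolynomial σ K, g.IsHomogeneous t ∧ f - l * g ∈ S := by
    intro t ht f hf
    exact mem_sup_lin hSh hl hf (hilb_eq_zero.1 (hz (t + 1) (by omega)) f hf)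
  have heq : ∀ j, ∀ f : MvPolynomial σ K, f.IsHomogeneous (n + 1 + j) → f ∈ S → f ∈ B := by
    intro j
    induction j with
    | zero =>
      intro f hf hfS
      exact mem_of_hilb_le (t := n + 1) (fun f _ h => le_satI B h)
        (by rw [hn, hconst _ (by omega)]) hf hfS
    | succ j ih =>
      intro f hf hfS
      obtain ⟨h, hh, rfl⟩ := hom_decomp (t := n + 1 + j) hf
      choose c hc hcS using fun i => hdec (n + j) (by omega) (h i)
        (by have := hh i; rwa [show n + 1 + j = n + j + 1 by omega] at this)
      have hlc : ∀ i, (l * c i).IsHomogeneous (n + 1 + j) := fun i => by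
        have := hl.mul (hc i)
        rwa [show 1 + (n + j) = n + 1 + j by omega] at this
      have h1 : ∀ i, h i - l * c i ∈ B := fun i => ih _ ((hh i).sub (hlc i)) (hcS i)
      have e1 : ∑ i, X i * h i = ∑ i, X i * (h i - l * c i) + l * ∑ i, X i * c i := by
        rw [Finset.mul_sum, ← Finset.sum_add_distrib]
        exact Finset.sum_congr rfl fun i _ => by ring
      have h2 : ∑ i, X i * (h i - l * c i) ∈ B := B.sum_mem fun i _ => B.mul_mem_left _ (h1 i)
      rw [e1] at hfS ⊢
      have h3 := nzd _ ((Submodule.add_mem_iff_right S (le_satI B h2)).1 hfS)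
      have h4 : (∑ i, X i * c i).IsHomogeneous (n + 1 + j) := by
        apply IsHomogeneous.sum
        intro i _
        have := (isHomogeneous_X K i).mul (hc i)
        rwa [show 1 + (n + j) = n + 1 + j by omega] at this
      exact B.add_mem h2 (B.mul_mem_left _ (ih _ h4 h3))
  have heq' : ∀ t, n + 1 ≤ t → ∀ f : MvPolynomial σ K, f.IsHomogeneous t → f ∈ S → f ∈ B := by
    intro t ht f hf
    obtain ⟨j, rfl⟩ := Nat.exists_eq_add_of_le ht
    exact heq j f hf
  refine ⟨?_, ?_, ?_⟩
  · intro t ht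
    rw [← hconst t (by omega)]
    exact hilb_congr fun f hf => ⟨fun h => le_satI B h, heq' t ht f hf⟩
  · intro t ht f hf h
    exact heq' t ht f hf (nzd f (le_satI B h))
  · intro t ht f hf
    obtain ⟨g, hg, h⟩ := hdec t ht f hf
    refine ⟨g, hg, heq' (t + 1) (by omega) _ (hf.sub ?_) h⟩
    rw [add_comm]; exact hl.mul hg

end PB

namespace PB

variable {K : Type*} [Field K] {σ : Type*}

theorem koszul_aux (t : ℕ) (s : Finset σ) : ∀ w : σ → MvPolynomial σ K,
    (∀ i ∈ s, (w i).IsHomogeneous (t + 1)) → ∑ i ∈ s, X i * w i = 0 →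
    ∃ a : σ → σ → MvPolynomial σ K, (∀ i j, (a i j).IsHomogeneous t) ∧
      ∀ i ∈ s, w i = ∑ j ∈ s, (a i j - a j i) * X j := by
  classical
  induction s using Finset.induction_on with
  | empty => intro w _ _; exact ⟨fun _ _ => 0, fun _ _ => isHomogeneous_zero _ _ _, by simp⟩
  | insert k s hk ih =>
    intro w hw h
    rw [Finset.sum_insert hk] at h
    have hmem : w k ∈ Ideal.span ((X : σ → MvPolynomial σ K) '' (s : Set σ)) := by
      rw [mem_ideal_span_X_image]
      intro m hm
      have h1 : X k * w k ∈ Ideal.span ((X : σ → MvPolynomial σ K) '' (s : Set σ)) := by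
        rw [eq_neg_of_add_eq_zero_left h]
        refine neg_mem (Ideal.sum_mem _ fun i hi => ?_)
        exact Ideal.mul_mem_right _ _ (Ideal.subset_span ⟨i, hi, rfl⟩)
      rw [mem_ideal_span_X_image] at h1
      obtain ⟨i, hi, hi0⟩ := h1 (Finsupp.single k 1 + m) (by
        rw [mem_support_iff, coeff_X_mul]; exact mem_support_iff.1 hm)
      refine ⟨i, hi, ?_⟩
      have : k ≠ i := by rintro rfl; exact hk hi
      simpa [Finsupp.single_apply, this] using hi0
    obtain ⟨b, hb⟩ := (Submodule.mem_span_image_finset_iff_exists_fun' _).1 hmem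
    let b' := fun j => homogeneousComponent t (b j)
    have hb' : ∀ j, (b' j).IsHomogeneous t := fun j => homogeneousComponent_isHomogeneous _ _
    have hwk : w k = ∑ j ∈ s, b' j * X j := by
      rw [← homogeneousComponent_eq_self (hw k (Finset.mem_insert_self _ _)), ← hb, map_sum]
      refine Finset.sum_congr rfl fun j _ => ?_
      rw [smul_eq_mul, mul_comm, homComp_mul (isHomogeneous_X K j), mul_comm]
    obtain ⟨a, ha, haw⟩ := ih (fun i => w i + b' i * X k) (fun i hi =>
      (hw i (Finset.mem_insert_of_mem hi)).add ((hb' i).mul (isHomogeneous_X K k))) (by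
        rw [← h, hwk, Finset.mul_sum, ← Finset.sum_add_distrib]
        exact Finset.sum_congr rfl fun i _ => by ring)
    refine ⟨fun i j => if j = k then 0 else if i = k then b' j else a i j, ?_, ?_⟩
    · intro i j
      dsimp only
      split_ifs
      · exact isHomogeneous_zero _ _ _
      · exact hb' j
      · exact ha i j
    · intro i hi
      rw [Finset.sum_insert hk]
      rw [Finset.mem_insert] at hi
      rcases hi with rfl | hi
      · simp only [if_true, sub_self, zero_mul, zero_add, sub_zero]
        rw [hwk]
        refine Finset.sum_congr rfl fun j hj => ?_
        rw [if_neg (by rintro rfl; exact hk hj)]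
      · have hik : i ≠ k := by rintro rfl; exact hk hi
        simp only [if_true, if_neg hik, zero_sub]
        have h2 : w i = (w i + b' i * X k) - b' i * X k := by ring
        rw [h2, haw i hi, sub_eq_neg_add]
        congr 1
        · ring
        · refine Finset.sum_congr rfl fun j hj => ?_
          have hjk : j ≠ k := by rintro rfl; exact hk hj
          rw [if_neg hjk, if_neg hjk]

theorem koszul [Fintype σ] {t : ℕ} {w : σ → MvPolynomial σ K}
    (hw : ∀ i, (w i).IsHomogeneous (t + 1)) (h : ∑ i, X i * w i = 0) :
    ∃ a : σ → σ → MvPolynomial σ K, (∀ i j, (a i j).IsHomogeneous t) ∧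
      ∀ i, w i = ∑ j, (a i j - a j i) * X j := by
  obtain ⟨a, ha, h⟩ := koszul_aux t Finset.univ w (fun i _ => hw i) h
  exact ⟨a, ha, fun i => h i (Finset.mem_univ i)⟩

theorem prime_lin {L : MvPolynomial σ K} (hL : L.IsHomogeneous 1) (hL0 : L ≠ 0) : Prime L := by
  rw [← UniqueFactorizationMonoid.irreducible_iff_prime]
  refine irreducible_of_totalDegree_eq_one (hL.totalDegree hL0) ?_
  intro x hx
  rw [isUnit_iff_ne_zero]
  rintro rfl
  apply hL0
  ext i
  simpa using hx i

theorem dvd_hom {L v : MvPolynomial σ K} {t : ℕ} (hL : L.IsHomogeneous 1)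
    (hv : v.IsHomogeneous (t + 1)) (h : L ∣ v) : ∃ g : MvPolynomial σ K, g.IsHomogeneous t ∧
      v = L * g := by
  obtain ⟨c, rfl⟩ := h
  refine ⟨homogeneousComponent t c, homogeneousComponent_isHomogeneous _ _, ?_⟩
  rw [← homComp_mul hL, homogeneousComponent_eq_self hv]

theorem low_gen [Fintype σ] {I : Ideal (MvPolynomial σ K)} {n t : ℕ} (ht : n ≤ t)
    {f : MvPolynomial σ K} (hf : f.IsHomogeneous (t + 1)) (h : f ∈ lowIdeal I n) :
    ∃ w : σ → MvPolynomial σ K, (∀ i, (w i).IsHomogeneous t) ∧ (∀ i, w i ∈ lowIdeal I n) ∧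
      f = ∑ i, X i * w i := by
  have key : ∀ t, n ≤ t → ∃ w : σ → MvPolynomial σ K, (∀ i, (w i).IsHomogeneous t) ∧
      (∀ i, w i ∈ lowIdeal I n) ∧ homogeneousComponent (t + 1) f = ∑ i, X i * w i := by
    refine Submodule.span_induction (p := fun f _ => ∀ t, n ≤ t →
      ∃ w : σ → MvPolynomial σ K, (∀ i, (w i).IsHomogeneous t) ∧
      (∀ i, w i ∈ lowIdeal I n) ∧ homogeneousComponent (t + 1) f = ∑ i, X i * w i) ?_ ?_ ?_ ?_ h
    · rintro x ⟨hx, hx'⟩ t ht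
      simp only [Set.mem_iUnion] at hx'
      obtain ⟨s, hs, hxs⟩ := hx'
      refine ⟨fun _ => 0, fun _ => isHomogeneous_zero _ _ _, fun _ => Ideal.zero_mem _, ?_⟩
      rw [homogeneousComponent_of_mem hxs, if_neg (by omega)]
      simp
    · intro t _
      exact ⟨fun _ => 0, fun _ => isHomogeneous_zero _ _ _, fun _ => Ideal.zero_mem _, by simp⟩
    · intro x y _ _ hx hy t ht
      obtain ⟨w, h1, h2, h3⟩ := hx t ht
      obtain ⟨w', h1', h2', h3'⟩ := hy t ht
      refine ⟨fun i => w i + w' i, fun i => (h1 i).add (h1' i),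
        fun i => Ideal.add_mem _ (h2 i) (h2' i), ?_⟩
      rw [map_add, h3, h3', ← Finset.sum_add_distrib]
      exact Finset.sum_congr rfl fun i _ => by ring
    · intro a x hx0 hx t ht
      rw [smul_eq_mul, ← sum_homogeneousComponent a, Finset.sum_mul, map_sum]
      refine Finset.sum_induction _ (fun y => ∃ w : σ → MvPolynomial σ K,
        (∀ i, (w i).IsHomogeneous t) ∧ (∀ i, w i ∈ lowIdeal I n) ∧ y = ∑ i, X i * w i) ?_ ?_ ?_
      · rintro _ _ ⟨w, h1, h2, rfl⟩ ⟨w', h1', h2', rfl⟩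
        refine ⟨fun i => w i + w' i, fun i => (h1 i).add (h1' i),
          fun i => Ideal.add_mem _ (h2 i) (h2' i), ?_⟩
        rw [← Finset.sum_add_distrib]
        exact Finset.sum_congr rfl fun i _ => by ring
      · exact ⟨fun _ => 0, fun _ => isHomogeneous_zero _ _ _, fun _ => Ideal.zero_mem _, by simp⟩
      · intro i _
        have hi := homogeneousComponent_isHomogeneous i a
        rcases Nat.lt_or_ge (t + 1) i with hlt | hge
        · rw [homComp_mul_lt hi _ hlt]
          exact ⟨fun _ => 0, fun _ => isHomogeneous_zero _ _ _, fun _ => Ideal.zero_mem _, by simp⟩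
        rcases Nat.eq_zero_or_pos i with rfl | hpos
        · obtain ⟨w, h1, h2, h3⟩ := hx t ht
          refine ⟨fun i => homogeneousComponent 0 a * w i, fun i => by simpa using hi.mul (h1 i),
            fun i => Ideal.mul_mem_left _ _ (h2 i), ?_⟩
          rw [show t + 1 = (t + 1) + 0 from rfl, homComp_mul hi, h3, Finset.mul_sum]
          exact Finset.sum_congr rfl fun i _ => by ring
        · obtain ⟨j, rfl⟩ : ∃ j, i = j + 1 := ⟨i - 1, by omega⟩
          obtain ⟨s, rfl⟩ : ∃ s, t = s + j := ⟨t - j, by omega⟩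
          obtain ⟨b, hb, hb'⟩ := hom_decomp hi
          refine ⟨fun i => b i * homogeneousComponent s x, fun i => ?_,
            fun i => Ideal.mul_mem_left _ _ (HomI.low I n x hx0 s), ?_⟩
          · rw [add_comm]; exact (hb i).mul (homogeneousComponent_isHomogeneous _ _)
          · rw [add_assoc, homComp_mul hi, hb', Finset.sum_mul]
            exact Finset.sum_congr rfl fun i _ => by ring
  have := key t ht
  rwa [homogeneousComponent_eq_self hf] at this

theorem step4 [Fintype σ] {W : Ideal (MvPolynomial σ K)} (hW : HomI W) {n : ℕ}
    {L l : MvPolynomial σ K} (hL : L.IsHomogeneous 1) (hL0 : L ≠ 0) (hl : l.IsHomogeneous 1)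
    (hLl : ¬ L ∣ l)
    (hinj : ∀ t ≤ n + 1, ∀ f : MvPolynomial σ K, f.IsHomogeneous t → L * f ∈ W → f ∈ W)
    (hgen : ∀ t, n + 1 ≤ t → ∀ f : MvPolynomial σ K, f.IsHomogeneous (t + 1) → f ∈ W →
      ∃ w : σ → MvPolynomial σ K, (∀ i, (w i).IsHomogeneous t) ∧ (∀ i, w i ∈ W) ∧
      f = ∑ i, X i * w i)
    (hl1 : ∀ t, n + 1 ≤ t → ∀ f : MvPolynomial σ K, f.IsHomogeneous t →
      l * f ∈ W ⊔ Ideal.span {L} → f ∈ W ⊔ Ideal.span {L})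
    (hdec : ∀ t, n ≤ t → ∀ f : MvPolynomial σ K, f.IsHomogeneous (t + 1) →
      ∃ g g' : MvPolynomial σ K, g.IsHomogeneous t ∧ g'.IsHomogeneous t ∧ f - L * g - l * g' ∈ W)
    (t : ℕ) : ∀ f : MvPolynomial σ K, f.IsHomogeneous t → L * f ∈ W → f ∈ W := by
  induction t using Nat.strong_induction_on with
  | _ t ih =>
  rcases Nat.lt_or_ge (n + 1) t with hlt | hge
  swap
  · exact hinj t hge
  obtain ⟨s, rfl⟩ : ∃ s, t = s + 2 := ⟨t - 2, by omega⟩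
  have hs : n ≤ s := by omega
  have hlin : ∀ {L g : MvPolynomial σ K} {t : ℕ}, L.IsHomogeneous 1 → g.IsHomogeneous t →
      (L * g).IsHomogeneous (t + 1) := fun h1 h2 => by rw [add_comm]; exact h1.mul h2
  have hA : ∀ a b : MvPolynomial σ K, a.IsHomogeneous (s + 1) → b.IsHomogeneous (s + 1) →
      L * a + l * b ∈ W → ∃ a' b' : MvPolynomial σ K, a' ∈ W ∧ b' ∈ W ∧
        a'.IsHomogeneous (s + 1) ∧ b'.IsHomogeneous (s + 1) ∧ L * a + l * b = L * a' + l * b' := by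
    intro a b ha hb hab
    have h1 : l * b ∈ W ⊔ Ideal.span {L} := by
      apply mem_sup_lin' (g := -a)
      rw [mul_neg, sub_neg_eq_add, add_comm]; exact hab
    obtain ⟨c, hc, hbc⟩ := mem_sup_lin hW hL hb (hl1 (s + 1) (by omega) b hb h1)
    refine ⟨a + l * c, b - L * c, ?_, hbc, ha.add (hlin hl hc), hb.sub (hlin hL hc), by ring⟩
    apply ih (s + 1) (by omega) _ (ha.add (hlin hl hc))
    have : L * (a + l * c) = (L * a + l * b) - l * (b - L * c) := by ring
    rw [this]
    exact W.sub_mem hab (W.mul_mem_left _ hbc)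
  intro f hf hLf
  obtain ⟨w, hw, hwW, hw'⟩ := hgen (s + 2) (by omega) (L * f) (hlin hL hf) hLf
  obtain ⟨φ, hφ, hφ'⟩ := hom_decomp hf
  obtain ⟨a, ha, haw⟩ := koszul (w := fun i => w i - L * φ i) (t := s + 1)
    (fun i => (hw i).sub (hlin hL (hφ i))) (by
      simp only [mul_sub, Finset.sum_sub_distrib]
      rw [← hw', hφ', Finset.mul_sum, ← Finset.sum_sub_distrib]
      exact Finset.sum_eq_zero fun i _ => by ring)
  choose c d hc hd hcd using fun i j => hdec s hs (a i j) (ha i j)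
  let A := fun i j => a i j - L * c i j - l * d i j
  have hXm : ∀ {t : ℕ} (e : σ → MvPolynomial σ K), (∀ j, (e j).IsHomogeneous t) →
      (∑ j, e j * X j).IsHomogeneous (t + 1) := by
    intro t e he
    apply IsHomogeneous.sum
    intro j _
    exact (he j).mul (isHomogeneous_X K j)
  have hC : ∀ i, (φ i + ∑ j, (c i j - c j i) * X j).IsHomogeneous (s + 1) := fun i =>
    (hφ i).add (hXm _ fun j => (hc i j).sub (hc j i))
  have hD : ∀ i, (∑ j, (d i j - d j i) * X j).IsHomogeneous (s + 1) := fun i =>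
    hXm _ fun j => (hd i j).sub (hd j i)
  have he : ∀ i, L * (φ i + ∑ j, (c i j - c j i) * X j) + l * ∑ j, (d i j - d j i) * X j
      = w i - ∑ j, (A i j - A j i) * X j := by
    intro i
    have h1 : w i = L * φ i + ∑ j, (a i j - a j i) * X j := by rw [← haw i]; ring
    rw [h1, mul_add, add_assoc, add_sub_assoc]
    congr 1
    rw [Finset.mul_sum, Finset.mul_sum, ← Finset.sum_add_distrib, ← Finset.sum_sub_distrib]
    exact Finset.sum_congr rfl fun j _ => by simp only [A]; ring
  have hmem : ∀ i, w i - ∑ j, (A i j - A j i) * X j ∈ W := fun i =>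
    W.sub_mem (hwW i) (W.sum_mem fun j _ => W.mul_mem_right _ (W.sub_mem (hcd i j) (hcd j i)))
  choose u v hu hv hu' hv' huv using fun i => hA _ _ (hC i) (hD i) (by rw [he i]; exact hmem i)
  have hsum : L * f = L * ∑ i, X i * u i + l * ∑ i, X i * v i := by
    have h0 : ∑ i, X i * ∑ j, (A i j - A j i) * X j = 0 := by
      simp only [sub_mul, Finset.sum_sub_distrib, Finset.mul_sum, mul_sub]
      rw [sub_eq_zero]
      conv_rhs => rw [Finset.sum_comm]
      exact Finset.sum_congr rfl fun i _ => Finset.sum_congr rfl fun j _ => by ring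
    calc L * f = ∑ i, X i * w i - ∑ i, X i * ∑ j, (A i j - A j i) * X j := by
            rw [h0, sub_zero, hw']
      _ = ∑ i, X i * (w i - ∑ j, (A i j - A j i) * X j) := by
            rw [← Finset.sum_sub_distrib]; exact Finset.sum_congr rfl fun i _ => by ring
      _ = ∑ i, X i * (L * u i + l * v i) :=
            Finset.sum_congr rfl fun i _ => by rw [← huv i, he i]
      _ = _ := by
            rw [Finset.mul_sum, Finset.mul_sum, ← Finset.sum_add_distrib]
            exact Finset.sum_congr rfl fun i _ => by ring
  have hXu : ∑ i, X i * u i ∈ W := W.sum_mem fun i _ => W.mul_mem_left _ (hu i)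
  have hXv : ∑ i, X i * v i ∈ W := W.sum_mem fun i _ => W.mul_mem_left _ (hv i)
  have hdvd : L ∣ ∑ i, X i * v i := by
    have h1 : L ∣ l * ∑ i, X i * v i := ⟨f - ∑ i, X i * u i, by
      rw [mul_sub, hsum]; ring⟩
    exact ((prime_lin hL hL0).dvd_or_dvd h1).resolve_left hLl
  have hvh : (∑ i, X i * v i).IsHomogeneous (s + 1 + 1) := by
    simp only [mul_comm (X _)]; exact hXm _ hv'
  obtain ⟨g, hg, hg'⟩ := dvd_hom hL hvh hdvd
  have hgW : g ∈ W := ih (s + 1) (by omega) g hg (by rw [← hg']; exact hXv)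
  have : f = ∑ i, X i * u i + l * g := by
    apply mul_left_cancel₀ hL0
    rw [hsum, hg']; ring
  rw [this]
  exact W.add_mem hXu (W.mul_mem_left _ hgW)

end PB

namespace PB

variable {K : Type*} [Field K] {σ : Type*}

/-- A good pair of linear forms. -/
structure GP (W : Ideal (MvPolynomial σ K)) (n d : ℕ) (L l : MvPolynomial σ K) : Prop where
  hW : HomI W
  hlow : W ≤ lowIdeal W (n + 1)
  hL : L.IsHomogeneous 1
  hl : l.IsHomogeneous 1
  hL0 : L ≠ 0
  inj : ∀ f, L * f ∈ W → f ∈ W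
  linj : ∀ t, n + 1 ≤ t → ∀ f : MvPolynomial σ K, f.IsHomogeneous t →
      l * f ∈ W ⊔ Ideal.span {L} → f ∈ W ⊔ Ideal.span {L}
  dec : ∀ t, n ≤ t → ∀ f : MvPolynomial σ K, f.IsHomogeneous (t + 1) →
      ∃ g g' : MvPolynomial σ K, g.IsHomogeneous t ∧ g'.IsHomogeneous t ∧ f - L * g - l * g' ∈ W
  hd : 1 ≤ d
  hilb_sup : ∀ t, n + 1 ≤ t → hilb (W ⊔ Ideal.span {L}) t = d

/-- The map from the polynomial ring in two variables. -/
noncomputable def phi (L l : MvPolynomial σ K) : MvPolynomial (Fin 2) K →ₐ[K] MvPolynomial σ K :=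
  aeval ![L, l]

theorem phi_hom {L l : MvPolynomial σ K} (hL : L.IsHomogeneous 1) (hl : l.IsHomogeneous 1)
    {t : MvPolynomial (Fin 2) K} {e : ℕ} (ht : t.IsHomogeneous e) :
    (phi L l t).IsHomogeneous e := by
  have := ht.aeval (S := K) ![L, l] (n := 1) (by intro i; fin_cases i <;> simpa)
  simpa [phi] using this

@[simp] theorem phi_X0 (L l : MvPolynomial σ K) : phi L l (X 0) = L := by simp [phi]
@[simp] theorem phi_X1 (L l : MvPolynomial σ K) : phi L l (X 1) = l := by simp [phi]

theorem bin_decomp {e : ℕ} : ∀ {t : MvPolynomial (Fin 2) K}, t.IsHomogeneous (e + 1) →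
    ∃ (c : K) (t1 : MvPolynomial (Fin 2) K), t1.IsHomogeneous e ∧
      t = C c * X 1 ^ (e + 1) + X 0 * t1 := by
  induction e with
  | zero =>
    intro t ht
    obtain ⟨h, hh, h2⟩ := hom_decomp ht
    rw [Fin.sum_univ_two] at h2
    have h3 := (totalDegree_eq_zero_iff_eq_C (p := h 1)).1
      (Nat.le_zero.1 (hh 1).totalDegree_le)
    refine ⟨coeff 0 (h 1), h 0, hh 0, ?_⟩
    rw [h2, ← h3]; ring
  | succ e ih =>
    intro t ht
    obtain ⟨h, hh, h2⟩ := hom_decomp ht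
    rw [Fin.sum_univ_two] at h2
    obtain ⟨c, t1, ht1, h3⟩ := ih (hh 1)
    refine ⟨c, h 0 + X 1 * t1, (hh 0).add ?_, ?_⟩
    · rw [add_comm]; exact (isHomogeneous_X K 1).mul ht1
    · rw [h2, h3]; ring

/-- Torsion ideal over `K[L,l]`. -/
def torI (W : Ideal (MvPolynomial σ K)) (L l : MvPolynomial σ K) : Ideal (MvPolynomial σ K) where
  carrier := {f | ∃ (e : ℕ) (t : MvPolynomial (Fin 2) K), t.IsHomogeneous e ∧ t ≠ 0 ∧
    phi L l t * f ∈ W}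
  add_mem' := by
    rintro a b ⟨e, t, ht, ht0, h⟩ ⟨e', t', ht', ht0', h'⟩
    refine ⟨e + e', t * t', ht.mul ht', mul_ne_zero ht0 ht0', ?_⟩
    rw [map_mul, mul_add]
    refine W.add_mem ?_ ?_
    · rw [mul_comm (phi L l t), mul_assoc]; exact W.mul_mem_left _ h
    · rw [mul_assoc]; exact W.mul_mem_left _ h'
  zero_mem' := ⟨0, 1, isHomogeneous_one _ _, one_ne_zero, by simp⟩
  smul_mem' := by
    rintro c f ⟨e, t, ht, ht0, h⟩
    refine ⟨e, t, ht, ht0, ?_⟩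
    rw [smul_eq_mul, mul_left_comm]; exact W.mul_mem_left _ h

theorem mem_torI {W : Ideal (MvPolynomial σ K)} {L l f : MvPolynomial σ K} :
    f ∈ torI W L l ↔ ∃ (e : ℕ) (t : MvPolynomial (Fin 2) K), t.IsHomogeneous e ∧ t ≠ 0 ∧
      phi L l t * f ∈ W := Iff.rfl

theorem le_torI (W : Ideal (MvPolynomial σ K)) (L l : MvPolynomial σ K) : W ≤ torI W L l :=
  fun _ hf => ⟨0, 1, isHomogeneous_one _ _, one_ne_zero, W.mul_mem_left _ hf⟩

namespace GP

variable {W : Ideal (MvPolynomial σ K)} {n d : ℕ} {L l : MvPolynomial σ K}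

theorem homC (h : GP W n d L l) : HomI (torI W L l) := by
  rintro f ⟨e, t, ht, ht0, hf⟩ s
  refine ⟨e, t, ht, ht0, ?_⟩
  rw [← homComp_mul (phi_hom h.hL h.hl ht)]
  exact h.hW _ hf _

theorem mem_tor_of (h : GP W n d L l) {f : MvPolynomial σ K} {s : ℕ} (hf : f.IsHomogeneous s)
    {t : MvPolynomial (Fin 2) K} (ht : t ≠ 0) (hm : phi L l t * f ∈ W) : f ∈ torI W L l := by
  obtain ⟨i, hi⟩ : ∃ i, homogeneousComponent i t ≠ 0 := by
    by_contra! hc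
    apply ht
    rw [← sum_homogeneousComponent t]
    exact Finset.sum_eq_zero fun i _ => hc i
  refine ⟨i, _, homogeneousComponent_isHomogeneous i t, hi, ?_⟩
  have h1 := h.hW _ hm (i + s)
  rw [mul_comm, homComp_mul hf] at h1
  have h2 : homogeneousComponent i (phi L l t) = phi L l (homogeneousComponent i t) := by
    conv_lhs => rw [← sum_homogeneousComponent t]
    rw [map_sum, map_sum]
    have : ∀ j, homogeneousComponent i (phi L l (homogeneousComponent j t))
        = if j = i then phi L l (homogeneousComponent i t) else 0 := by
      intro j
      rw [homogeneousComponent_of_mem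
        (phi_hom h.hL h.hl (homogeneousComponent_isHomogeneous j t))]
      by_cases hij : j = i
      · subst hij; simp
      · rw [if_neg hij, if_neg (fun h => hij h.symm)]
    simp only [this]
    rw [Finset.sum_ite_eq']
    split_ifs with h
    · rfl
    · rw [homogeneousComponent_eq_zero, map_zero]
      simpa using h
  rwa [h2, mul_comm] at h1

theorem torL (h : GP W n d L l) {f : MvPolynomial σ K} (hf : L * f ∈ torI W L l) :
    f ∈ torI W L l := by
  obtain ⟨e, t, ht, ht0, hm⟩ := hf
  refine ⟨e, t, ht, ht0, h.inj _ ?_⟩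
  rwa [mul_left_comm]

theorem torLpow (h : GP W n d L l) {f : MvPolynomial σ K} {j : ℕ}
    (hf : L ^ j * f ∈ torI W L l) : f ∈ torI W L l := by
  induction j with
  | zero => simpa using hf
  | succ j ih => exact ih (h.torL (by rw [← mul_assoc, ← pow_succ']; exact hf))

theorem tor_sup (h : GP W n d L l) {f : MvPolynomial σ K} {s : ℕ} (hs : n + 1 ≤ s)
    (hf : f.IsHomogeneous s) (hm : f ∈ torI W L l) : f ∈ W ⊔ Ideal.span {L} := by
  obtain ⟨e, t, ht, ht0, hm⟩ := hm
  have hpow : ∀ j s, n + 1 ≤ s → ∀ f : MvPolynomial σ K, f.IsHomogeneous s →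
      l ^ j * f ∈ W ⊔ Ideal.span {L} → f ∈ W ⊔ Ideal.span {L} := by
    intro j
    induction j with
    | zero => intro s _ f _ hf; simpa using hf
    | succ j ih =>
      intro s hs f hf hm
      apply h.linj s hs f hf
      refine ih (1 + s) (by omega) (l * f) (h.hl.mul hf) ?_
      rwa [← mul_assoc, ← pow_succ]
  induction e generalizing t with
  | zero =>
    have h3 := (totalDegree_eq_zero_iff_eq_C (p := t)).1 (Nat.le_zero.1 ht.totalDegree_le)
    have hc : coeff 0 t ≠ 0 := fun h0 => ht0 (by rw [h3, h0, C_0])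
    rw [h3] at hm
    apply Ideal.mem_sup_left
    have := W.mul_mem_left (C (coeff 0 t)⁻¹) hm
    rw [← mul_assoc] at this
    rw [show phi L l (C (coeff 0 t)) = C (coeff 0 t) by simp [phi, algebraMap_eq], ← C_mul,
      inv_mul_cancel₀ hc, C_1, one_mul] at this
    exact this
  | succ e ih =>
    obtain ⟨c, t1, ht1, he⟩ := bin_decomp ht
    by_cases hc : c = 0
    · subst hc
      rw [C_0, zero_mul, zero_add] at he
      subst he
      refine ih t1 ht1 (by rintro rfl; simp at ht0) (h.inj _ ?_)
      rwa [map_mul, phi_X0, mul_assoc] at hm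
    · have h1 : phi L l (C c) = C c := by simp [phi, algebraMap_eq]
      rw [he, map_add, map_mul, map_mul, map_pow, phi_X0, phi_X1, h1] at hm
      apply hpow (e + 1) s hs f hf
      have h2 : C c * (l ^ (e + 1) * f) ∈ W ⊔ Ideal.span {L} := by
        apply mem_sup_lin' (g := - (phi L l t1 * f))
        convert hm using 1; ring
      have := Ideal.mul_mem_left _ (C c⁻¹) h2
      rwa [← mul_assoc, ← C_mul, inv_mul_cancel₀ hc, C_1, one_mul] at this

theorem tor_dec (h : GP W n d L l) {f : MvPolynomial σ K} {s : ℕ} (hs : n ≤ s)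
    (hf : f.IsHomogeneous (s + 1)) (hm : f ∈ torI W L l) :
    ∃ g : MvPolynomial σ K, g.IsHomogeneous s ∧ g ∈ torI W L l ∧ f - L * g ∈ W := by
  obtain ⟨g, hg, hgW⟩ := mem_sup_lin h.hW h.hL hf (h.tor_sup (by omega) hf hm)
  refine ⟨g, hg, h.torL ?_, hgW⟩
  have : L * g = f - (f - L * g) := by ring
  rw [this]
  exact Ideal.sub_mem _ hm (le_torI W L l hgW)

theorem one_notMem [Finite σ] (h : GP W n d L l) : (1 : MvPolynomial σ K) ∉ torI W L l := by
  intro h1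
  have : hilb (W ⊔ Ideal.span {L}) (n + 1) = 0 := by
    rw [hilb_eq_zero]
    intro f hf
    refine h.tor_sup le_rfl hf ?_
    rw [← mul_one f]; exact Ideal.mul_mem_left _ _ h1
  rw [h.hilb_sup _ le_rfl] at this
  have := h.hd
  omega

theorem phi_inj [Finite σ] (h : GP W n d L l) {t : MvPolynomial (Fin 2) K} (ht : phi L l t ∈ W) :
    t = 0 := by
  by_contra h0
  exact h.one_notMem (h.mem_tor_of (isHomogeneous_one _ _) h0 (by simpa using ht))

theorem tor_low (h : GP W n d L l) : torI W L l ≤ lowIdeal (torI W L l) (n + 1) := by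
  have hWle : W ≤ lowIdeal (torI W L l) (n + 1) := by
    refine h.hlow.trans (Ideal.span_le.2 ?_)
    rintro f ⟨hf, hf'⟩
    simp only [Set.mem_iUnion] at hf'
    obtain ⟨s, hs, hfs⟩ := hf'
    exact mem_low hfs hs (le_torI W L l hf)
  have key : ∀ s, ∀ f : MvPolynomial σ K, f.IsHomogeneous s → f ∈ torI W L l →
      f ∈ lowIdeal (torI W L l) (n + 1) := by
    intro s
    induction s with
    | zero => intro f hf hm; exact mem_low hf (by omega) hm
    | succ s ih =>
      intro f hf hm
      by_cases hs : s + 1 ≤ n + 1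
      · exact mem_low hf hs hm
      · obtain ⟨g, hg, hgt, hgW⟩ := h.tor_dec (by omega) hf hm
        have : f = (f - L * g) + L * g := by ring
        rw [this]
        exact Ideal.add_mem _ (hWle hgW) (Ideal.mul_mem_left _ _ (ih g hg hgt))
  intro f hf
  exact mem_of_comps fun t => key t _ (homogeneousComponent_isHomogeneous t f) (h.homC f hf t)

theorem hilb_tor [Finite σ] (h : GP W n d L l) {t : ℕ} (ht : n ≤ t) :
    hilb (torI W L l) (t + 1) = hilb (torI W L l) t + d := by
  rw [hilb_succ h.homC h.hL h.hL0 fun f _ hf => h.torL hf, ← h.hilb_sup (t + 1) (by omega)]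
  congr 1
  refine hilb_congr fun f hf => ⟨fun hm => ?_, fun hm => ?_⟩
  · obtain ⟨g, hg, hgm⟩ := mem_sup_lin h.homC h.hL hf hm
    have hh : (f - L * g).IsHomogeneous (t + 1) := hf.sub (by rw [add_comm]; exact h.hL.mul hg)
    have h1 := h.tor_sup (s := t + 1) (by omega) hh hgm
    have : f = (f - L * g) + L * g := by ring
    rw [this]
    exact Ideal.add_mem _ h1 (Ideal.mem_sup_right (Ideal.mem_span_singleton.2 ⟨g, rfl⟩))
  · exact (sup_le_sup_right (le_torI W L l) _) hm

theorem hilb_W [Finite σ] (h : GP W n d L l) {t : ℕ} (ht : n ≤ t) :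
    hilb W (t + 1) = hilb W t + d := by
  rw [hilb_succ h.hW h.hL h.hL0 fun f _ hf => h.inj f hf, ← h.hilb_sup (t + 1) (by omega)]

theorem hilb_poly [Finite σ] (h : GP W n d L l) :
    ∃ c : ℤ, ∃ N : ℕ, ∀ t : ℕ, N ≤ t → (hilb W t : ℤ) = d * t + c := by
  refine ⟨(hilb W n : ℤ) - d * n, n, fun t ht => ?_⟩
  induction t, ht using Nat.le_induction with
  | base => ring
  | succ t ht ih => rw [h.hilb_W ht]; push_cast; rw [ih]; ring

theorem sat_eq (h : GP W n d L l) : saturate W = W := by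
  apply le_antisymm
  · refine iSup_le fun N f hf => ?_
    have h1 : L ∈ Ideal.span (Set.range (X : σ → MvPolynomial σ K)) := by
      have := mem_ideal_span_X_image (x := L) (s := Set.univ)
      rw [Set.image_univ] at this
      rw [this]
      intro m hm
      have hdeg : m.degree = 1 := by
        rw [Finsupp.degree_eq_weight_one]; exact h.hL (mem_support_iff.1 hm)
      by_contra! hc
      have : m = 0 := Finsupp.ext fun i => hc i trivial
      rw [this] at hdeg; simp at hdeg
    have h2 := Submodule.mem_colon.1 hf (L ^ N) (Ideal.pow_mem_pow h1 N)
    rw [smul_eq_mul, mul_comm] at h2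
    clear hf
    induction N with
    | zero => simpa using h2
    | succ N ih => exact ih (h.inj _ (by rw [← mul_assoc, ← pow_succ']; exact h2))
  · refine le_trans ?_ (le_iSup _ 0)
    intro f hf
    exact Submodule.mem_colon.2 fun p _ => W.mul_mem_right _ hf

end GP
end PB

namespace PB

variable {K : Type*} [Field K] {r : ℕ}

structure Ctx (Z : Finset (Fin (r + 1) → K)) (n k : ℕ) : Prop where
  hZ0 : ∀ v ∈ Z, v ≠ (0 : Fin (r + 1) → K)
  hZdist : ∀ v ∈ Z, ∀ w ∈ Z, v ≠ w → ∀ c : K, w ≠ c • v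
  hk : 2 ≤ k
  hkn : k ≤ n
  hhn1 : hvec (pointsIdeal (↑Z : Set (Fin (r + 1) → K))) (n + 1) + 1 = k
  hhtail : ∀ t, n + 2 ≤ t → hvec (pointsIdeal (↑Z : Set (Fin (r + 1) → K))) t = 0
  hbase : ∀ L : MvPolynomial (Fin (r + 1)) K, L.IsHomogeneous 1 → L ≠ 0 →
      (∀ v ∈ Z, eval v L ≠ 0) →
      ∃ N : ℕ, ∀ t, N ≤ t →
        hilb (compIdeal (pointsIdeal (↑Z : Set (Fin (r + 1) → K))) (n + 1) ⊔ Ideal.span {L}) t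
          = k - 1

/-- The ideal generated by the components of degree at most `n+1`. -/
noncomputable abbrev WI (Z : Finset (Fin (r + 1) → K)) (n : ℕ) : Ideal (MvPolynomial (Fin (r + 1)) K) :=
  lowIdeal (pointsIdeal (↑Z : Set (Fin (r + 1) → K))) (n + 1)

theorem lin_hom {σ : Type*} {L g : MvPolynomial σ K} {t : ℕ} (h1 : L.IsHomogeneous 1)
    (h2 : g.IsHomogeneous t) : (L * g).IsHomogeneous (t + 1) := by
  rw [add_comm]; exact h1.mul h2

theorem Ctx.good_pair [Infinite K] {Z : Finset (Fin (r + 1) → K)} {n k : ℕ} (c : Ctx Z n k)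
    {L : MvPolynomial (Fin (r + 1)) K} (hL : L.IsHomogeneous 1) (hL0 : L ≠ 0)
    (hLZ : ∀ v ∈ Z, eval v L ≠ 0) :
    ∃ s : Set (Submodule K (MvPolynomial (Fin (r + 1)) K)), s.Finite ∧ (∀ p ∈ s, ∃ i, X i ∉ p) ∧
      ∀ l : MvPolynomial (Fin (r + 1)) K, l.IsHomogeneous 1 → (∀ p ∈ s, l ∉ p) →
        GP (WI Z n) n (k - 1) L l := by
  set I := pointsIdeal (↑Z : Set (Fin (r + 1) → K)) with hI
  set W := WI Z n with hW
  have hIh : HomI I := HomI.pI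
  have hWh : HomI W := HomI.low _ _
  have hWI : W ≤ I := low_le _ _
  set B := W ⊔ Ideal.span {L} with hB
  have hBh : HomI B := hWh.sup (HomI.span_singleton hL)
  obtain ⟨N, hN⟩ := c.hbase L hL hL0 hLZ
  have hN' : ∀ t, max N (n + 1) ≤ t → hilb B t = k - 1 := by
    intro t ht
    rw [← hN t ((le_max_left _ _).trans ht)]
    have ht1 : n + 1 ≤ t := (le_max_right _ _).trans ht
    obtain ⟨t, rfl⟩ : ∃ s, t = s + 1 := ⟨t - 1, by omega⟩
    refine hilb_congr fun f hf => ⟨fun h => ?_, fun h => ?_⟩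
    · obtain ⟨g, hg, hgm⟩ := mem_sup_lin hWh hL hf h
      exact mem_sup_lin' (mem_compI_of_low (hf.sub (lin_hom hL hg)) ht1 hgm)
    · exact (sup_le_sup_right (compI_le_low _ _) _) h
  have hn1 : hilb B (n + 1) = k - 1 := by
    have h1 := hilb_succ hIh hL hL0 (t := n) (fun f hf h => pI_nzd hL hLZ hf h)
    have h2 := c.hhn1
    change hilb I (n + 1) - hilb I n + 1 = k at h2
    have h3 : hilb B (n + 1) = hilb (I ⊔ Ideal.span {L}) (n + 1) := by
      refine hilb_congr fun f hf => ⟨fun h => (sup_le_sup_right hWI _) h, fun h => ?_⟩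
      obtain ⟨g, hg, hgm⟩ := mem_sup_lin hIh hL hf h
      exact mem_sup_lin' (mem_low (hf.sub (lin_hom hL hg)) le_rfl hgm)
    omega
  have hk := c.hk
  have hkn := c.hkn
  obtain ⟨s, hsf, hsX, hs⟩ := step3 hBh hN' hn1 (by omega)
  refine ⟨insert (Submodule.span K {L}) s, hsf.insert _, ?_, ?_⟩
  · intro p hp
    rcases hp with rfl | hp
    · by_contra! hcon
      have : hilb B (n + 1) = 0 := by
        rw [hilb_eq_zero]
        intro f hf
        obtain ⟨h, hh, rfl⟩ := hom_decomp hf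
        refine B.sum_mem fun i _ => B.mul_mem_right _ ?_
        obtain ⟨a, ha⟩ := Submodule.mem_span_singleton.1 (hcon i)
        rw [← ha, smul_eq_C_mul]
        exact B.mul_mem_left _ (Ideal.mem_sup_right (Ideal.mem_span_singleton_self L))
      omega
    · exact hsX p hp
  · intro l hl hls
    have hlL : ¬ L ∣ l := by
      intro hd
      obtain ⟨g, hg, rfl⟩ := dvd_hom (t := 0) hL hl hd
      have h3 := (totalDegree_eq_zero_iff_eq_C (p := g)).1 (Nat.le_zero.1 hg.totalDegree_le)
      refine hls _ (Set.mem_insert _ _) (Submodule.mem_span_singleton.2 ⟨coeff 0 g, ?_⟩)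
      rw [smul_eq_C_mul, ← h3, mul_comm]
    have hl0 : l ≠ 0 := by rintro rfl; exact hlL (dvd_zero _)
    obtain ⟨h1, h2, h3⟩ := hs l hl hl0 fun p hp => hls p (Set.mem_insert_of_mem _ hp)
    have hdec : ∀ t, n ≤ t → ∀ f : MvPolynomial (Fin (r + 1)) K, f.IsHomogeneous (t + 1) →
        ∃ g g' : MvPolynomial (Fin (r + 1)) K, g.IsHomogeneous t ∧ g'.IsHomogeneous t ∧
          f - L * g - l * g' ∈ W := by
      intro t ht f hf
      obtain ⟨g', hg', hm⟩ := h3 t ht f hf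
      obtain ⟨g, hg, hm'⟩ := mem_sup_lin hWh hL (hf.sub (lin_hom hl hg')) hm
      refine ⟨g, g', hg, hg', ?_⟩
      convert hm' using 1; ring
    have hinj := step4 hWh hL hL0 hl hlL (n := n) (by
      intro t ht f hf hm
      exact mem_low hf ht (pI_nzd hL hLZ hf (hWI hm))) (fun t ht f hf hm => low_gen ht hf hm) h2 hdec
    refine ⟨hWh, ?_, hL, hl, hL0, ?_, h2, hdec, by omega, h1⟩
    · refine Ideal.span_le.2 ?_
      rintro f ⟨hf, hf'⟩
      simp only [Set.mem_iUnion] at hf'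
      obtain ⟨s, hs, hfs⟩ := hf'
      exact mem_low hfs hs (mem_low hfs hs hf)
    · intro f hf
      refine mem_of_comps fun t => hinj t _ (homogeneousComponent_isHomogeneous t f) ?_
      rw [← homComp_mul hL]
      exact hWh _ hf _

section
variable {Z : Finset (Fin (r + 1) → K)} {n k : ℕ} {L l : MvPolynomial (Fin (r + 1)) K}

/-- torsion elements of the ideal of the points are zero mod W -/
theorem tor_inf [Infinite K] (h : GP (WI Z n) n (k - 1) L l) (hLZ : ∀ v ∈ Z, eval v L ≠ 0) :
    ∀ s, ∀ f : MvPolynomial (Fin (r + 1)) K, f.IsHomogeneous s → f ∈ torI (WI Z n) L l →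
      f ∈ pointsIdeal (↑Z : Set (Fin (r + 1) → K)) → f ∈ WI Z n := by
  intro s
  induction s with
  | zero => intro f hf _ hI; exact mem_low hf (by omega) hI
  | succ s ih =>
    intro f hf hm hI
    by_cases hs : s + 1 ≤ n + 1
    · exact mem_low hf hs hI
    · obtain ⟨g, hg, hgt, hgW⟩ := h.tor_dec (by omega) hf hm
      have h1 : f = (f - L * g) + L * g := by ring
      have h2 : L * g = f - (f - L * g) := by ring
      have hgI : g ∈ pointsIdeal (↑Z : Set (Fin (r + 1) → K)) := by
        refine pI_nzd h.hL hLZ hg ?_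
        rw [h2]
        exact Ideal.sub_mem _ hI (low_le _ _ hgW)
      rw [h1]
      exact Ideal.add_mem _ hgW (Ideal.mul_mem_left _ _ (ih g hg hgt hgI))

theorem Ctx.dec_I [Infinite K] (c : Ctx Z n k) (hL : L.IsHomogeneous 1) (hL0 : L ≠ 0)
    (hLZ : ∀ v ∈ Z, eval v L ≠ 0) {t : ℕ} (ht : n + 1 ≤ t) {f : MvPolynomial (Fin (r + 1)) K}
    (hf : f.IsHomogeneous (t + 1)) : ∃ g : MvPolynomial (Fin (r + 1)) K, g.IsHomogeneous t ∧
      f - L * g ∈ pointsIdeal (↑Z : Set (Fin (r + 1) → K)) := by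
  have h1 := hilb_succ (HomI.pI (Z := (↑Z : Set (Fin (r + 1) → K)))) hL hL0 (t := t)
    (fun f hf h => pI_nzd hL hLZ hf h)
  have h2 := c.hhtail (t + 1) (by omega)
  change hilb _ (t + 1) - hilb _ t = 0 at h2
  exact mem_sup_lin HomI.pI hL hf (hilb_eq_zero.1 (by omega) f hf)

theorem exists_lin_sep {v w : Fin (r + 1) → K} (hw0 : w ≠ 0) (h : ∀ c : K, v ≠ c • w) :
    ∃ f : MvPolynomial (Fin (r + 1)) K, f.IsHomogeneous 1 ∧ eval w f = 0 ∧ eval v f ≠ 0 := by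
  obtain ⟨j, hj⟩ := Function.ne_iff.1 hw0
  have : ∃ i, w j * v i - w i * v j ≠ 0 := by
    by_contra! hc
    apply h (v j / w j)
    funext i
    have := hc i
    simp only [Pi.smul_apply, smul_eq_mul, Pi.zero_apply] at *
    field_simp
    linear_combination this
  obtain ⟨i, hi⟩ := this
  refine ⟨C (w j) * X i - C (w i) * X j, ?_, ?_, ?_⟩
  · exact (isHomogeneous_C_mul_X _ _).sub (isHomogeneous_C_mul_X _ _)
  · simp; ring
  · simpa using hi

/-- separators in degree `n+1` -/
theorem Ctx.sep [Infinite K] (c : Ctx Z n k) (hL : L.IsHomogeneous 1) (hL0 : L ≠ 0)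
    (hLZ : ∀ v ∈ Z, eval v L ≠ 0) {z : Fin (r + 1) → K} (hz : z ∈ Z) :
    ∃ f : MvPolynomial (Fin (r + 1)) K, f.IsHomogeneous (n + 1) ∧ eval z f ≠ 0 ∧
      ∀ w ∈ Z, w ≠ z → eval w f = 0 := by
  classical
  have h1 : ∀ w ∈ Z.erase z, ∃ f : MvPolynomial (Fin (r + 1)) K, f.IsHomogeneous 1 ∧
      eval w f = 0 ∧ eval z f ≠ 0 := by
    intro w hw
    rw [Finset.mem_erase] at hw
    exact exists_lin_sep (c.hZ0 w hw.2) (c.hZdist w hw.2 z hz hw.1)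
  choose! F hF hFw hFz using h1
  have key : ∀ j, (∃ f : MvPolynomial (Fin (r + 1)) K, f.IsHomogeneous (n + 1 + j) ∧
      eval z f ≠ 0 ∧ ∀ w ∈ Z, w ≠ z → eval w f = 0) →
      ∃ f : MvPolynomial (Fin (r + 1)) K, f.IsHomogeneous (n + 1) ∧ eval z f ≠ 0 ∧
      ∀ w ∈ Z, w ≠ z → eval w f = 0 := by
    intro j
    induction j with
    | zero => exact fun h => h
    | succ j ih =>
      rintro ⟨f, hf, hfz, hfw⟩
      obtain ⟨g, hg, hgI⟩ := c.dec_I hL hL0 hLZ (t := n + 1 + j) (by omega) hf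
      have hev : ∀ v ∈ Z, eval v f = eval v L * eval v g := by
        intro v hv
        have := pI_eval hgI (v := v) hv
        rw [map_sub, map_mul, sub_eq_zero] at this
        exact this
      refine ih ⟨g, hg, ?_, ?_⟩
      · intro h0; apply hfz; rw [hev z hz, h0, mul_zero]
      · intro w hw hwz
        have := hfw w hw hwz
        rw [hev w hw] at this
        exact (mul_eq_zero.1 this).resolve_left (hLZ w hw)
  have hprod : (∏ w ∈ Z.erase z, F w).IsHomogeneous (Z.erase z).card := by
    have := IsHomogeneous.prod (Z.erase z) F (fun _ => 1) hF
    simpa using this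
  refine key (Z.erase z).card ⟨L ^ (n + 1) * ∏ w ∈ Z.erase z, F w, ?_, ?_, ?_⟩
  · have := (hL.pow (n + 1)).mul hprod
    rwa [one_mul] at this
  · rw [map_mul, map_pow, map_prod]
    exact mul_ne_zero (pow_ne_zero _ (hLZ z hz)) (Finset.prod_ne_zero_iff.2 hFz)
  · intro w hw hwz
    rw [map_mul, map_prod, Finset.prod_eq_zero (Finset.mem_erase.2 ⟨hwz, hw⟩)
      (hFw w (Finset.mem_erase.2 ⟨hwz, hw⟩)), mul_zero]

theorem Ctx.sepC [Infinite K] (c : Ctx Z n k) (h : GP (WI Z n) n (k - 1) L l)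
    (hLZ : ∀ v ∈ Z, eval v L ≠ 0) {z : Fin (r + 1) → K} (hz : z ∈ Z)
    (hzC : ∃ f ∈ torI (WI Z n) L l, eval z f ≠ 0) :
    ∃ f : MvPolynomial (Fin (r + 1)) K, f.IsHomogeneous (n + 1) ∧ f ∈ torI (WI Z n) L l ∧
      eval z f ≠ 0 ∧ ∀ w ∈ Z, w ≠ z → eval w f = 0 := by
  have key : ∀ j, (∃ f : MvPolynomial (Fin (r + 1)) K, f.IsHomogeneous (n + 1 + j) ∧
      f ∈ torI (WI Z n) L l ∧ eval z f ≠ 0 ∧ ∀ w ∈ Z, w ≠ z → eval w f = 0) →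
      ∃ f : MvPolynomial (Fin (r + 1)) K, f.IsHomogeneous (n + 1) ∧ f ∈ torI (WI Z n) L l ∧
      eval z f ≠ 0 ∧ ∀ w ∈ Z, w ≠ z → eval w f = 0 := by
    intro j
    induction j with
    | zero => exact fun h => h
    | succ j ih =>
      rintro ⟨f, hf, hfC, hfz, hfw⟩
      obtain ⟨g, hg, hgC, hgW⟩ := h.tor_dec (s := n + 1 + j) (by omega) hf hfC
      have hev : ∀ v ∈ Z, eval v f = eval v L * eval v g := by
        intro v hv
        have := pI_eval (low_le _ _ hgW) (v := v) hv
        rw [map_sub, map_mul, sub_eq_zero] at this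
        exact this
      refine ih ⟨g, hg, hgC, ?_, ?_⟩
      · intro h0; apply hfz; rw [hev z hz, h0, mul_zero]
      · intro w hw hwz
        have := hfw w hw hwz
        rw [hev w hw] at this
        exact (mul_eq_zero.1 this).resolve_left (hLZ w hw)
  obtain ⟨f, hfC, hfz⟩ := hzC
  obtain ⟨s, hs⟩ : ∃ s, eval z (homogeneousComponent s f) ≠ 0 := by
    by_contra! hc
    apply hfz
    rw [← sum_homogeneousComponent f, map_sum]
    exact Finset.sum_eq_zero fun i _ => hc i
  obtain ⟨g, hg, hgz, hgw⟩ := c.sep h.hL h.hL0 hLZ hz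
  refine key s ⟨g * homogeneousComponent s f, hg.mul (homogeneousComponent_isHomogeneous s f),
    Ideal.mul_mem_left _ _ (h.homC f hfC s), ?_, ?_⟩
  · rw [map_mul]; exact mul_ne_zero hgz hs
  · intro w hw hwz; rw [map_mul, hgw w hw hwz, zero_mul]

/-- low degree forms vanishing on the points of Z where the torsion ideal vanishes are torsion -/
theorem Ctx.mem_C [Infinite K] (c : Ctx Z n k) (h : GP (WI Z n) n (k - 1) L l)
    (hLZ : ∀ v ∈ Z, eval v L ≠ 0) {t : ℕ} (ht : t ≤ n + 1) {g : MvPolynomial (Fin (r + 1)) K}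
    (hg : g.IsHomogeneous t)
    (hgv : ∀ v ∈ Z, (∀ f ∈ torI (WI Z n) L l, eval v f = 0) → eval v g = 0) :
    g ∈ torI (WI Z n) L l := by
  classical
  let Z2 := Z.filter fun v => ∃ f ∈ torI (WI Z n) L l, eval v f ≠ 0
  have hsep : ∀ z ∈ Z2, _ := fun z hz =>
    c.sepC h hLZ (z := z) (Finset.mem_filter.1 hz).1 (Finset.mem_filter.1 hz).2
  choose! u hu huC huz huw using hsep
  obtain ⟨j, hj⟩ : ∃ j, n + 1 = j + t := ⟨n + 1 - t, by omega⟩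
  have hg' : (L ^ j * g).IsHomogeneous (n + 1) := by
    have := (h.hL.pow j).mul hg
    rwa [one_mul, ← hj] at this
  let q := ∑ z ∈ Z2, C (eval z (L ^ j * g) / eval z (u z)) * u z
  have hq : q.IsHomogeneous (n + 1) := by
    apply IsHomogeneous.sum
    intro z hz
    have := (isHomogeneous_C (Fin (r + 1)) (eval z (L ^ j * g) / eval z (u z))).mul (hu z hz)
    rwa [zero_add] at this
  have hqC : q ∈ torI (WI Z n) L l :=
    Ideal.sum_mem _ fun z hz => Ideal.mul_mem_left _ _ (huC z hz)
  have hI : L ^ j * g - q ∈ pointsIdeal (↑Z : Set (Fin (r + 1) → K)) := by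
    rw [mem_pI_hom (hg'.sub hq)]
    intro v hv
    have hv : v ∈ Z := hv
    rw [map_sub, sub_eq_zero]
    by_cases hv2 : v ∈ Z2
    · simp only [q]
      rw [map_sum, Finset.sum_eq_single v]
      · rw [map_mul (eval v) (C _), eval_C, div_mul_cancel₀ _ (huz v hv2)]
      · intro z hz hzv
        rw [map_mul (eval v) (C _), huw z hz v hv hzv.symm, mul_zero]
      · exact fun hn => absurd hv2 hn
    · have h1 : eval v g = 0 := hgv v hv fun f hf => by
        by_contra hne
        exact hv2 (Finset.mem_filter.2 ⟨hv, f, hf, hne⟩)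
      rw [map_mul, h1, mul_zero]
      simp only [q]
      rw [map_sum]
      refine (Finset.sum_eq_zero fun z hz => ?_).symm
      have hzv : v ≠ z := by rintro rfl; exact hv2 hz
      rw [map_mul (eval v) (C _), huw z hz v hv hzv, mul_zero]
  have h1 : L ^ j * g - q ∈ torI (WI Z n) L l :=
    le_torI _ _ _ (mem_low (hg'.sub hq) le_rfl hI)
  have h2 := Ideal.add_mem _ h1 hqC
  rw [sub_add_cancel] at h2
  exact h.torLpow h2

end

end PB

namespace PB

variable {K : Type*} [Field K] {σ : Type*}

theorem krull_le_of_integral {A S : Type*} [CommRing A] [CommRing S] (f : A →+* S)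
    (hf : f.IsIntegral) : ringKrullDim S ≤ ringKrullDim A := by
  let _ := f.toAlgebra
  have : Algebra.IsIntegral A S := ⟨hf⟩
  refine Order.krullDim_le_of_strictMono (PrimeSpectrum.comap (algebraMap A S)) ?_
  intro P Q hPQ
  exact Ideal.IsIntegral.comap_lt_comap (R := A) (I := P.asIdeal) (J := Q.asIdeal) hPQ

theorem krull_ge_of_integral {A S : Type*} [CommRing A] [CommRing S] (f : A →+* S)
    (hf : f.IsIntegral) (hi : Function.Injective f) : ringKrullDim A ≤ ringKrullDim S := by
  let _ := f.toAlgebra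
  have : Algebra.IsIntegral A S := ⟨hf⟩
  have hi' : Function.Injective (algebraMap A S) := hi
  refine iSup_le fun l => ?_
  obtain ⟨Q, -, hQ, h⟩ := Ideal.exists_ideal_over_prime_of_isIntegral
    (RelSeries.head l).asIdeal (⊥ : Ideal S) (by
      intro a ha
      have : algebraMap A S a = 0 := ha
      rw [(map_eq_zero_iff _ hi').1 this]; exact zero_mem _)
  have : Q.LiesOver (RelSeries.head l).asIdeal := ⟨h.symm⟩
  obtain ⟨l', h, -⟩ := Ideal.exists_ltSeries_of_hasGoingUp (S := S) l Q
  rw [← h]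
  exact le_iSup (fun l : LTSeries (PrimeSpectrum S) => ((l.length : ℕ) : WithBot ℕ∞)) l'

/-- The structure map to the quotient. -/
noncomputable def psi (P : Ideal (MvPolynomial σ K)) (L l : MvPolynomial σ K) :
    MvPolynomial (Fin 2) K →+* (MvPolynomial σ K ⧸ P) :=
  (Ideal.Quotient.mk P).comp (phi L l : MvPolynomial (Fin 2) K →+* MvPolynomial σ K)

theorem psi_apply (P : Ideal (MvPolynomial σ K)) (L l : MvPolynomial σ K) (t) :
    psi P L l t = Ideal.Quotient.mk P (phi L l t) := rfl

namespace GP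

variable {W P : Ideal (MvPolynomial σ K)} {n d : ℕ} {L l : MvPolynomial σ K}

theorem finite_aux [Finite σ] (h : GP W n d L l) {S : Type*} [CommRing S]
    [Algebra (MvPolynomial (Fin 2) K) S] (π : MvPolynomial σ K →+* S) (hπ : Function.Surjective π)
    (ha : ∀ t, algebraMap (MvPolynomial (Fin 2) K) S t = π (phi L l t))
    (hW : ∀ f ∈ W, π f = 0) : Module.Finite (MvPolynomial (Fin 2) K) S := by
  choose B hB using fun t : ℕ => (Submodule.fg_top _).1 (finHom (K := K) (σ := σ) t).fg_top
  classical
  let U : Finset S := (Finset.range (n + 1)).biUnion fun t => (B t).image π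
  refine ⟨U, ?_⟩
  rw [eq_top_iff]
  set N := Submodule.span (MvPolynomial (Fin 2) K) (U : Set S) with hN
  have hsm : ∀ (t : MvPolynomial (Fin 2) K) (f : MvPolynomial σ K),
      π f ∈ N → π (phi L l t * f) ∈ N := by
    intro t f hf
    have := N.smul_mem t hf
    rwa [Algebra.smul_def, ha, ← map_mul] at this
  have key : ∀ s, ∀ f : MvPolynomial σ K, f.IsHomogeneous s → π f ∈ N := by
    intro s
    induction s using Nat.strong_induction_on with
    | _ s ih =>
    intro f hf
    by_cases hs : s ≤ n
    · have hf' : f ∈ Submodule.span K (B s : Set (MvPolynomial σ K)) := by rw [hB]; exact hf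
      refine Submodule.span_induction ?_ ?_ ?_ ?_ hf'
      · intro x hx
        refine Submodule.subset_span ?_
        simp only [U, Finset.coe_biUnion, Finset.coe_image, Set.mem_iUnion]
        exact ⟨s, by simpa using Nat.lt_succ_of_le hs, x, hx, rfl⟩
      · simp
      · intro x y _ _ hx hy; rw [map_add]; exact N.add_mem hx hy
      · intro a x _ hx
        have := hsm (C a) x hx
        rwa [MvPolynomial.smul_eq_C_mul, show (C a : MvPolynomial σ K) = phi L l (C a) by
          simp [phi]]
    · obtain ⟨s, rfl⟩ : ∃ t, s = t + 1 := ⟨s - 1, by omega⟩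
      obtain ⟨g, g', hg, hg', hm⟩ := h.dec s (by omega) f hf
      have h1 := hsm (X 0) _ (ih s (by omega) g hg)
      have h2 := hsm (X 1) _ (ih s (by omega) g' hg')
      have h3 : π f = π (L * g) + π (l * g') := by
        have := hW _ hm
        rw [map_sub, map_sub, sub_sub, sub_eq_zero] at this
        exact this
      rw [h3]
      rw [phi_X0] at h1; rw [phi_X1] at h2
      exact N.add_mem h1 h2
  intro x _
  obtain ⟨f, rfl⟩ := hπ x
  rw [← sum_homogeneousComponent f, map_sum]
  exact N.sum_mem fun i _ => key i _ (homogeneousComponent_isHomogeneous i f)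

theorem finite [Finite σ] (h : GP W n d L l) (hP : W ≤ P) : (psi P L l).Finite :=
  @finite_aux K _ σ W n d L l _ h _ _ (psi P L l).toAlgebra (Ideal.Quotient.mk P)
    Ideal.Quotient.mk_surjective (fun _ => rfl) fun _ hf => Ideal.Quotient.eq_zero_iff_mem.2 (hP hf)

theorem integral [Finite σ] (h : GP W n d L l) (hP : W ≤ P) : (psi P L l).IsIntegral :=
  (h.finite hP).to_isIntegral

theorem dim_T : ringKrullDim (MvPolynomial (Fin 2) K) = 2 := by
  rw [MvPolynomial.ringKrullDim_of_isNoetherianRing, ringKrullDim_eq_zero_of_field]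
  simp

theorem dim_le [Finite σ] (h : GP W n d L l) (hP : W ≤ P) :
    ringKrullDim (MvPolynomial σ K ⧸ P) ≤ 2 :=
  (krull_le_of_integral _ (h.integral hP)).trans_eq dim_T

theorem dim_eq [Finite σ] (h : GP W n d L l) (hP : W ≤ P)
    (hi : ∀ t, phi L l t ∈ P → t = 0) :
    ringKrullDim (MvPolynomial σ K ⧸ P) = 2 := by
  refine le_antisymm (h.dim_le hP) (dim_T.symm.trans_le (krull_ge_of_integral _ (h.integral hP) ?_))
  rw [injective_iff_map_eq_zero]
  intro t ht
  exact hi t (Ideal.Quotient.eq_zero_iff_mem.1 ht)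

theorem dim_conv [Finite σ] (h : GP W n d L l) (hP : W ≤ P)
    (hd : ringKrullDim (MvPolynomial σ K ⧸ P) = 2) : ∀ t, phi L l t ∈ P → t = 0 := by
  intro t ht
  by_contra ht0
  have h1 := ringKrullDim_quotient_succ_le_of_nonZeroDivisor (mem_nonZeroDivisors_of_ne_zero ht0)
  rw [dim_T] at h1
  let f : (MvPolynomial (Fin 2) K ⧸ Ideal.span {t}) →+* (MvPolynomial σ K ⧸ P) :=
    Ideal.Quotient.lift _ (psi P L l) (by
      intro a ha
      obtain ⟨b, rfl⟩ := Ideal.mem_span_singleton'.1 ha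
      rw [map_mul, psi_apply P L l t, Ideal.Quotient.eq_zero_iff_mem.2 ht, mul_zero])
  have hf : f.IsIntegral := by
    refine RingHom.IsIntegral.tower_top (Ideal.Quotient.mk _) f ?_
    have : f.comp (Ideal.Quotient.mk _) = psi P L l := by ext <;> simp [f]
    rw [this]; exact h.integral hP
  have h2 := krull_le_of_integral f hf
  rw [hd] at h2
  have h3 : (2 : WithBot ℕ∞) + 1 ≤ 2 := le_trans (by gcongr) h1
  exact absurd h3 (by decide)

theorem dim_W [Finite σ] (h : GP W n d L l) : ringKrullDim (MvPolynomial σ K ⧸ W) = 2 :=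
  h.dim_eq le_rfl fun _ ht => h.phi_inj ht

end GP
end PB

namespace PB

variable {K : Type*} [Field K] {σ : Type*}

section
attribute [local instance] MvPolynomial.gradedAlgebra

theorem homI_iff (I : Ideal (MvPolynomial σ K)) :
    HomI I ↔ I.IsHomogeneous (homogeneousSubmodule σ K) := by
  constructor
  · intro h i f hf
    have := h f hf i
    rwa [← decomposition.decompose'_apply] at this
  · intro h f hf i
    have := h i hf
    rw [← decomposition.decompose'_apply]
    exact this

theorem HomI.radical {I : Ideal (MvPolynomial σ K)} (h : HomI I) : HomI I.radical :=
  (homI_iff _).2 ((homI_iff _).1 h).radical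

theorem HomI.minPrime {I P : Ideal (MvPolynomial σ K)} (h : HomI I) (hP : P ∈ I.minimalPrimes) :
    HomI P := by
  have hp : P.IsPrime := hP.1.1
  set Q := (P.homogeneousCore (homogeneousSubmodule σ K)).toIdeal with hQ
  have h1 : Q ≤ P := Ideal.toIdeal_homogeneousCore_le _ _
  have h2 : Q.IsPrime := hp.homogeneousCore
  have h3 : I ≤ Q := by
    rw [← ((homI_iff _).1 h).toIdeal_homogeneousCore_eq_self]
    exact Ideal.homogeneousCore_mono _ hP.1.2
  have h4 : Q = P := le_antisymm h1 (hP.2 ⟨h2, h3⟩ h1)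
  rw [← h4, homI_iff]
  exact HomogeneousIdeal.isHomogeneous _
end

theorem phi_comp {L l : MvPolynomial σ K} (hL : L.IsHomogeneous 1) (hl : l.IsHomogeneous 1)
    (t : MvPolynomial (Fin 2) K) (i : ℕ) :
    homogeneousComponent i (phi L l t) = phi L l (homogeneousComponent i t) := by
  conv_lhs => rw [← sum_homogeneousComponent t]
  rw [map_sum, map_sum]
  have : ∀ j, homogeneousComponent i (phi L l (homogeneousComponent j t))
      = if j = i then phi L l (homogeneousComponent i t) else 0 := by
    intro j
    rw [homogeneousComponent_of_mem
      (phi_hom hL hl (homogeneousComponent_isHomogeneous j t))]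
    by_cases hij : j = i
    · subst hij; simp
    · rw [if_neg hij, if_neg (fun h => hij h.symm)]
  simp only [this]
  rw [Finset.sum_ite_eq']
  split_ifs with h
  · rfl
  · rw [homogeneousComponent_eq_zero, map_zero]
    simpa using h

namespace GP

variable {W P : Ideal (MvPolynomial σ K)} {n d : ℕ} {L l : MvPolynomial σ K}

theorem tor_le_prime (hp : P.IsPrime) (hP : W ≤ P) (hi : ∀ t, phi L l t ∈ P → t = 0) :
    torI W L l ≤ P := by
  rintro f ⟨e, t, -, ht0, hm⟩
  exact (hp.mem_or_mem (hP hm)).resolve_left fun h => ht0 (hi t h)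

theorem tor_le_curve [Finite σ] (h : GP W n d L l) : torI W L l ≤ curvePart W :=
  le_sInf fun _ hP => tor_le_prime hP.1.1.1 hP.1.1.2 (h.dim_conv hP.1.1.2 hP.2)

theorem curve_le [Finite σ] (h : GP W n d L l) : curvePart W ≤ (torI W L l).radical := by
  rw [← Ideal.sInf_minimalPrimes]
  refine le_sInf fun Q hQ => ?_
  have hQp : Q.IsPrime := hQ.1.1
  have hQi : ∀ t, phi L l t ∈ Q → t = 0 := by
    intro t ht
    by_contra ht0
    obtain ⟨i, hi⟩ : ∃ i, homogeneousComponent i t ≠ 0 := by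
      by_contra! hc
      apply ht0
      rw [← sum_homogeneousComponent t]
      exact Finset.sum_eq_zero fun i _ => hc i
    have h1 := (h.homC.minPrime hQ) _ ht i
    rw [phi_comp h.hL h.hl] at h1
    obtain ⟨y, hy, h2⟩ := Ideal.exists_mul_mem_of_mem_minimalPrimes hQ h1
    obtain ⟨e, u, hu, hu0, h3⟩ := h2
    refine hy ⟨e + i, u * homogeneousComponent i t,
      hu.mul (homogeneousComponent_isHomogeneous i t), mul_ne_zero hu0 hi, ?_⟩
    rw [map_mul, mul_assoc]; exact h3
  obtain ⟨P, hP, hPQ⟩ := Ideal.exists_minimalPrimes_le ((le_torI W L l).trans hQ.1.2)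
  refine le_trans (sInf_le ⟨hP, h.dim_eq hP.1.2 fun t ht => hQi t (hPQ ht)⟩) hPQ

theorem homCurve (h : HomI W) : HomI (curvePart W) := by
  intro f hf i
  simp only [curvePart, Submodule.mem_sInf] at hf ⊢
  exact fun P hP => h.minPrime hP.1 _ (hf P hP) i

theorem eval_curve [Finite σ] (h : GP W n d L l) (v : σ → K) :
    (∀ f ∈ torI W L l, eval v f = 0) ↔ (∀ f ∈ curvePart W, eval v f = 0) := by
  constructor
  · intro h1 f hf
    obtain ⟨m, hm⟩ := h.curve_le hf
    have := h1 _ hm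
    rw [map_pow] at this
    exact eq_zero_of_pow_eq_zero this
  · exact fun h1 f hf => h1 f (h.tor_le_curve hf)

end GP
end PB

namespace PB

theorem sep_der {F A M : Type*} [CommRing F] [CommRing A] [Algebra F A] [AddCommGroup M]
    [Module A M] [Module F M] (D : Derivation F A M) {q : Polynomial F} (hq : q.Separable)
    (y : A) (h2 : Polynomial.aeval y q = 0) : D y = 0 := by
  obtain ⟨a, b, hab⟩ := hq
  have h3 := congrArg (Polynomial.aeval y) hab
  rw [map_add, map_mul, h2, mul_zero, zero_add, map_mul, map_one] at h3
  have h4 := Derivation.map_aeval D q y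
  rw [h2, map_zero] at h4
  rw [← one_smul A (D y), ← h3, mul_smul, ← h4, smul_zero]

open TensorProduct in
theorem lemA {T M ι : Type*} [CommRing T] [IsDomain T] [CommRing M] [Algebra T M]
    [Module.Finite T M] (x : ι → M) (hgen : Algebra.adjoin T (Set.range x) = ⊤)
    (hx : ∀ j, ∃ g : Polynomial T, (g.map (algebraMap T (FractionRing T))).Separable ∧
      ∃ t : T, t ≠ 0 ∧ t • Polynomial.aeval (x j) g = 0)
    (f : M) (m : ℕ) (t : T) (ht : t ≠ 0) (hf : t • f ^ m = 0) : ∃ t' : T, t' ≠ 0 ∧ t' • f = 0 := by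
  set F := FractionRing T
  have tors : ∀ y : M, (1 : F) ⊗ₜ[T] y = 0 ↔ ∃ t : T, t ≠ 0 ∧ t • y = 0 := by
    intro y
    have := IsLocalizedModule.eq_zero_iff (nonZeroDivisors T) (TensorProduct.mk T F M 1) (m := y)
    rw [TensorProduct.mk_apply] at this
    rw [this]
    constructor
    · rintro ⟨s, hs⟩; exact ⟨s, nonZeroDivisors.coe_ne_zero s, hs⟩
    · rintro ⟨s, h0, hs⟩; exact ⟨⟨s, mem_nonZeroDivisors_of_ne_zero h0⟩, hs⟩
  have hD0 : ∀ m : M, KaehlerDifferential.D F (F ⊗[T] M) (1 ⊗ₜ[T] m) = 0 := by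
    intro m
    have hm : m ∈ Algebra.adjoin T (Set.range x) := by rw [hgen]; trivial
    induction hm using Algebra.adjoin_induction with
    | mem y hy =>
      obtain ⟨j, rfl⟩ := hy
      obtain ⟨g, hg, ht⟩ := hx j
      have h1 := (tors _).2 ht
      set y : F ⊗[T] M := (1 : F) ⊗ₜ[T] x j with hy
      have h2 : Polynomial.aeval y (g.map (algebraMap T F)) = 0 := by
        rw [Polynomial.aeval_map_algebraMap, hy]
        have := Polynomial.aeval_algHom_apply (Algebra.TensorProduct.includeRight : M →ₐ[T] F ⊗[T] M) (x j) g
        simp only [Algebra.TensorProduct.includeRight_apply] at this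
        rw [this, h1]
      exact sep_der _ hg _ h2
    | algebraMap r =>
      have : (1 : F) ⊗ₜ[T] (algebraMap T M r) = algebraMap F (F ⊗[T] M) (algebraMap T F r) := by
        rw [Algebra.TensorProduct.algebraMap_apply, Algebra.algebraMap_eq_smul_one,
          TensorProduct.tmul_smul, TensorProduct.smul_tmul', Algebra.algebraMap_eq_smul_one]
        simp [Algebra.smul_def]
      rw [this, Derivation.map_algebraMap]
    | add a b _ _ ha hb => rw [TensorProduct.tmul_add, map_add, ha, hb, add_zero]
    | mul a b _ _ ha hb =>
      have : (1 : F) ⊗ₜ[T] (a * b) = (1 ⊗ₜ[T] a) * (1 ⊗ₜ[T] b) := by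
        rw [Algebra.TensorProduct.tmul_mul_tmul, one_mul]
      rw [this, Derivation.leibniz, ha, hb, smul_zero, smul_zero, add_zero]
  have hD : ∀ z : F ⊗[T] M, KaehlerDifferential.D F (F ⊗[T] M) z = 0 := by
    intro z
    induction z using TensorProduct.induction_on with
    | zero => simp
    | tmul a m =>
      have : a ⊗ₜ[T] m = a • ((1 : F) ⊗ₜ[T] m) := by rw [TensorProduct.smul_tmul', smul_eq_mul, mul_one]
      rw [this, Derivation.map_smul, hD0, smul_zero]
    | add a b ha hb => rw [map_add, ha, hb, add_zero]
  have hU : Algebra.FormallyUnramified F (F ⊗[T] M) := by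
    rw [Algebra.formallyUnramified_iff]
    have h := KaehlerDifferential.span_range_derivation F (F ⊗[T] M)
    have h2 : Submodule.span (F ⊗[T] M) (Set.range (KaehlerDifferential.D F (F ⊗[T] M))) = ⊥ := by
      rw [Submodule.span_eq_bot]; rintro _ ⟨z, rfl⟩; exact hD z
    rw [h2] at h
    exact (Submodule.subsingleton_iff (F ⊗[T] M)).1 (subsingleton_of_bot_eq_top h)
  have hred : IsReduced (F ⊗[T] M) := Algebra.FormallyUnramified.isReduced_of_field F _
  refine (tors f).1 (hred.eq_zero _ ⟨m, ?_⟩)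
  rw [Algebra.TensorProduct.tmul_pow, one_pow]
  exact (tors _).2 ⟨t, ht, hf⟩

theorem lemC (K E : Type*) [Field K] [Field E] [Algebra K E] [PerfectField K]
    [Algebra.EssFiniteType K E] (u v : E) (halg : Algebra.IsAlgebraic (Algebra.adjoin K {u, v}) E) :
    Module.Finite E (Ω[E⁄K]) ∧ Module.finrank E (Ω[E⁄K]) ≤ 2 := by
  obtain ⟨s, hs, hsep⟩ := exists_isTranscendenceBasis_and_isSeparable_of_perfectField K E
  have hc : s.card ≤ 2 := by
    have h1 := hs.cardinalMk_eq_trdeg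
    have h2 := Algebra.IsAlgebraic.trdeg_le_cardinalMk (R := K) (A := E) (s := {u, v})
    rw [← h1] at h2
    have h3 : Cardinal.mk ({u, v} : Set E) ≤ 2 := by
      refine Cardinal.mk_insert_le.trans ?_
      rw [Cardinal.mk_singleton]; exact one_add_one_eq_two.le
    have h4 := h2.trans h3
    rw [Cardinal.mk_coe_finset] at h4
    exact_mod_cast h4
  set N := Submodule.span E (KaehlerDifferential.D K E '' (s : Set E)) with hN
  have hNtop : N = ⊤ := by
    let d : Derivation K E (Ω[E⁄K] ⧸ N) := N.mkQ.compDer (KaehlerDifferential.D K E)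
    set F := IntermediateField.adjoin K (s : Set E) with hF
    have hdF : ∀ x ∈ F, d x = 0 := by
      intro x hx
      induction hx using IntermediateField.adjoin_induction with
      | mem x hx =>
        change N.mkQ _ = 0
        rw [Submodule.mkQ_apply, Submodule.Quotient.mk_eq_zero]
        exact Submodule.subset_span ⟨x, hx, rfl⟩
      | algebraMap x => exact d.map_algebraMap x
      | add x y _ _ hx hy => rw [map_add, hx, hy, add_zero]
      | inv x _ hx => rw [Derivation.leibniz_inv, hx, smul_zero]
      | mul x y _ _ hx hy => rw [Derivation.leibniz, hx, hy, smul_zero, smul_zero, add_zero]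
    let d' : Derivation F E (Ω[E⁄K] ⧸ N) := Derivation.mk'
      { toFun := d, map_add' := d.map_add, map_smul' := by
          intro c y
          rw [RingHom.id_apply, Algebra.smul_def, Derivation.leibniz]
          have : d (algebraMap F E c) = 0 := hdF _ c.2
          rw [this, smul_zero, add_zero]; exact algebraMap_smul _ _ _ } (fun a b => d.leibniz a b)
    have hU : Algebra.FormallyUnramified F E := Algebra.FormallyUnramified.of_isSeparable F E
    have hsub := (Algebra.formallyUnramified_iff F E).1 hU
    have hd : ∀ y, d y = 0 := by
      intro y
      have h1 := Derivation.liftKaehlerDifferential_comp_D d' y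
      rw [Subsingleton.elim (KaehlerDifferential.D F E y) 0, map_zero] at h1
      exact h1.symm
    rw [eq_top_iff, ← KaehlerDifferential.span_range_derivation, Submodule.span_le]
    rintro _ ⟨y, rfl⟩
    have := hd y
    change N.mkQ _ = 0 at this
    rwa [Submodule.mkQ_apply, Submodule.Quotient.mk_eq_zero] at this
  classical
  have hN' : Submodule.span E ((s.image (KaehlerDifferential.D K E) : Finset _) : Set (Ω[E⁄K])) = ⊤ := by
    rw [Finset.coe_image]; exact hNtop
  refine ⟨⟨_, hN'⟩, ?_⟩
  have h5 := finrank_span_finset_le_card (R := E) (s.image (KaehlerDifferential.D K E))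
  rw [Set.finrank, hN', finrank_top] at h5
  exact h5.trans (Finset.card_image_le.trans hc)

theorem lemB (K T E : Type*) [Field K] [CommRing T] [IsDomain T] [Field E] [Algebra K T]
    [Algebra K E] [Algebra T E] [IsScalarTower K T E] [FaithfulSMul T E]
    [Algebra.EssFiniteType K E] (u v : T)
    (hspan : Submodule.span E {KaehlerDifferential.D K E (algebraMap T E u),
      KaehlerDifferential.D K E (algebraMap T E v)} = ⊤)
    (hIntg : IsIntegrallyClosed T) (x : E) (hx : IsIntegral T x) :
    ((minpoly T x).map (algebraMap T (FractionRing T))).Separable := by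
  let _ : Algebra (FractionRing T) E := FractionRing.liftAlgebra T E
  have : IsScalarTower K (FractionRing T) E := by
    refine IsScalarTower.of_algebraMap_eq fun c => ?_
    rw [IsScalarTower.algebraMap_apply K T (FractionRing T), ← IsScalarTower.algebraMap_apply T (FractionRing T) E,
      ← IsScalarTower.algebraMap_apply]
  have : Algebra.EssFiniteType (FractionRing T) E := Algebra.EssFiniteType.of_comp K (FractionRing T) E
  have hU : Algebra.FormallyUnramified (FractionRing T) E := by
    rw [Algebra.formallyUnramified_iff]
    have hs := KaehlerDifferential.map_surjective K (FractionRing T) E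
    set m := KaehlerDifferential.map K (FractionRing T) E E with hm
    have hz : ∀ w : T, m (KaehlerDifferential.D K E (algebraMap T E w)) = 0 := by
      intro w
      rw [hm, KaehlerDifferential.map_D, Algebra.algebraMap_self, RingHom.id_apply,
        IsScalarTower.algebraMap_apply T (FractionRing T) E]
      exact Derivation.map_algebraMap _ _
    have hk : ⊤ ≤ LinearMap.ker m := by
      rw [← hspan, Submodule.span_le]
      rintro _ (rfl | rfl) <;> exact hz _
    refine subsingleton_of_forall_eq 0 fun y => ?_
    obtain ⟨w, rfl⟩ := hs y
    exact hk (Submodule.mem_top)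
  have hsep := Algebra.FormallyUnramified.isSeparable (FractionRing T) E
  have h1 := hsep.isSeparable' x
  rw [IsSeparable] at h1
  have h2 := minpoly.isIntegrallyClosed_eq_field_fractions (R := T) (FractionRing T) E hx
  rw [Algebra.algebraMap_self, RingHom.id_apply] at h2
  rwa [← h2]
end PB

namespace PB

variable {K : Type*} [Field K] {σ : Type*}

/-- `E` is the residue field of the prime `P`. -/
structure FD (P : Ideal (MvPolynomial σ K)) {E : Type*} [Field E] [Algebra K E]
    (α : MvPolynomial σ K →ₐ[K] E) : Prop where
  ker : ∀ f, α f = 0 ↔ f ∈ P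
  frac : ∀ e : E, ∃ a b, e = α a * (α b)⁻¹
  ess : Algebra.EssFiniteType K E

theorem FD.exists [Finite σ] (P : Ideal (MvPolynomial σ K)) (hP : P.IsPrime) :
    FD P (E := FractionRing (MvPolynomial σ K ⧸ P))
      ((IsScalarTower.toAlgHom K (MvPolynomial σ K ⧸ P) (FractionRing (MvPolynomial σ K ⧸ P))).comp
        (Ideal.Quotient.mkₐ K P)) where
  ker f := by
    simp only [AlgHom.comp_apply, IsScalarTower.coe_toAlgHom']
    rw [IsFractionRing.to_map_eq_zero_iff, Ideal.Quotient.mkₐ_eq_mk, Ideal.Quotient.eq_zero_iff_mem]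
  frac e := by
    obtain ⟨a, b, -, rfl⟩ := IsFractionRing.div_surjective (A := MvPolynomial σ K ⧸ P) e
    obtain ⟨a, rfl⟩ := Ideal.Quotient.mk_surjective a
    obtain ⟨b, rfl⟩ := Ideal.Quotient.mk_surjective b
    exact ⟨a, b, div_eq_mul_inv _ _⟩
  ess := inferInstance

theorem FD.span {P : Ideal (MvPolynomial σ K)} {E : Type*} [Field E] [Algebra K E]
    {α : MvPolynomial σ K →ₐ[K] E} (h : FD P α) :
    Submodule.span E (Set.range fun j => KaehlerDifferential.D K E (α (X j))) = ⊤ := by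
  set N := Submodule.span E (Set.range fun j => KaehlerDifferential.D K E (α (X j))) with hN
  let d : Derivation K E (Ω[E⁄K] ⧸ N) := N.mkQ.compDer (KaehlerDifferential.D K E)
  have h1 : ∀ f, d (α f) = 0 := by
    intro f
    induction f using MvPolynomial.induction_on with
    | C a =>
      rw [show (C a : MvPolynomial σ K) = algebraMap K _ a from rfl, AlgHom.commutes]
      exact d.map_algebraMap a
    | add p q hp hq => rw [map_add, map_add, hp, hq, add_zero]
    | mul_X p j hp =>
      have : d (α (X j)) = 0 := by
        change N.mkQ _ = 0
        rw [Submodule.mkQ_apply, Submodule.Quotient.mk_eq_zero]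
        exact Submodule.subset_span ⟨j, rfl⟩
      rw [map_mul, Derivation.leibniz, hp, this, smul_zero, smul_zero, add_zero]
  have hd : ∀ y, d y = 0 := by
    intro y
    obtain ⟨a, b, rfl⟩ := h.frac y
    rw [Derivation.leibniz, Derivation.leibniz_inv, h1, h1, smul_zero, smul_zero, smul_zero, add_zero]
  rw [eq_top_iff, ← KaehlerDifferential.span_range_derivation, Submodule.span_le]
  rintro _ ⟨y, rfl⟩
  have := hd y
  change N.mkQ _ = 0 at this
  rwa [Submodule.mkQ_apply, Submodule.Quotient.mk_eq_zero] at this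

theorem GP.int_elt [Finite σ] {W P : Ideal (MvPolynomial σ K)} {n d : ℕ} {L l : MvPolynomial σ K}
    (h : GP W n d L l) (hP : W ≤ P) (f : MvPolynomial σ K) :
    ∃ p : Polynomial (MvPolynomial (Fin 2) K), p.Monic ∧
      p.eval₂ (phi L l : MvPolynomial (Fin 2) K →+* MvPolynomial σ K) f ∈ P := by
  obtain ⟨p, hp, h1⟩ := h.integral hP (Ideal.Quotient.mk P f)
  refine ⟨p, hp, ?_⟩
  rw [← Ideal.Quotient.eq_zero_iff_mem, Polynomial.hom_eval₂]
  exact h1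

theorem GP.fd_alg [Finite σ] {W P : Ideal (MvPolynomial σ K)} {n d : ℕ} {L l : MvPolynomial σ K}
    (h : GP W n d L l) (hP : W ≤ P) {E : Type*} [Field E] [Algebra K E]
    {α : MvPolynomial σ K →ₐ[K] E} (hα : FD P α) :
    Algebra.IsAlgebraic (Algebra.adjoin K {α L, α l}) E := by
  let A := Algebra.adjoin K ({α L, α l} : Set E)
  let β : MvPolynomial (Fin 2) K →ₐ[K] A := aeval
    ![⟨α L, Algebra.subset_adjoin (by simp)⟩, ⟨α l, Algebra.subset_adjoin (by simp)⟩]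
  have hβ : (A.val.comp β) = α.comp (phi L l) := by
    ext i; fin_cases i <;> simp [β, phi, A]
  have h1 : ∀ f, IsAlgebraic A (α f) := by
    intro f
    obtain ⟨p, hp, hm⟩ := h.int_elt hP f
    refine IsIntegral.isAlgebraic ⟨p.map (β : MvPolynomial (Fin 2) K →+* A), hp.map _, ?_⟩
    rw [Polynomial.eval₂_map]
    have h2 := (hα.ker _).2 hm
    change (α : MvPolynomial σ K →+* E) _ = 0 at h2
    rw [Polynomial.hom_eval₂] at h2
    have hc : (algebraMap A E).comp (β : MvPolynomial (Fin 2) K →+* A) =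
        (α : MvPolynomial σ K →+* E).comp (phi L l : MvPolynomial (Fin 2) K →+* MvPolynomial σ K) :=
      RingHom.ext fun t => DFunLike.congr_fun hβ t
    rw [hc]; exact h2
  refine ⟨fun e => ?_⟩
  obtain ⟨a, b, rfl⟩ := hα.frac e
  exact (h1 a).mul (h1 b).inv

theorem choose_span {R E V : Type*} [Field E] [AddCommGroup V]
    [Module E V] [Module.Finite E V] (δ : R → V) (hfin : Module.finrank E V ≤ 2) {L l : R}
    (hL : (⊤ : Submodule E V) ≠ ⊥ → δ L ≠ 0)
    (hl : Submodule.span E {δ L} ≠ ⊤ → δ l ∉ Submodule.span E {δ L}) :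
    Submodule.span E {δ L, δ l} = ⊤ := by
  by_cases h0 : (⊤ : Submodule E V) = ⊥
  · rw [eq_top_iff, h0]; exact bot_le
  by_cases h1 : Submodule.span E {δ L} = ⊤
  · rw [eq_top_iff, ← h1]; exact Submodule.span_mono (by simp)
  have h2 := hl h1
  have h3 : LinearIndependent E ![δ L, δ l] := by
    rw [LinearIndependent.pair_iff' (hL h0)]
    intro a ha
    exact h2 (Submodule.mem_span_singleton.2 ⟨a, ha⟩)
  have h4 := h3.span_eq_top_of_card_eq_finrank' (by
    have := h3.fintype_card_le_finrank
    simp at this ⊢; omega)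
  simpa [Matrix.range_cons, Set.pair_comm] using h4

/-- The differential of the residue field. -/
noncomputable def dl {E : Type*} [Field E] [Algebra K E] (α : MvPolynomial σ K →ₐ[K] E) :
    MvPolynomial σ K →ₗ[K] Ω[E⁄K] :=
  (KaehlerDifferential.D K E).toLinearMap ∘ₗ α.toLinearMap

theorem dl_apply {E : Type*} [Field E] [Algebra K E] (α : MvPolynomial σ K →ₐ[K] E) (f) :
    dl α f = KaehlerDifferential.D K E (α f) := rfl

theorem FD.exists_notMem {P : Ideal (MvPolynomial σ K)} {E : Type*} [Field E] [Algebra K E]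
    {α : MvPolynomial σ K →ₐ[K] E} (h : FD P α) (N : Submodule E (Ω[E⁄K])) (hN : N ≠ ⊤) :
    ∃ i, X i ∉ (N.restrictScalars K).comap (dl α) := by
  by_contra! hc
  apply hN
  rw [eq_top_iff, ← h.span, Submodule.span_le]
  rintro _ ⟨i, rfl⟩
  exact hc i

/-- The canonical map to the residue field. -/
noncomputable def al (P : Ideal (MvPolynomial σ K)) :
    MvPolynomial σ K →ₐ[K] FractionRing (MvPolynomial σ K ⧸ P) :=
  (IsScalarTower.toAlgHom K (MvPolynomial σ K ⧸ P) (FractionRing (MvPolynomial σ K ⧸ P))).comp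
        (Ideal.Quotient.mkₐ K P)

/-- Data at a prime which we need. -/
structure SepAt (P : Ideal (MvPolynomial σ K)) (L l x : MvPolynomial σ K)
    (p : Polynomial (MvPolynomial (Fin 2) K)) : Prop where
  monic : p.Monic
  mem : p.eval₂ (phi L l : MvPolynomial (Fin 2) K →+* MvPolynomial σ K) x ∈ P
  dvd : ∀ q : Polynomial (MvPolynomial (Fin 2) K),
    q.eval₂ (phi L l : MvPolynomial (Fin 2) K →+* MvPolynomial σ K) x ∈ P → p ∣ q
  sep : (p.map (algebraMap _ (FractionRing (MvPolynomial (Fin 2) K)))).Separable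
  irr : Irreducible (p.map (algebraMap _ (FractionRing (MvPolynomial (Fin 2) K))))

theorem GP.sepAt [Finite σ] {W P : Ideal (MvPolynomial σ K)} {n d : ℕ} {L l : MvPolynomial σ K}
    (h : GP W n d L l) (hP : W ≤ P) {E : Type*} [Field E] [Algebra K E]
    {α : MvPolynomial σ K →ₐ[K] E} (hα : FD P α) (hi : ∀ t, phi L l t ∈ P → t = 0)
    (hs : Submodule.span E {dl α L, dl α l} = ⊤) (x : MvPolynomial σ K) : ∃ p, SepAt P L l x p := by
  let _ : Algebra (MvPolynomial (Fin 2) K) E := (α.comp (phi L l)).toRingHom.toAlgebra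
  have ha : ∀ t, algebraMap (MvPolynomial (Fin 2) K) E t = α (phi L l t) := fun _ => rfl
  have : IsScalarTower K (MvPolynomial (Fin 2) K) E :=
    IsScalarTower.of_algebraMap_eq fun c => ((α.comp (phi L l)).commutes c).symm
  have : FaithfulSMul (MvPolynomial (Fin 2) K) E := by
    rw [faithfulSMul_iff_algebraMap_injective, injective_iff_map_eq_zero]
    intro t ht
    exact hi t ((hα.ker _).1 ht)
  have := hα.ess
  have hev : ∀ q : Polynomial (MvPolynomial (Fin 2) K),
      Polynomial.aeval (α x) q = 0 ↔
      q.eval₂ (phi L l : MvPolynomial (Fin 2) K →+* MvPolynomial σ K) x ∈ P := by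
    intro q
    rw [← hα.ker]
    change _ ↔ (α : MvPolynomial σ K →+* E) _ = 0
    rw [Polynomial.hom_eval₂]
    rfl
  have hIntg : IsIntegral (MvPolynomial (Fin 2) K) (α x) := by
    obtain ⟨p, hp, hm⟩ := h.int_elt hP x
    exact ⟨p, hp, (hev p).2 hm⟩
  have hsep := lemB K (MvPolynomial (Fin 2) K) E (X 0) (X 1)
    (by rw [ha, ha, phi_X0, phi_X1]; exact hs) inferInstance (α x) hIntg
  refine ⟨minpoly (MvPolynomial (Fin 2) K) (α x), minpoly.monic hIntg, (hev _).1 (minpoly.aeval _ _),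
    fun q hq => minpoly.isIntegrallyClosed_dvd hIntg ((hev q).2 hq), hsep, ?_⟩
  exact ((minpoly.monic hIntg).irreducible_iff_irreducible_map_fraction_map).1
    (minpoly.irreducible hIntg)

end PB

namespace PB

variable {K : Type*} [Field K] {σ : Type*}

theorem sep_choice [PerfectField K] [Finite σ] [Nonempty σ] {W P : Ideal (MvPolynomial σ K)} {n d : ℕ}
    {L0 l0 : MvPolynomial σ K} (h0 : GP W n d L0 l0) (hPp : P.IsPrime) (hP : W ≤ P) :
    ∃ p1 : Submodule K (MvPolynomial σ K), (∃ i, X i ∉ p1) ∧ ∀ L ∉ p1,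
      ∃ p2 : Submodule K (MvPolynomial σ K), (∃ i, X i ∉ p2) ∧ ∀ l ∉ p2,
        GP W n d L l → (∀ t, phi L l t ∈ P → t = 0) → ∀ x, ∃ p, SepAt P L l x p := by
  have hbot : ∃ i, X i ∉ (⊥ : Submodule K (MvPolynomial σ K)) :=
    ⟨Classical.arbitrary σ, by rw [Submodule.mem_bot]; exact X_ne_zero _⟩
  obtain ⟨E, _, _, α, hα⟩ : ∃ (E : Type _) (_ : Field E) (_ : Algebra K E)
      (α : MvPolynomial σ K →ₐ[K] E), FD P α :=
    ⟨_, _, _, _, FD.exists P hPp⟩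
  have := hα.ess
  obtain ⟨hfin, hfr⟩ := lemC K E (α L0) (α l0) (h0.fd_alg hP hα)
  obtain ⟨p1, hp1, hp1'⟩ : ∃ p1 : Submodule K (MvPolynomial σ K), (∃ i, X i ∉ p1) ∧
      ∀ L ∉ p1, (⊤ : Submodule E (Ω[E⁄K])) ≠ ⊥ → dl α L ≠ 0 := by
    by_cases h : (⊤ : Submodule E (Ω[E⁄K])) = ⊥
    · exact ⟨⊥, hbot, fun _ _ hc => absurd h hc⟩
    · exact ⟨_, hα.exists_notMem ⊥ (Ne.symm h), fun L hL _ hz => hL (by simpa using hz)⟩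
  refine ⟨p1, hp1, fun L hL => ?_⟩
  obtain ⟨p2, hp2, hp2'⟩ : ∃ p2 : Submodule K (MvPolynomial σ K), (∃ i, X i ∉ p2) ∧
      ∀ l ∉ p2, Submodule.span E {dl α L} ≠ ⊤ → dl α l ∉ Submodule.span E {dl α L} := by
    by_cases h : Submodule.span E {dl α L} = ⊤
    · exact ⟨⊥, hbot, fun _ _ hc => absurd h hc⟩
    · exact ⟨_, hα.exists_notMem _ h, fun l hl _ hz => hl (by simpa using hz)⟩
  refine ⟨p2, hp2, fun l hl hGP hi x => ?_⟩
  exact hGP.sepAt hP hα hi (choose_span (dl α) hfr (hp1' L hL) (hp2' l hl)) x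

theorem Ctx.exists_sep [IsAlgClosed K] {r : ℕ} {Z : Finset (Fin (r + 1) → K)} {n k : ℕ}
    (c : Ctx Z n k) : ∃ L l : MvPolynomial (Fin (r + 1)) K, (∀ v ∈ Z, eval v L ≠ 0) ∧
      GP (WI Z n) n (k - 1) L l ∧
      ∀ P ∈ (WI Z n).minimalPrimes, ringKrullDim (MvPolynomial (Fin (r + 1)) K ⧸ P) = 2 →
        ∀ x, ∃ p, SepAt P L l x p := by
  have : Infinite K := IsAlgClosed.instInfinite
  let S0 : Set (Submodule K (MvPolynomial (Fin (r + 1)) K)) :=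
    insert ⊥ ((fun v => LinearMap.ker (aeval v : MvPolynomial (Fin (r + 1)) K →ₐ[K] K).toLinearMap) '' Z)
  have hS0 : S0.Finite := (Z.finite_toSet.image _).insert _
  have hS0' : ∀ p ∈ S0, ∃ i, X i ∉ p := by
    rintro p (rfl | ⟨v, hv, rfl⟩)
    · exact ⟨0, by rw [Submodule.mem_bot]; exact X_ne_zero _⟩
    · obtain ⟨i, hi⟩ := Function.ne_iff.1 (c.hZ0 v hv)
      exact ⟨i, by simpa using hi⟩
  have hS0'' : ∀ L, (∀ p ∈ S0, L ∉ p) → L ≠ 0 ∧ ∀ v ∈ Z, eval v L ≠ 0 := by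
    intro L hL
    refine ⟨fun h => hL ⊥ (Set.mem_insert _ _) (by simp [h]), fun v hv h => ?_⟩
    refine hL _ (Set.mem_insert_of_mem _ ⟨v, hv, rfl⟩) ?_
    simpa [aeval_eq_eval] using h
  obtain ⟨L0, hL0, hL0'⟩ := exists_linear hS0 hS0'
  obtain ⟨hL00, hL0Z⟩ := hS0'' _ hL0'
  obtain ⟨s0, hs0, hs0', hs0''⟩ := c.good_pair hL0 hL00 hL0Z
  obtain ⟨l0, hl0, hl0'⟩ := exists_linear hs0 hs0'
  have h0 := hs0'' l0 hl0 hl0'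
  have hfinP : (WI Z n).minimalPrimes.Finite := Ideal.finite_minimalPrimes_of_isNoetherianRing _ _
  choose p1 hp1 hp1' using fun P : (WI Z n).minimalPrimes => sep_choice h0 P.2.1.1 P.2.1.2
  have := hfinP.to_subtype
  obtain ⟨L, hL, hL'⟩ := exists_linear (hS0.union (Set.finite_range p1)) (by
    rintro p (hp | ⟨P, rfl⟩)
    · exact hS0' p hp
    · exact hp1 P)
  obtain ⟨hL1, hLZ⟩ := hS0'' L fun p hp => hL' p (Or.inl hp)
  obtain ⟨s, hs, hs', hs''⟩ := c.good_pair hL hL1 hLZ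
  choose p2 hp2 hp2' using fun P : (WI Z n).minimalPrimes => hp1' P L (hL' _ (Or.inr ⟨P, rfl⟩))
  obtain ⟨l, hl, hl'⟩ := exists_linear (hs.union (Set.finite_range p2)) (by
    rintro p (hp | ⟨P, rfl⟩)
    · exact hs' p hp
    · exact hp2 P)
  have hGP := hs'' l hl fun p hp => hl' p (Or.inl hp)
  refine ⟨L, l, hLZ, hGP, fun P hP hd x => ?_⟩
  exact hp2' ⟨P, hP⟩ l (hl' _ (Or.inr ⟨_, rfl⟩)) hGP (hGP.dim_conv hP.1.2 hd) x

end PB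

namespace PB

variable {K : Type*} [Field K] {σ : Type*}

theorem SepAt.hom {P : Ideal (MvPolynomial σ K)} {L l x : MvPolynomial σ K}
    {p : Polynomial (MvPolynomial (Fin 2) K)} (h : SepAt P L l x p) (hP : HomI P)
    (hL : L.IsHomogeneous 1) (hl : l.IsHomogeneous 1) (hx : x.IsHomogeneous 1) :
    (p.eval₂ (phi L l : MvPolynomial (Fin 2) K →+* MvPolynomial σ K) x).IsHomogeneous
      p.natDegree := by
  set d := p.natDegree with hd
  set ev := fun q : Polynomial (MvPolynomial (Fin 2) K) =>
    q.eval₂ (phi L l : MvPolynomial (Fin 2) K →+* MvPolynomial σ K) x with hev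
  let p' : Polynomial (MvPolynomial (Fin 2) K) :=
    ∑ i ∈ Finset.range (d + 1), Polynomial.monomial i (homogeneousComponent (d - i) (p.coeff i))
  have h1 : ev p' = homogeneousComponent d (ev p) := by
    simp only [hev, p', Polynomial.eval₂_finsetSum, Polynomial.eval₂_monomial]
    rw [Polynomial.eval₂_eq_sum_range, map_sum]
    refine Finset.sum_congr rfl fun i hi => ?_
    have hi' : d - i + i = d := by simp at hi; omega
    have hxi : (x ^ i).IsHomogeneous i := by simpa using hx.pow i
    have := homComp_mul hxi (phi L l (p.coeff i)) (d - i)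
    rw [hi', phi_comp hL hl] at this
    simp only [RingHom.coe_coe]
    rw [mul_comm, ← this, mul_comm]
  have hcoeff : ∀ j, p'.coeff j = if j ≤ d then homogeneousComponent (d - j) (p.coeff j) else 0 := by
    intro j
    simp only [p', Polynomial.finsetSum_coeff, Polynomial.coeff_monomial]
    rw [Finset.sum_ite_eq']
    simp
  have h2 : p'.natDegree ≤ d := by
    rw [Polynomial.natDegree_le_iff_coeff_eq_zero]
    intro j hj
    rw [hcoeff, if_neg (by omega)]
  have h3 : p'.coeff d = 1 := by
    rw [hcoeff, if_pos le_rfl, Nat.sub_self, hd, Polynomial.coeff_natDegree, h.monic.leadingCoeff]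
    simp
  have h4 : p'.Monic := Polynomial.monic_of_natDegree_le_of_coeff_eq_one d h2 h3
  have h5 : p ∣ p' := h.dvd _ (by
    change ev p' ∈ P
    rw [h1]; exact hP _ h.mem _)
  have h6 := Polynomial.eq_of_monic_of_dvd_of_natDegree_le h.monic h4 h5 h2
  have h7 : ev p = homogeneousComponent d (ev p) := by rw [← h1, h6]
  change (ev p).IsHomogeneous d
  rw [h7]
  exact homogeneousComponent_isHomogeneous _ _

theorem GP.exists_q [Finite σ] {W : Ideal (MvPolynomial σ K)} {n d : ℕ} {L l x : MvPolynomial σ K}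
    (h : GP W n d L l) (hx : x.IsHomogeneous 1) :
    ∃ q : Polynomial (MvPolynomial (Fin 2) K), q ≠ 0 ∧ q.natDegree ≤ d ∧
      q.eval₂ (phi L l : MvPolynomial (Fin 2) K →+* MvPolynomial σ K) x ∈ W := by
  obtain ⟨c, N0, hN0⟩ := h.hilb_poly
  obtain ⟨M, hM0, hM1⟩ : ∃ M : ℕ, N0 ≤ M + d ∧ (d * (M + d : ℕ) + c : ℤ) < (d + 1) * M := by
    refine ⟨N0 + (d * d + c.natAbs + 1), by omega, ?_⟩
    have := le_abs_self c
    have : (0 : ℤ) ≤ N0 := Int.natCast_nonneg _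
    push_cast
    nlinarith
  set N := M + d with hN
  have hlt : hilb W N < (d + 1) * M := by
    have := hN0 N hM0
    zify; rw [this]; exact hM1
  -- the polynomial attached to a coefficient function
  let Q : (Fin (d + 1) × Fin M → K) →ₗ[K] Polynomial (MvPolynomial (Fin 2) K) :=
    { toFun := fun a => ∑ ij : Fin (d + 1) × Fin M, Polynomial.monomial (ij.1 : ℕ)
        (C (a ij) * (X 0 ^ (ij.2 : ℕ) * X 1 ^ (N - ij.1 - ij.2)))
      map_add' := by
        intro a b
        rw [← Finset.sum_add_distrib]
        refine Finset.sum_congr rfl fun ij _ => ?_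
        rw [← map_add]; congr 1
        rw [Pi.add_apply, map_add, add_mul]
      map_smul' := by
        intro e a
        rw [RingHom.id_apply, Finset.smul_sum]
        refine Finset.sum_congr rfl fun ij _ => ?_
        rw [Polynomial.smul_monomial]; congr 1
        rw [Pi.smul_apply, smul_eq_mul, map_mul, mul_assoc, MvPolynomial.smul_eq_C_mul] }
  have hQ : ∀ a, Q a = ∑ ij : Fin (d + 1) × Fin M, Polynomial.monomial (ij.1 : ℕ)
        (C (a ij) * (X 0 ^ (ij.2 : ℕ) * X 1 ^ (N - ij.1 - ij.2))) := fun _ => rfl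
  have hQinj : ∀ a, Q a = 0 → a = 0 := by
    intro a ha
    ext ⟨i, j⟩
    have h1 := congrArg (fun q => MvPolynomial.coeff (Finsupp.single 0 (j : ℕ) + Finsupp.single 1 (N - i - j))
      (q.coeff (i : ℕ))) ha
    simp only [hQ, Polynomial.finsetSum_coeff, Polynomial.coeff_monomial, MvPolynomial.coeff_sum,
      Polynomial.coeff_zero, MvPolynomial.coeff_zero] at h1
    rw [Finset.sum_eq_single (i, j)] at h1
    · simp only [if_true, MvPolynomial.coeff_C_mul] at h1
      have : (X 0 ^ (j : ℕ) * X 1 ^ (N - i - j) : MvPolynomial (Fin 2) K) =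
          monomial (Finsupp.single 0 (j : ℕ) + Finsupp.single 1 (N - i - j)) 1 := by
        rw [X_pow_eq_monomial, X_pow_eq_monomial, monomial_mul, one_mul]
      rw [this, coeff_monomial, if_pos rfl, mul_one] at h1
      exact h1
    · rintro ⟨i', j'⟩ - hne
      simp only
      split_ifs with hi
      · have hi' : i' = i := Fin.ext hi
        subst hi'
        have hj : j' ≠ j := fun hj => hne (by rw [hj])
        have : (X 0 ^ (j' : ℕ) * X 1 ^ (N - i' - j') : MvPolynomial (Fin 2) K) =
            monomial (Finsupp.single 0 (j' : ℕ) + Finsupp.single 1 (N - i' - j')) 1 := by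
          rw [X_pow_eq_monomial, X_pow_eq_monomial, monomial_mul, one_mul]
        rw [MvPolynomial.coeff_C_mul, this, coeff_monomial, if_neg, mul_zero]
        intro he
        have := DFunLike.congr_fun he 0
        simp at this
        exact hj (Fin.ext this)
      · simp
    · simp
  have hQhom : ∀ a, ((Q a).eval₂ (phi L l : MvPolynomial (Fin 2) K →+* MvPolynomial σ K) x).IsHomogeneous N := by
    intro a
    rw [hQ, Polynomial.eval₂_finsetSum]
    refine IsHomogeneous.sum _ _ _ fun ij _ => ?_
    rw [Polynomial.eval₂_monomial]
    have h1 : (C (a ij) * (X 0 ^ (ij.2 : ℕ) * X 1 ^ (N - ij.1 - ij.2)) :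
        MvPolynomial (Fin 2) K).IsHomogeneous (N - ij.1) := by
      have := (isHomogeneous_C (Fin 2) (a ij)).mul (((isHomogeneous_X K (0 : Fin 2)).pow ij.2).mul
        ((isHomogeneous_X K (1 : Fin 2)).pow (N - ij.1 - ij.2)))
      convert this using 1
      have := ij.1.2; have := ij.2.2
      omega
    have h2 := (phi_hom h.hL h.hl h1).mul (hx.pow (ij.1 : ℕ))
    have h3 := ij.1.2
    rw [one_mul, Nat.sub_add_cancel (by omega)] at h2
    exact h2
  let e : Polynomial (MvPolynomial (Fin 2) K) →ₗ[K] MvPolynomial σ K :=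
    { toFun := fun q => q.eval₂ (phi L l : MvPolynomial (Fin 2) K →+* MvPolynomial σ K) x
      map_add' := fun a b => Polynomial.eval₂_add _ _
      map_smul' := by
        intro c q
        rw [RingHom.id_apply]
        rw [show c • q = (C c : MvPolynomial (Fin 2) K) • q by
          rw [← algebraMap_smul (MvPolynomial (Fin 2) K)]; rfl]
        rw [Polynomial.eval₂_smul, MvPolynomial.smul_eq_C_mul]
        simp [phi] }
  let Φ : (Fin (d + 1) × Fin M → K) →ₗ[K]
      ((homogeneousSubmodule σ K N).map (Ideal.Quotient.mkₐ K W).toLinearMap) :=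
    ((Ideal.Quotient.mkₐ K W).toLinearMap ∘ₗ e ∘ₗ Q).codRestrict _ (fun a =>
      Submodule.mem_map_of_mem (hQhom a))
  have hker : LinearMap.ker Φ ≠ ⊥ := by
    apply LinearMap.ker_ne_bot_of_finrank_lt
    rw [Module.finrank_fintype_fun_eq_card, Fintype.card_prod, Fintype.card_fin, Fintype.card_fin]
    exact hlt
  obtain ⟨a, ha, ha0⟩ := Submodule.exists_mem_ne_zero_of_ne_bot hker
  refine ⟨Q a, fun hz => ha0 (hQinj a hz), ?_, ?_⟩
  · rw [hQ]
    refine Polynomial.natDegree_sum_le_of_forall_le _ _ fun ij _ => ?_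
    refine (Polynomial.natDegree_monomial_le _).trans ?_
    have := ij.1.2; omega
  · have := congrArg Subtype.val (LinearMap.mem_ker.1 ha)
    exact Ideal.Quotient.eq_zero_iff_mem.1 this

end PB

namespace PB

variable {K : Type*} [Field K] {r : ℕ} {Z : Finset (Fin (r + 1) → K)} {n k : ℕ}
  {L l : MvPolynomial (Fin (r + 1)) K}

theorem Ctx.exists_g [Infinite K] (c : Ctx Z n k) (h : GP (WI Z n) n (k - 1) L l)
    (hLZ : ∀ v ∈ Z, eval v L ≠ 0) {x : MvPolynomial (Fin (r + 1)) K} (hx : x.IsHomogeneous 1)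
    (hs : ∀ P ∈ (WI Z n).minimalPrimes, ringKrullDim (MvPolynomial (Fin (r + 1)) K ⧸ P) = 2 →
        ∃ p, SepAt P L l x p) :
    ∃ g : Polynomial (MvPolynomial (Fin 2) K),
      (g.map (algebraMap _ (FractionRing (MvPolynomial (Fin 2) K)))).Separable ∧
      g.eval₂ (phi L l : MvPolynomial (Fin 2) K →+* MvPolynomial (Fin (r + 1)) K) x
        ∈ torI (WI Z n) L l := by
  classical
  set W := WI Z n with hW
  let S : Set (Ideal (MvPolynomial (Fin (r + 1)) K)) :=
    {P | P ∈ W.minimalPrimes ∧ ringKrullDim (MvPolynomial (Fin (r + 1)) K ⧸ P) = 2}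
  have hS : S.Finite := (Ideal.finite_minimalPrimes_of_isNoetherianRing _ W).subset fun _ h => h.1
  have := hS.fintype
  choose p hp using fun P : S => hs P.1 P.2.1 P.2.2
  let B : Finset (Polynomial (MvPolynomial (Fin 2) K)) := Finset.univ.image p
  have hB : ∀ b ∈ B, ∃ P : S, p P = b := fun b hb => by simpa [B] using hb
  let g := ∏ b ∈ B, b
  set F := FractionRing (MvPolynomial (Fin 2) K) with hF
  let mp := Polynomial.mapRingHom (algebraMap (MvPolynomial (Fin 2) K) F)
  have hmpinj : Function.Injective mp :=
    Polynomial.map_injective _ (IsFractionRing.injective (MvPolynomial (Fin 2) K) F)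
  have hgm : g.map (algebraMap _ F) = ∏ b ∈ B, b.map (algebraMap _ F) := Polynomial.map_prod _ _ _
  have hcop : ∀ a ∈ B, ∀ b ∈ B, a ≠ b → IsCoprime (a.map (algebraMap _ F)) (b.map (algebraMap _ F)) := by
    intro a ha b hb hab
    obtain ⟨P, rfl⟩ := hB a ha
    obtain ⟨Q, rfl⟩ := hB b hb
    rcases (hp P).irr.isCoprime_or_dvd ((p Q).map (algebraMap _ F)) with h1 | h1
    · exact h1
    · exfalso
      have h2 := (hp P).irr.associated_of_dvd (hp Q).irr h1
      have h3 := Polynomial.eq_of_monic_of_associated ((hp P).monic.map _) ((hp Q).monic.map _) h2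
      exact hab (hmpinj h3)
  have hmon : g.Monic := Polynomial.monic_prod_of_monic _ _ fun b hb => by
    obtain ⟨P, rfl⟩ := hB b hb; exact (hp P).monic
  have hsep : (g.map (algebraMap _ F)).Separable := by
    rw [hgm]
    refine Polynomial.separable_prod' (fun a ha b hb hab => hcop a ha b hb hab) ?_
    intro b hb
    obtain ⟨P, rfl⟩ := hB b hb; exact (hp P).sep
  have hdeg : g.natDegree ≤ k - 1 := by
    obtain ⟨q, hq0, hqd, hqm⟩ := h.exists_q hx
    have hd : g.map (algebraMap _ F) ∣ q.map (algebraMap _ F) := by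
      rw [hgm]
      refine Finset.prod_dvd_of_coprime (fun a ha b hb hab => hcop a ha b hb hab) ?_
      intro b hb
      obtain ⟨P, rfl⟩ := hB b hb
      exact Polynomial.map_dvd _ ((hp P).dvd q (P.2.1.1.2 hqm))
    have h0 : q.map (algebraMap _ F) ≠ 0 := fun hz => hq0 (hmpinj (by rw [map_zero]; exact hz))
    have h1 := Polynomial.natDegree_le_of_dvd hd h0
    rw [hmon.natDegree_map] at h1
    exact h1.trans (Polynomial.natDegree_map_le.trans hqd)
  have hev : g.eval₂ (phi L l : MvPolynomial (Fin 2) K →+* MvPolynomial (Fin (r + 1)) K) x =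
      ∏ b ∈ B, b.eval₂ (phi L l : MvPolynomial (Fin 2) K →+* MvPolynomial (Fin (r + 1)) K) x :=
    Polynomial.eval₂_finsetProd _ _ _ _
  have hhom : (g.eval₂ (phi L l : MvPolynomial (Fin 2) K →+* MvPolynomial (Fin (r + 1)) K) x).IsHomogeneous
      g.natDegree := by
    rw [hev, Polynomial.natDegree_prod_of_monic _ _ (fun b hb => by
      obtain ⟨P, rfl⟩ := hB b hb; exact (hp P).monic)]
    refine IsHomogeneous.prod _ _ _ fun b hb => ?_
    obtain ⟨P, rfl⟩ := hB b hb
    exact (hp P).hom (h.hW.minPrime P.2.1) h.hL h.hl hx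
  have hcurve : g.eval₂ (phi L l : MvPolynomial (Fin 2) K →+* MvPolynomial (Fin (r + 1)) K) x
      ∈ curvePart W := by
    rw [curvePart, Submodule.mem_sInf]
    intro P hP
    rw [hev]
    exact Ideal.mem_of_dvd _ (Finset.dvd_prod_of_mem _ (Finset.mem_image_of_mem p (Finset.mem_univ ⟨P, hP⟩)))
      (hp ⟨P, hP⟩).mem
  have hkn := c.hkn
  refine ⟨g, hsep, c.mem_C h hLZ (t := g.natDegree) (by omega) hhom ?_⟩
  intro v _ hv
  exact (h.eval_curve v).1 hv _ hcurve

theorem red_aux {σ : Type*} [Finite σ] {W : Ideal (MvPolynomial σ K)} {d : ℕ} {L l : MvPolynomial σ K}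
    (h : GP W n d L l) (hg : ∀ j : σ, ∃ g : Polynomial (MvPolynomial (Fin 2) K),
      (g.map (algebraMap _ (FractionRing (MvPolynomial (Fin 2) K)))).Separable ∧
      g.eval₂ (phi L l : MvPolynomial (Fin 2) K →+* MvPolynomial σ K) (X j) ∈ torI W L l)
    {S : Type*} [CommRing S]
    [Algebra (MvPolynomial (Fin 2) K) S] (π : MvPolynomial σ K →+* S) (hπ : Function.Surjective π)
    (ha : ∀ t, algebraMap (MvPolynomial (Fin 2) K) S t = π (phi L l t))
    (hW : ∀ f, π f = 0 ↔ f ∈ W) {f : MvPolynomial σ K} {s : ℕ} (hf : f.IsHomogeneous s) {m : ℕ}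
    (hm : f ^ m ∈ torI W L l) : f ∈ torI W L l := by
  have := h.finite_aux π hπ ha fun f => (hW f).2
  have hsm : ∀ t f, t • π f = 0 ↔ phi L l t * f ∈ W := by
    intro t f
    rw [Algebra.smul_def, ha, ← map_mul, hW]
  obtain ⟨e, t, -, ht0, ht⟩ := hm
  obtain ⟨t', ht', h1⟩ := lemA (T := MvPolynomial (Fin 2) K) (M := S) (fun j : σ => π (X j)) (by
      rw [eq_top_iff]
      intro y _
      obtain ⟨f, rfl⟩ := hπ y
      induction f using MvPolynomial.induction_on with
      | C a =>
        have : π (C a) = algebraMap (MvPolynomial (Fin 2) K) S (C a) := by rw [ha]; simp [phi]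
        rw [this]; exact Subalgebra.algebraMap_mem _ _
      | add p q hp hq => rw [map_add]; exact add_mem (hp trivial) (hq trivial)
      | mul_X p j hp =>
        rw [map_mul]; exact mul_mem (hp trivial) (Algebra.subset_adjoin ⟨j, rfl⟩)) (by
      intro j
      obtain ⟨g, hg1, e, t, -, ht0, ht⟩ := hg j
      refine ⟨g, hg1, t, ht0, ?_⟩
      rw [← hsm, Polynomial.hom_eval₂] at ht
      have : π.comp (phi L l : MvPolynomial (Fin 2) K →+* MvPolynomial σ K) = algebraMap _ S :=
        RingHom.ext fun t => (ha t).symm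
      rw [this] at ht
      exact ht) (π f) m t ht0 (by rw [← map_pow, hsm]; exact ht)
  exact h.mem_tor_of hf ht' ((hsm _ _).1 h1)

theorem Ctx.tor_rad [Infinite K] (c : Ctx Z n k) (h : GP (WI Z n) n (k - 1) L l)
    (hLZ : ∀ v ∈ Z, eval v L ≠ 0)
    (hs : ∀ P ∈ (WI Z n).minimalPrimes, ringKrullDim (MvPolynomial (Fin (r + 1)) K ⧸ P) = 2 →
        ∀ x, ∃ p, SepAt P L l x p) : curvePart (WI Z n) = torI (WI Z n) L l := by
  refine le_antisymm (fun f hf => ?_) h.tor_le_curve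
  rw [← sum_homogeneousComponent f]
  refine Ideal.sum_mem _ fun i _ => ?_
  obtain ⟨m, hm⟩ := h.curve_le (GP.homCurve h.hW f hf i)
  refine @red_aux K _ n _ _ (WI Z n) (k - 1) L l h (fun j => ?_) _ _ (psi (WI Z n) L l).toAlgebra
    (Ideal.Quotient.mk _) Ideal.Quotient.mk_surjective (fun _ => rfl)
    (fun _ => Ideal.Quotient.eq_zero_iff_mem) _ i (homogeneousComponent_isHomogeneous _ _) m hm
  exact c.exists_g h hLZ (isHomogeneous_X K j) fun P hP hd => hs P hP hd _

theorem Ctx.isRadical [Infinite K] (c : Ctx Z n k) (h : GP (WI Z n) n (k - 1) L l)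
    (hLZ : ∀ v ∈ Z, eval v L ≠ 0) (hC : curvePart (WI Z n) = torI (WI Z n) L l) :
    (WI Z n).IsRadical := by
  intro f hf
  rw [← sum_homogeneousComponent f]
  refine Ideal.sum_mem _ fun i _ => ?_
  have h1 : homogeneousComponent i f ∈ (WI Z n).radical := h.hW.radical f hf i
  refine tor_inf h hLZ i _ (homogeneousComponent_isHomogeneous _ _) ?_ ?_
  · rw [← hC, curvePart, Submodule.mem_sInf]
    intro P hP
    exact (hP.1.1.1.radical_le_iff.2 hP.1.1.2) h1
  · obtain ⟨m, hm⟩ := h1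
    exact pI_pow (low_le _ _ hm)

end PB
/-- **Corollary.**  Let `Z ⊂ ℙ^r` be a finite reduced set of points whose `h`-vector has value
`k` in degree `n` and `k-1` in degree `n+1` (`n ≥ k ≥ 2`) and is `0` in all degrees `≥ n+2`.
Assume that the base locus of `[J]_{n+1}` (`J` the artinian reduction of `I_Z` by a general
linear form `L`, here: any linear form missing the points of `Z`) is a zero-dimensional scheme
of degree `k-1` in `ℙ^{r-1}`.  Then the saturation `V` of `⟨[I_Z]_{≤ n+1}⟩` is the homogeneous
ideal of a reduced curve of degree `k-1` (not necessarily unmixed): `V` is radical,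
`dim R/V = 2`, and the Hilbert function of `R/V` is eventually `(k-1)·t + c`.  Moreover, if `C`
is the unmixed one-dimensional part of `V` and `Z₁` is the subset of `Z` lying on `C`, then
`⟨[I_{Z₁}]_{≤ n+1}⟩ = I_C`, `Δh_{Z₁}(t) = Δh_C(t)` for `t ≤ n+1`, and `Δh_{Z₁}(t) = Δh_Z(t)`
in all degrees `t ≥ n+1`. -/
theorem points_baseLocus_kminus1_curve
    {K : Type*} [Field K] [IsAlgClosed K] {r n k : ℕ}
    (Z : Finset (Fin (r + 1) → K))
    (hZ0 : ∀ v ∈ Z, v ≠ (0 : Fin (r + 1) → K))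
    (hZdist : ∀ v ∈ Z, ∀ w ∈ Z, v ≠ w → ∀ c : K, w ≠ c • v)
    (hk : 2 ≤ k) (hkn : k ≤ n)
    (hhn : hvec (pointsIdeal (↑Z : Set (Fin (r + 1) → K))) n = k)
    (hhn1 : hvec (pointsIdeal (↑Z : Set (Fin (r + 1) → K))) (n + 1) + 1 = k)
    (hhtail : ∀ t, n + 2 ≤ t → hvec (pointsIdeal (↑Z : Set (Fin (r + 1) → K))) t = 0)
    (hbase : ∀ L : MvPolynomial (Fin (r + 1)) K, L.IsHomogeneous 1 → L ≠ 0 →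
      (∀ v ∈ Z, eval v L ≠ 0) →
      ∃ N : ℕ, ∀ t, N ≤ t →
        hilb (compIdeal (pointsIdeal (↑Z : Set (Fin (r + 1) → K))) (n + 1) ⊔ Ideal.span {L}) t
          = k - 1)
    (V C : Ideal (MvPolynomial (Fin (r + 1)) K))
    (hV : V = saturate (lowIdeal (pointsIdeal (↑Z : Set (Fin (r + 1) → K))) (n + 1)))
    (hC : C = curvePart V)
    (Z1 : Set (Fin (r + 1) → K))
    (hZ1 : Z1 = {v ∈ (↑Z : Set (Fin (r + 1) → K)) | ∀ f ∈ C, eval v f = 0}) :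
    V.IsRadical ∧
    ringKrullDim (MvPolynomial (Fin (r + 1)) K ⧸ V) = 2 ∧
    (∃ c : ℤ, ∃ N : ℕ, ∀ t : ℕ, N ≤ t → (hilb V t : ℤ) = (k - 1 : ℕ) * t + c) ∧
    lowIdeal (pointsIdeal Z1) (n + 1) = C ∧
    (∀ t, t ≤ n + 1 → hvec (pointsIdeal Z1) t = hvec C t) ∧
    (∀ t, n + 1 ≤ t →
      hvec (pointsIdeal Z1) t = hvec (pointsIdeal (↑Z : Set (Fin (r + 1) → K))) t) := by
  have : Infinite K := IsAlgClosed.instInfinite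
  have c : PB.Ctx Z n k := ⟨hZ0, hZdist, hk, hkn, hhn1, hhtail, hbase⟩
  obtain ⟨L, l, hLZ, h, hs⟩ := c.exists_sep
  have hVW : V = PB.WI Z n := by rw [hV]; exact h.sat_eq
  have hCT : curvePart (PB.WI Z n) = PB.torI (PB.WI Z n) L l := c.tor_rad h hLZ hs
  have hC' : C = PB.torI (PB.WI Z n) L l := by rw [hC, hVW, hCT]
  have hZ1Z : Z1 ⊆ ↑Z := by rw [hZ1]; exact fun v hv => hv.1
  have hLZ1 : ∀ v ∈ Z1, eval v L ≠ 0 := fun v hv => hLZ v (hZ1Z hv)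
  have hCh : PB.HomI C := by rw [hC']; exact h.homC
  have hCle : C ≤ pointsIdeal Z1 := by
    intro f hf
    refine PB.mem_of_comps fun t => ?_
    rw [PB.mem_pI_hom (homogeneousComponent_isHomogeneous t f)]
    intro v hv
    rw [hZ1] at hv
    exact hv.2 _ (hCh f hf t)
  have hmem : ∀ t, t ≤ n + 1 → ∀ f : MvPolynomial (Fin (r + 1)) K, f.IsHomogeneous t →
      (f ∈ pointsIdeal Z1 ↔ f ∈ C) := by
    intro t ht f hf
    refine ⟨fun hm => ?_, fun hm => hCle hm⟩
    rw [hC']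
    refine c.mem_C h hLZ ht hf fun v hv hvC => PB.pI_eval hm ?_
    rw [hZ1, hC']
    exact ⟨hv, hvC⟩
  have hhv : ∀ t, t ≤ n + 1 → hvec (pointsIdeal Z1) t = hvec C t := by
    intro t ht
    cases t with
    | zero => exact PB.hilb_congr (hmem 0 ht)
    | succ t =>
      change hilb _ (t + 1) - hilb _ t = hilb _ (t + 1) - hilb _ t
      rw [PB.hilb_congr (hmem (t + 1) ht), PB.hilb_congr (hmem t (by omega))]
  refine ⟨?_, ?_, ?_, ?_, hhv, ?_⟩
  · rw [hVW]; exact c.isRadical h hLZ hCT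
  · rw [hVW]; exact h.dim_W
  · rw [hVW]; exact h.hilb_poly
  · apply le_antisymm
    · refine Ideal.span_le.2 ?_
      rintro f ⟨hf, hf'⟩
      simp only [Set.mem_iUnion] at hf'
      obtain ⟨s, hs, hfs⟩ := hf'
      exact (hmem s hs f hfs).1 hf
    · have h1 : C ≤ lowIdeal C (n + 1) := by rw [hC']; exact h.tor_low
      exact h1.trans (Ideal.span_mono fun f hf => ⟨hCle hf.1, hf.2⟩)
  · intro t ht
    rcases Nat.eq_or_lt_of_le ht with rfl | ht'
    · rw [hhv _ le_rfl, hC']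
      change hilb _ (n + 1) - hilb _ n = _
      rw [h.hilb_tor le_rfl]
      omega
    · rw [hhtail t ht']
      obtain ⟨t, rfl⟩ : ∃ s, t = s + 1 := ⟨t - 1, by omega⟩
      change hilb _ (t + 1) - hilb _ t = 0
      rw [PB.hilb_succ PB.HomI.pI h.hL h.hL0 (t := t) (fun f hf hm => PB.pI_nzd h.hL hLZ1 hf hm),
        (PB.hilb_eq_zero (I := pointsIdeal Z1 ⊔ Ideal.span {L}) (t := t + 1)).2]
      · omega
      · intro f hf
        obtain ⟨g, hg, hgm⟩ := c.dec_I h.hL h.hL0 hLZ (t := t) (by omega) hf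
        refine PB.mem_sup_lin' (g := g) ?_
        rw [PB.mem_pI] at hgm ⊢
        exact fun v hv => hgm v (hZ1Z hv)
end

section
/- Let K be an algebraically closed field, S = K[x_1,…,x_r], and J ⊆ S a homogeneous artinian ideal such that dim_K [S/J]_n = k and dim_K [S/J]_{n+1} = k−1 with 2 ≤ k ≤ n, [S/J]_t = 0 for t ≥ n+2, J has no minimal generator in degree n+1, and the forms in [J]_n have no common zero in ℙ^{r−1} (basepoint freeness). Then for every linear form ℓ ∈ [S]_1, the multiplication map ×ℓ : [S/J]_n → [S/J]_{n+1} is either surjective or the zero map; moreover, whenever it is the zero map, the multiplication ×ℓ : [S/J]_{n−1} → [S/J]_n is also zero, i.e. ℓ·[S]_{n−1} ⊆ J and ℓ·[S]_n ⊆ J. -/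
open MvPolynomial

section AbstractPart
variable {K M : Type*} [Field K] [AddCommGroup M] [Module K M]

lemma aux_rank (V : Submodule K M) [FiniteDimensional K V] (a : Module.End K M) :
    Module.finrank K (V.map a) + Module.finrank K (V ⊓ LinearMap.ker a : Submodule K M)
      = Module.finrank K V := by
  have h := LinearMap.finrank_range_add_finrank_ker (a.domRestrict V)
  rw [LinearMap.range_domRestrict] at h
  rw [← h]
  congr 1
  rw [LinearMap.ker_domRestrict, ← Submodule.finrank_map_subtype_eq V, Submodule.map_comap_subtype]

lemma aux_pert [Infinite K] (U : Submodule K M) [FiniteDimensional K U] (p m : Module.End K M)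
    (hp : ∀ x ∈ U, p x = 0 → x = 0) :
    ∃ t : K, t ≠ 0 ∧ ∀ x ∈ U, (p + t • m) x = 0 → x = 0 := by
  have hker : LinearMap.ker (p.domRestrict U) = ⊥ := by
    rw [LinearMap.ker_eq_bot']
    rintro ⟨x, hx⟩ h
    exact Subtype.ext (hp x hx h)
  obtain ⟨g, hg⟩ := LinearMap.exists_leftInverse_of_injective _ hker
  let T : Module.End K U := g ∘ₗ m ∘ₗ U.subtype
  obtain ⟨s, hs⟩ := ((T.finite_hasEigenvalue).union (Set.finite_singleton (0 : K))).infinite_compl.nonempty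
  simp only [Set.mem_compl_iff, Set.mem_union, Set.mem_ofPred_eq, Set.mem_singleton_iff, not_or] at hs
  obtain ⟨hs1, hs0⟩ := hs
  refine ⟨-s⁻¹, by simpa using hs0, ?_⟩
  intro x hx h
  by_contra hne
  apply hs1
  have h1 : g (p x) = ⟨x, hx⟩ := by
    have := LinearMap.congr_fun hg ⟨x, hx⟩
    simpa using this
  have h2 : p x = s⁻¹ • m x := by
    have : p x + (-s⁻¹) • m x = 0 := by simpa using h
    rw [neg_smul, ← sub_eq_add_neg, sub_eq_zero] at this
    exact this
  refine Module.End.hasEigenvalue_of_hasEigenvector (x := ⟨x, hx⟩) ?_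
  rw [Module.End.hasEigenvector_iff, Module.End.mem_eigenspace_iff]
  refine ⟨?_, fun h => hne (congrArg Subtype.val h)⟩
  change g (m x) = _
  rw [← h1, h2, map_smul, smul_smul, mul_inv_cancel₀ hs0, one_smul]

lemma aux_green [Infinite K] (L : Submodule K (Module.End K M))
    (hcomm : ∀ a ∈ L, ∀ b ∈ L, ∀ x, a (b x) = b (a x))
    (D : ℕ → Submodule K M)
    (hD : ∀ n, ∀ a ∈ L, ∀ x ∈ D (n + 1), a x ∈ D n)
    (hD0 : ∀ n, ∀ x ∈ D (n + 1), (∀ a ∈ L, a x = 0) → x = 0) :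
    ∀ (n : ℕ) (V : Submodule K M), V ≤ D n → FiniteDimensional K V → Module.finrank K V ≤ n →
      ∃ a ∈ L, ∀ x ∈ V, a x = 0 → x = 0 := by
  intro n
  induction n with
  | zero =>
    intro V _ _ h
    have : V = ⊥ := Submodule.finrank_eq_zero.mp (Nat.le_zero.mp h)
    subst this
    exact ⟨0, L.zero_mem, fun x hx _ => by simpa using hx⟩
  | succ n ih =>
    intro V hV hfin hle
    by_contra hcon
    push Not at hcon
    obtain ⟨a0, ha0, hmin⟩ := exists_minimalFor_of_wellFoundedLT (fun a => a ∈ L)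
      (fun a => Module.finrank K (V ⊓ LinearMap.ker a : Submodule K M)) ⟨0, L.zero_mem⟩
    obtain ⟨F, hFV, hF0, hFne⟩ := hcon a0 ha0
    have hFmem : F ∈ V ⊓ LinearMap.ker a0 := ⟨hFV, hF0⟩
    have hfd : FiniteDimensional K (V ⊓ LinearMap.ker a0 : Submodule K M) :=
      Submodule.finiteDimensional_inf_left _ _
    have hpos : 0 < Module.finrank K (V ⊓ LinearMap.ker a0 : Submodule K M) := by
      rw [Nat.pos_iff_ne_zero]
      intro h
      rw [Submodule.finrank_eq_zero.mp h] at hFmem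
      exact hFne (by simpa using hFmem)
    have hr := aux_rank V a0
    obtain ⟨p, hpL, hp⟩ := ih (V.map a0) (by
      rintro _ ⟨x, hx, rfl⟩
      exact hD n a0 ha0 x (hV hx)) inferInstance (by omega)
    have key : ∀ q ∈ L, (∀ x ∈ V.map a0, q x = 0 → x = 0) → q F = 0 := by
      intro q hq hinj
      have hsub : V ⊓ LinearMap.ker q ≤ V ⊓ LinearMap.ker a0 := by
        rintro x ⟨hx, hqx⟩
        refine ⟨hx, ?_⟩
        apply hinj _ ⟨x, hx, rfl⟩
        rw [hcomm q hq a0 ha0, show q x = 0 from hqx, map_zero]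
      have hle2 : Module.finrank K (V ⊓ LinearMap.ker a0 : Submodule K M) ≤
          Module.finrank K (V ⊓ LinearMap.ker q : Submodule K M) :=
        hmin hq (Submodule.finrank_mono hsub)
      have heq := Submodule.eq_of_le_of_finrank_le hsub hle2
      rw [← heq] at hFmem
      exact hFmem.2
    apply hFne
    apply hD0 n F (hV hFV)
    intro m hm
    obtain ⟨t, ht, hinj⟩ := aux_pert (V.map a0) p m hp
    have h1 := key p hpL hp
    have h2 := key (p + t • m) (L.add_mem hpL (L.smul_mem t hm)) hinj
    simp only [LinearMap.add_apply, LinearMap.smul_apply, h1, zero_add, smul_eq_zero] at h2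
    exact h2.resolve_left ht

lemma aux_eig [IsAlgClosed K] {ι : Type*} [FiniteDimensional K M] [Nontrivial M]
    (T : ι → Module.End K M) (hT : ∀ i j x, T i (T j x) = T j (T i x)) :
    ∃ x : M, x ≠ 0 ∧ ∀ i, ∃ c : K, T i x = c • x := by
  obtain ⟨N, ⟨hNne, hNinv⟩, hmin⟩ := exists_minimalFor_of_wellFoundedLT
    (fun N : Submodule K M => N ≠ ⊥ ∧ ∀ i, ∀ x ∈ N, T i x ∈ N)
    (fun N => Module.finrank K N) ⟨⊤, top_ne_bot, fun _ _ _ => trivial⟩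
  obtain ⟨x, hx, hxne⟩ := Submodule.exists_mem_ne_zero_of_ne_bot hNne
  refine ⟨x, hxne, fun i => ?_⟩
  have : Nontrivial N := (Submodule.nontrivial_iff_ne_bot).mpr hNne
  obtain ⟨c, hc⟩ := Module.End.exists_eigenvalue ((T i).restrict (hNinv i))
  obtain ⟨⟨y, hy⟩, hyv⟩ := hc.exists_hasEigenvector
  have hy1 : T i y = c • y := congrArg Subtype.val hyv.apply_eq_smul
  have hy0 : y ≠ 0 := fun h => hyv.2 (Subtype.ext h)
  let N' : Submodule K M := N ⊓ (T i).eigenspace c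
  have hle : N' ≤ N := inf_le_left
  have hP : N' ≠ ⊥ ∧ ∀ j, ∀ x ∈ N', T j x ∈ N' := by
    refine ⟨fun h => hy0 ?_, ?_⟩
    · have : y ∈ N' := ⟨hy, Module.End.mem_eigenspace_iff.mpr hy1⟩
      rw [h] at this
      simpa using this
    · rintro j z ⟨hz, hz'⟩
      refine ⟨hNinv j z hz, ?_⟩
      have hz'' : T i z = c • z := Module.End.mem_eigenspace_iff.mp hz'
      exact Module.End.mem_eigenspace_iff.mpr (by rw [hT, hz'', map_smul])
  have heq := Submodule.eq_of_le_of_finrank_le hle (hmin hP (Submodule.finrank_mono hle))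
  rw [← heq] at hx
  exact ⟨c, Module.End.mem_eigenspace_iff.mp hx.2⟩

lemma aux_gotz [IsAlgClosed K] (L : Submodule K (Module.End K M))
    (hcomm : ∀ a ∈ L, ∀ b ∈ L, ∀ x, a (b x) = b (a x))
    (D : ℕ → Submodule K M)
    (hD : ∀ n, ∀ a ∈ L, ∀ x ∈ D (n + 1), a x ∈ D n)
    (hD0 : ∀ n, ∀ x ∈ D (n + 1), (∀ a ∈ L, a x = 0) → x = 0)
    (n : ℕ) (V W : Submodule K M) (hV : V ≤ D n) (hW : W ≤ D (n + 1))
    (hWV : ∀ a ∈ L, ∀ x ∈ W, a x ∈ V)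
    [FiniteDimensional K V] [FiniteDimensional K W] (hVn : Module.finrank K V ≤ n) :
    Module.finrank K W ≤ Module.finrank K V ∧
    (Module.finrank K W = Module.finrank K V → W ≠ ⊥ →
      ∃ F ∈ W, F ≠ 0 ∧ ∃ a ∈ L, ∀ m ∈ L, ∃ c : K, m F = c • a F) := by
  have : Infinite K := IsAlgClosed.instInfinite
  obtain ⟨a, haL, ha⟩ := aux_green L hcomm D hD hD0 n V hV inferInstance hVn
  have haW : ∀ x ∈ W, a x = 0 → x = 0 := by
    intro x hx h
    apply hD0 n x (hW hx)
    intro m hm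
    apply ha _ (hWV m hm x hx)
    rw [hcomm a haL m hm, h, map_zero]
  let f : W →ₗ[K] V := a.restrict (hWV a haL)
  have hf : Function.Injective f := by
    rw [← LinearMap.ker_eq_bot, LinearMap.ker_eq_bot']
    rintro ⟨x, hx⟩ h
    exact Subtype.ext (haW x hx (congrArg Subtype.val h))
  refine ⟨LinearMap.finrank_le_finrank_of_injective hf, fun heq hne => ?_⟩
  let e := f.linearEquivOfInjective hf heq
  have he : ∀ w : W, ((e w : V) : M) = a w := fun w => rfl
  let T : L → Module.End K W := fun m => e.symm.toLinearMap ∘ₗ (m : Module.End K M).restrict (hWV m m.2)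
  have hT : ∀ (m : L) (w : W), a (T m w) = (m : Module.End K M) w := by
    intro m w
    rw [← he]
    simp [T]
  have : Nontrivial W := (Submodule.nontrivial_iff_ne_bot).mpr hne
  obtain ⟨x, hx, hc⟩ := aux_eig T (by
    intro i j x
    apply e.injective
    apply Subtype.ext
    rw [he, he, hT, hT]
    rw [← sub_eq_zero]
    apply ha _ (V.sub_mem (hWV _ i.2 _ (T j x).2) (hWV _ j.2 _ (T i x).2))
    rw [map_sub, hcomm a haL i i.2, hcomm a haL j j.2, hT, hT, hcomm i i.2 j j.2, sub_self])
  refine ⟨x, x.2, fun h => hx (Subtype.ext h), a, haL, fun m hm => ?_⟩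
  obtain ⟨c, hc⟩ := hc ⟨m, hm⟩
  refine ⟨c, ?_⟩
  have := hT ⟨m, hm⟩ x
  rw [hc] at this
  simpa using this.symm

lemma aux_core [IsAlgClosed K] (L : Submodule K (Module.End K M))
    (hcomm : ∀ a ∈ L, ∀ b ∈ L, ∀ x, a (b x) = b (a x))
    (D : ℕ → Submodule K M)
    (hD : ∀ n, ∀ a ∈ L, ∀ x ∈ D (n + 1), a x ∈ D n)
    (hD0 : ∀ n, ∀ x ∈ D (n + 1), (∀ a ∈ L, a x = 0) → x = 0)
    (n : ℕ) (V W : Submodule K M) (hV : V ≤ D (n + 1)) (hW : W ≤ D (n + 2))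
    (hWV : ∀ a ∈ L, ∀ x ∈ W, a x ∈ V)
    [FiniteDimensional K V] [FiniteDimensional K W] (hVn : Module.finrank K V ≤ n + 1)
    (hVW : Module.finrank K W + 1 = Module.finrank K V)
    (hpV : ∀ F ∈ V, (∃ a ∈ L, ∀ m ∈ L, ∃ c : K, m F = c • a F) → F = 0)
    (hpW : ∀ F ∈ W, (∃ a ∈ L, ∀ m ∈ L, ∃ c : K, m F = c • a F) → F = 0)
    (m : Module.End K M) (hm : m ∈ L) (hker : ∃ F ∈ W, F ≠ 0 ∧ m F = 0) :
    (∀ x ∈ W, m x = 0) ∧ (∀ x ∈ V, m x = 0) := by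
  obtain ⟨F, hFW, hF, hmF⟩ := hker
  have i1 : FiniteDimensional K (V ⊓ LinearMap.ker m : Submodule K M) :=
    Submodule.finiteDimensional_inf_left _ _
  have i2 : FiniteDimensional K (W ⊓ LinearMap.ker m : Submodule K M) :=
    Submodule.finiteDimensional_inf_left _ _
  have rV := aux_rank V m
  have rW := aux_rank W m
  have hWm : W ⊓ LinearMap.ker m ≠ ⊥ := by
    intro h
    have : F ∈ W ⊓ LinearMap.ker m := ⟨hFW, hmF⟩
    rw [h] at this
    exact hF (by simpa using this)
  have hWpos : Module.finrank K (W ⊓ LinearMap.ker m : Submodule K M) ≠ 0 :=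
    fun h => hWm (Submodule.finrank_eq_zero.mp h)
  obtain ⟨g1, g2⟩ := aux_gotz L hcomm D hD hD0 (n + 1) (V ⊓ LinearMap.ker m) (W ⊓ LinearMap.ker m)
    (inf_le_left.trans hV) (inf_le_left.trans hW) (by
      rintro a ha x ⟨hx, hmx⟩
      refine ⟨hWV a ha x hx, ?_⟩
      change m (a x) = 0
      rw [hcomm m hm a ha, show m x = 0 from hmx, map_zero]) (by omega)
  have hlt : Module.finrank K (W ⊓ LinearMap.ker m : Submodule K M) ≠
      Module.finrank K (V ⊓ LinearMap.ker m : Submodule K M) := by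
    intro h
    obtain ⟨G, hG, hG0, hGp⟩ := g2 h hWm
    exact hG0 (hpW G hG.1 hGp)
  obtain ⟨g3, g4⟩ := aux_gotz L hcomm D hD hD0 n (V.map m) (W.map m)
    (by rintro _ ⟨x, hx, rfl⟩; exact hD n m hm x (hV hx))
    (by rintro _ ⟨x, hx, rfl⟩; exact hD (n + 1) m hm x (hW hx))
    (by rintro a ha _ ⟨x, hx, rfl⟩; exact ⟨a x, hWV a ha x hx, hcomm m hm a ha x⟩) (by omega)
  have hmW : W.map m = ⊥ := by
    by_contra hne
    obtain ⟨G, hG, hG0, hGp⟩ := g4 (by omega) hne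
    obtain ⟨x, hx, rfl⟩ := hG
    exact hG0 (hpV _ (hWV m hm x hx) hGp)
  have hmV : V.map m = ⊥ := by
    apply Submodule.finrank_eq_zero.mp
    have : Module.finrank K (W.map m) = 0 := by rw [hmW]; simp
    omega
  refine ⟨fun x hx => ?_, fun x hx => ?_⟩
  · have : m x ∈ W.map m := ⟨x, hx, rfl⟩
    rw [hmW] at this
    simpa using this
  · have : m x ∈ V.map m := ⟨x, hx, rfl⟩
    rw [hmV] at this
    simpa using this

end AbstractPart
section Concrete
variable {K : Type*} [Field K] {r : ℕ}

lemma aux_comp_mul (ℓ : MvPolynomial (Fin r) K) (hℓ : ℓ.IsHomogeneous 1) (n : ℕ)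
    (f : MvPolynomial (Fin r) K) :
    homogeneousComponent (n + 1) (ℓ * f) = ℓ * homogeneousComponent n f := by
  induction f using MvPolynomial.induction_on' with
  | monomial d c =>
    have h1 : (monomial d c : MvPolynomial (Fin r) K).IsHomogeneous d.degree :=
      isHomogeneous_monomial c rfl
    have h2 : (ℓ * monomial d c).IsHomogeneous (d.degree + 1) := by
      rw [add_comm]; exact hℓ.mul h1
    rw [homogeneousComponent_of_mem (m := n) h1, homogeneousComponent_of_mem (m := n + 1) h2]
    by_cases h : n = d.degree
    · simp [h]
    · simp [h]
  | add p q hp hq => rw [mul_add, map_add, map_add, hp, hq, mul_add]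

/-- The degree-`t` part of the inverse system. -/
noncomputable def invSys (J : Ideal (MvPolynomial (Fin r) K)) (t : ℕ) :
    Submodule K (Module.Dual K (MvPolynomial (Fin r) K)) :=
  Submodule.dualAnnihilator ((J.restrictScalars K).comap (homogeneousComponent t))

lemma mem_invSys (J : Ideal (MvPolynomial (Fin r) K)) (t : ℕ)
    (φ : Module.Dual K (MvPolynomial (Fin r) K)) :
    φ ∈ invSys J t ↔ ∀ f, homogeneousComponent t f ∈ J → φ f = 0 := by
  simp [invSys, Submodule.mem_dualAnnihilator]

noncomputable def piMap (J : Ideal (MvPolynomial (Fin r) K)) (t : ℕ) :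
    MvPolynomial (Fin r) K →ₗ[K]
      ((homogeneousSubmodule (Fin r) K t).map (Ideal.Quotient.mkₐ K J).toLinearMap) :=
  LinearMap.codRestrict _ ((Ideal.Quotient.mkₐ K J).toLinearMap ∘ₗ homogeneousComponent t)
    (fun f => ⟨_, homogeneousComponent_mem t f, rfl⟩)

lemma invSys_eq (J : Ideal (MvPolynomial (Fin r) K)) (t : ℕ) :
    invSys J t = LinearMap.range (piMap J t).dualMap := by
  rw [LinearMap.range_dualMap_eq_dualAnnihilator_ker, invSys]
  congr 1
  ext f
  rw [LinearMap.mem_ker, ← Subtype.coe_inj]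
  change _ ↔ Ideal.Quotient.mk J (homogeneousComponent t f) = 0
  rw [Ideal.Quotient.eq_zero_iff_mem]
  rfl

lemma piMap_surj (J : Ideal (MvPolynomial (Fin r) K)) (t : ℕ) :
    Function.Surjective (piMap J t) := by
  rintro ⟨_, f, hf, rfl⟩
  refine ⟨f, Subtype.ext ?_⟩
  change (Ideal.Quotient.mkₐ K J) (homogeneousComponent t f) = _
  rw [homogeneousComponent_eq_self hf]
  rfl

lemma finrank_invSys (J : Ideal (MvPolynomial (Fin r) K)) (t : ℕ) :
    Module.finrank K (invSys J t) = hilb J t := by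
  rw [invSys_eq, LinearMap.finrank_range_of_inj
    (LinearMap.dualMap_injective_of_surjective (piMap_surj J t)), Subspace.dual_finrank_eq, hilb]

/-- contraction action on functionals -/
noncomputable def actMap : MvPolynomial (Fin r) K →ₗ[K]
    Module.End K (Module.Dual K (MvPolynomial (Fin r) K)) :=
  Module.Dual.transpose ∘ₗ LinearMap.mul K (MvPolynomial (Fin r) K)

lemma actMap_apply (f g : MvPolynomial (Fin r) K) (φ : Module.Dual K (MvPolynomial (Fin r) K)) :
    actMap f φ g = φ (f * g) := rfl

lemma invSys_act (J : Ideal (MvPolynomial (Fin r) K)) (t : ℕ) (ℓ : MvPolynomial (Fin r) K)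
    (hℓ : ℓ.IsHomogeneous 1) (φ) (hφ : φ ∈ invSys J (t + 1)) : actMap ℓ φ ∈ invSys J t := by
  rw [mem_invSys] at hφ ⊢
  intro f hf
  rw [actMap_apply]
  apply hφ
  rw [aux_comp_mul ℓ hℓ]
  exact J.mul_mem_left _ hf

lemma invSys_mono {I J : Ideal (MvPolynomial (Fin r) K)} (h : I ≤ J) (t : ℕ) :
    invSys J t ≤ invSys I t := by
  intro φ hφ
  rw [mem_invSys] at hφ ⊢
  exact fun f hf => hφ f (h hf)

lemma invSys_ext (t : ℕ) (φ) (hφ : φ ∈ invSys (⊥ : Ideal (MvPolynomial (Fin r) K)) t)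
    (h : ∀ d : Fin r →₀ ℕ, d.degree = t → φ (monomial d 1) = 0) : φ = 0 := by
  rw [mem_invSys] at hφ
  ext d
  simp only [LinearMap.comp_apply, LinearMap.zero_apply]
  by_cases hd : d.degree = t
  · exact h d hd
  · apply hφ
    change homogeneousComponent t (monomial d (1 : K)) ∈ _
    rw [homogeneousComponent_of_mem (n := d.degree) (isHomogeneous_monomial 1 rfl),
      if_neg (Ne.symm hd)]
    exact Ideal.zero_mem _

lemma exists_single_add (d : Fin r →₀ ℕ) (t : ℕ) (hd : d.degree = t + 1) :
    ∃ i e, d = Finsupp.single i 1 + e ∧ e.degree = t := by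
  have : d ≠ 0 := by rintro rfl; simp at hd
  obtain ⟨i, hi⟩ := Finsupp.ne_iff.mp this
  have hle : Finsupp.single i 1 ≤ d := by
    rw [Finsupp.single_le_iff]
    exact Nat.one_le_iff_ne_zero.mpr hi
  refine ⟨i, d - Finsupp.single i 1, (add_tsub_cancel_of_le hle).symm, ?_⟩
  have h2 := congrArg Finsupp.degree (add_tsub_cancel_of_le hle)
  rw [map_add, Finsupp.degree_single] at h2
  omega

lemma invSys_nondeg (t : ℕ) (φ) (hφ : φ ∈ invSys (⊥ : Ideal (MvPolynomial (Fin r) K)) (t + 1))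
    (h : ∀ i, actMap (X i) φ = 0) : φ = 0 := by
  apply invSys_ext _ _ hφ
  intro d hd
  obtain ⟨i, e, rfl, he⟩ := exists_single_add d t hd
  have := LinearMap.congr_fun (h i) (monomial e 1)
  rw [actMap_apply, X, monomial_mul, one_mul] at this
  exact this

lemma pure_eval (t : ℕ) (v : Fin r → K) (ℓ : MvPolynomial (Fin r) K) (hℓ : ℓ.IsHomogeneous 1) :
    ∀ (φ : Module.Dual K (MvPolynomial (Fin r) K)),
    (∀ i, actMap (X i) φ = v i • actMap ℓ φ) → ∀ d : Fin r →₀ ℕ, d.degree = t →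
      φ (monomial d 1) = eval v (monomial d 1) * φ (ℓ ^ t) := by
  induction t with
  | zero =>
    intro φ _ d hd
    have : d = 0 := (Finsupp.degree_eq_zero_iff d).mp hd
    subst this
    simp
  | succ t ih =>
    intro φ h d hd
    obtain ⟨i, e, rfl, he⟩ := exists_single_add d t hd
    have hs : (monomial (Finsupp.single i 1 + e) 1 : MvPolynomial (Fin r) K)
        = X i * monomial e 1 := by rw [X, monomial_mul, one_mul]
    rw [hs]
    have h1 := LinearMap.congr_fun (h i) (monomial e 1)
    rw [actMap_apply] at h1
    rw [h1, LinearMap.smul_apply, ih (actMap ℓ φ) ?_ e he, actMap_apply, (eval v).map_mul, eval_X,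
      smul_eq_mul, pow_succ', mul_assoc]
    intro j
    refine LinearMap.ext fun g => ?_
    have := LinearMap.congr_fun (h j) (ℓ * g)
    simp only [actMap_apply, LinearMap.smul_apply] at this ⊢
    rw [← this]
    congr 1
    ring

lemma pure_eval' (t : ℕ) (v : Fin r → K) (ℓ : MvPolynomial (Fin r) K) (hℓ : ℓ.IsHomogeneous 1)
    (φ : Module.Dual K (MvPolynomial (Fin r) K))
    (h : ∀ i, actMap (X i) φ = v i • actMap ℓ φ) (f : MvPolynomial (Fin r) K)
    (hf : f.IsHomogeneous t) : φ f = eval v f * φ (ℓ ^ t) := by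
  conv_lhs => rw [f.as_sum]
  conv_rhs => rw [f.as_sum]
  rw [map_sum, map_sum, Finset.sum_mul]
  apply Finset.sum_congr rfl
  intro d hd
  have hdeg : d.degree = t := by
    have := hf (mem_support_iff.mp hd)
    rwa [Finsupp.degree_eq_weight_one]
  have hm : (monomial d (coeff d f) : MvPolynomial (Fin r) K) = coeff d f • monomial d 1 := by
    rw [smul_monomial, smul_eq_mul, mul_one]
  rw [hm, map_smul, pure_eval t v ℓ hℓ φ h d hdeg, smul_eval, smul_eq_mul, mul_assoc]

lemma pure_zero (J : Ideal (MvPolynomial (Fin r) K))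
    (hJhom : ∀ f ∈ J, ∀ t : ℕ, homogeneousComponent t f ∈ J) (n s : ℕ) (hn : 0 < n)
    (hbpf : ∀ v : Fin r → K, v ≠ 0 → ∃ f ∈ J, f.IsHomogeneous n ∧ eval v f ≠ 0)
    (v : Fin r → K) (ℓ : MvPolynomial (Fin r) K) (hℓ : ℓ.IsHomogeneous 1)
    (φ) (hφ : φ ∈ invSys J (n + s))
    (h : ∀ i, actMap (X i) φ = v i • actMap ℓ φ) : φ = 0 := by
  by_cases hv : v = 0
  · subst hv
    obtain ⟨n, rfl⟩ : ∃ m, n = m + 1 := ⟨n - 1, by omega⟩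
    apply invSys_nondeg (n + s)
    · rw [show n + s + 1 = n + 1 + s by ring]
      exact invSys_mono bot_le _ hφ
    · intro i
      rw [h i]; simp
  · obtain ⟨f, hfJ, hf, hfv⟩ := hbpf v hv
    obtain ⟨i, hi⟩ := Function.ne_iff.mp hv
    have h1 : (f * X i ^ s).IsHomogeneous (n + s) := by
      have := hf.mul ((isHomogeneous_X K i).pow s)
      rwa [one_mul] at this
    have h2 := pure_eval' (n + s) v ℓ hℓ φ h _ h1
    have h3 : φ (f * X i ^ s) = 0 :=
      (mem_invSys _ _ _).mp hφ _ (hJhom _ (J.mul_mem_right _ hfJ) _)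
    have h4 : φ (ℓ ^ (n + s)) = 0 := by
      rw [h3] at h2
      have := h2.symm
      rw [map_mul, map_pow, eval_X] at this
      exact (mul_eq_zero.mp this).resolve_left (mul_ne_zero hfv (pow_ne_zero _ hi))
    apply invSys_ext (n + s) _ (invSys_mono bot_le _ hφ)
    intro d hd
    rw [pure_eval _ v ℓ hℓ φ h d hd, h4, mul_zero]

lemma exists_sep (N : Submodule K (MvPolynomial (Fin r) K)) (g) (hg : g ∉ N) :
    ∃ φ : Module.Dual K (MvPolynomial (Fin r) K), φ g ≠ 0 ∧ ∀ f ∈ N, φ f = 0 := by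
  obtain ⟨φ, h1, h2⟩ := Submodule.exists_dual_map_eq_bot_of_notMem hg inferInstance
  refine ⟨φ, h1, fun f hf => ?_⟩
  have : φ f ∈ N.map φ := ⟨f, hf, rfl⟩
  rw [h2] at this
  simpa using this

lemma mem_of_invSys (J : Ideal (MvPolynomial (Fin r) K)) (t : ℕ) (g : MvPolynomial (Fin r) K)
    (hg : g.IsHomogeneous t) (h : ∀ φ ∈ invSys J t, φ g = 0) : g ∈ J := by
  by_contra hgJ
  obtain ⟨φ, h1, h2⟩ := exists_sep ((J.restrictScalars K).comap (homogeneousComponent t)) g (by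
    simpa [homogeneousComponent_eq_self hg] using hgJ)
  exact h1 (h φ ((mem_invSys _ _ _).mpr fun f hf => h2 f hf))

end Concrete

/-- **Proposition (multiplication by linear forms is surjective or zero).**
Let `K` be algebraically closed, `S = K[x_1,…,x_r]`, and `J ⊆ S` a homogeneous artinian ideal
with `dim [S/J]_n = k`, `dim [S/J]_{n+1} = k-1` (`2 ≤ k ≤ n`), `[S/J]_t = 0` for `t ≥ n+2`,
no minimal generator of `J` in degree `n+1`, and such that the forms in `[J]_n` have no common
zero in `ℙ^{r-1}`.  Then for every linear form `ℓ`, the multiplication map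
`×ℓ : [S/J]_n → [S/J]_{n+1}` is either surjective or the zero map; and whenever it is the zero
map, `×ℓ : [S/J]_{n-1} → [S/J]_n` is also zero, i.e. `ℓ·[S]_{n-1} ⊆ J` and `ℓ·[S]_n ⊆ J`. -/
theorem artinian_multiplication_surjective_or_zero
    {K : Type*} [Field K] [IsAlgClosed K] {r n k : ℕ}
    (J : Ideal (MvPolynomial (Fin r) K))
    (hJhom : ∀ f ∈ J, ∀ t : ℕ, homogeneousComponent t f ∈ J)
    (hk : 2 ≤ k) (hkn : k ≤ n)
    (hn : hilb J n = k) (hn1 : hilb J (n + 1) + 1 = k)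
    (htail : ∀ t, n + 2 ≤ t → hilb J t = 0)
    (hnomingen : ∀ f ∈ J, f.IsHomogeneous (n + 1) → f ∈ compIdeal J n)
    (hbpf : ∀ v : Fin r → K, v ≠ 0 → ∃ f ∈ J, f.IsHomogeneous n ∧ eval v f ≠ 0) :
    ∀ ℓ : MvPolynomial (Fin r) K, ℓ.IsHomogeneous 1 →
      (∀ g : MvPolynomial (Fin r) K, g.IsHomogeneous (n + 1) →
        ∃ h : MvPolynomial (Fin r) K, h.IsHomogeneous n ∧ g - ℓ * h ∈ J) ∨
      ((∀ h : MvPolynomial (Fin r) K, h.IsHomogeneous n → ℓ * h ∈ J) ∧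
        (∀ h : MvPolynomial (Fin r) K, h.IsHomogeneous (n - 1) → ℓ * h ∈ J)) := by

  intro ℓ hℓ
  obtain ⟨n, rfl⟩ : ∃ m, n = m + 1 := ⟨n - 1, by omega⟩
  let L := (homogeneousSubmodule (Fin r) K 1).map (actMap (K := K) (r := r))
  let D : ℕ → Submodule K (Module.Dual K (MvPolynomial (Fin r) K)) := fun t => invSys ⊥ t
  have hcomm : ∀ a ∈ L, ∀ b ∈ L, ∀ x, a (b x) = b (a x) := by
    rintro _ ⟨a, ha, rfl⟩ _ ⟨b, hb, rfl⟩ x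
    refine LinearMap.ext fun g => ?_
    simp only [actMap_apply]
    congr 1
    ring
  have hD : ∀ n, ∀ a ∈ L, ∀ x ∈ D (n + 1), a x ∈ D n := by
    rintro n _ ⟨a, ha, rfl⟩ x hx
    exact invSys_act _ _ a ha x hx
  have hXL : ∀ i, actMap (X i) ∈ L := fun i => ⟨X i, isHomogeneous_X K i, rfl⟩
  have hD0 : ∀ n, ∀ x ∈ D (n + 1), (∀ a ∈ L, a x = 0) → x = 0 := by
    intro n x hx h
    exact invSys_nondeg n x hx fun i => h _ (hXL i)
  have fV : Module.finrank K (invSys J (n + 1)) = k := by rw [finrank_invSys, hn]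
  have fW : Module.finrank K (invSys J (n + 2)) + 1 = k := by rw [finrank_invSys, hn1]
  have i1 : FiniteDimensional K (invSys J (n + 1)) := FiniteDimensional.of_finrank_pos (by omega)
  have i2 : FiniteDimensional K (invSys J (n + 2)) := FiniteDimensional.of_finrank_pos (by omega)
  have hp : ∀ s, ∀ F ∈ invSys J (n + 1 + s),
      (∃ a ∈ L, ∀ m ∈ L, ∃ c : K, m F = c • a F) → F = 0 := by
    rintro s F hF ⟨_, ⟨a, ha, rfl⟩, h⟩
    choose v hv using fun i => h _ (hXL i)
    exact pure_zero J hJhom (n + 1) s (by omega) hbpf v a ha F hF hv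
  by_cases hker : ∃ F ∈ invSys J (n + 2), F ≠ 0 ∧ actMap ℓ F = 0
  · right
    obtain ⟨c1, c2⟩ := aux_core L hcomm D hD hD0 n (invSys J (n + 1)) (invSys J (n + 2))
      (invSys_mono bot_le _) (invSys_mono bot_le _)
      (by rintro _ ⟨a, ha, rfl⟩ x hx; exact invSys_act _ _ a ha x hx) (by omega) (by omega)
      (hp 0) (hp 1) (actMap ℓ) ⟨ℓ, hℓ, rfl⟩ hker
    constructor
    · intro h hh
      apply mem_of_invSys J (n + 2)
      · have := hℓ.mul hh
        rwa [add_comm] at this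
      · intro φ hφ
        exact LinearMap.congr_fun (c1 φ hφ) h
    · intro h hh
      apply mem_of_invSys J (n + 1)
      · have := hℓ.mul hh
        rwa [add_comm] at this
      · intro φ hφ
        exact LinearMap.congr_fun (c2 φ hφ) h
  · left
    push Not at hker
    intro g hg
    by_contra hcon
    let N : Submodule K (MvPolynomial (Fin r) K) :=
      ((homogeneousSubmodule (Fin r) K (n + 1)).map (LinearMap.mulLeft K ℓ) ⊔
        J.restrictScalars K).comap (homogeneousComponent (n + 2))
    have hgN : g ∉ N := by
      intro h
      have h' : homogeneousComponent (n + 2) g ∈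
        (homogeneousSubmodule (Fin r) K (n + 1)).map (LinearMap.mulLeft K ℓ) ⊔
        J.restrictScalars K := h
      rw [homogeneousComponent_eq_self hg, Submodule.mem_sup] at h'
      obtain ⟨_, ⟨h, hh, rfl⟩, z, hz, hsum⟩ := h'
      refine hcon ⟨h, hh, ?_⟩
      rw [← hsum]
      simpa using hz
    obtain ⟨φ, h1, h2⟩ := exists_sep N g hgN
    have hφ : φ ∈ invSys J (n + 2) := by
      rw [mem_invSys]
      intro f hf
      exact h2 f (Submodule.mem_sup_right (show _ ∈ J.restrictScalars K from hf))
    refine hker φ hφ (fun h => h1 (by rw [h]; rfl)) ?_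
    refine LinearMap.ext fun f => ?_
    rw [actMap_apply]
    apply h2
    refine Submodule.mem_sup_left ⟨homogeneousComponent (n + 1) f, homogeneousComponent_mem _ _, ?_⟩
    rw [aux_comp_mul ℓ hℓ]
    rfl
end
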